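/- Let p, q ≥ 2 be integers with 4 ≤ p + q ≤ 7, and λ_s = √((q−1)/(p−1)). There exist an integer K and a strictly decreasing sequence (a_k)_{k ≥ K} of positive reals with a_k → 0 as k → ∞, such that for each k ≥ K there is a function u_k : [0, ∞) → (0, ∞), continuous on [0, ∞) and C² on (0, ∞), with u_k(0) = a_k, u_k′ extending continuously to 0 with u_k′(0) = 0, solving the self-shrinker ODE u″/(1+u′²) + ((p−1)/r − r/2)·u′ + u/2 − (q−1)/u = 0 on (0, ∞), such that u_k(r)/r converges to some limit tan(α_k) with α_k ∈ (0, π/2) as r → ∞, and the set {r > 0 : u_k(r) = λ_s·r} has exactly k elements. -/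

import Mathlib

open Real Filter

/-!
Write `P = p - 1`, `Q = q - 1`, and let `u` be the profile with `u 0 = a`. The rescaled profile
`ρ ↦ u (a * ρ) / a` solves an equation that is regular in `a` down to `a = 0`, where it becomes the
minimal surface equation; a contraction argument for its singular Volterra form gives solutions
depending continuously on `a`.

In the variables `r = a * exp τ`, `φ = u / r`, `v = u'` the cone is the rest point
`φ = v = lam`. At `a = 0` it is a global attractor by a Lyapunov function and, because
`2 ≤ P + Q ≤ 5`, a focus. Hence for small `a` the vector `(φ - lam, v - φ)` turns clockwise many
times before `u` reaches a fixed large radius `R`, and the angle at that moment tends to `-∞` as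
`a → 0`. Crossings of the cone are crossings of the vertical axis, where the vector always turns
clockwise, so the angle at `R` determines the number of crossings inside `R`.

Beyond `R` the weighted velocity `r u' - u` leaves `[-1, 1]` upward, or leaves it downward, or stays
inside. Both exits are open conditions on `a`, and a profile meeting the cone at `R` exits in the
direction in which it crosses. That direction alternates between consecutive half turns of the
angle at `R`, so by connectedness some profile in between never exits; it is global, asymptotic to
a cone, and has no crossing beyond `R`.
-/

/-! ### The singular Volterra equation -/

section Volterra

variable {X E : Type*}

/-- The exponent `K (|ρ| + ρ² / 2)` of the exponential weight in which the Volterra operator is a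
contraction. Its growth rate `K (1 + |ρ|)` is twice the Lipschitz constant of the field when
`K = 2 L`. -/
noncomputable def volterraWeight (K ρ : ℝ) : ℝ := K * (|ρ| + ρ ^ 2 / 2)

@[fun_prop]
theorem continuous_volterraWeight (K : ℝ) : Continuous (volterraWeight K) := by
  unfold volterraWeight
  fun_prop

theorem volterraWeight_nonneg {K : ℝ} (hK : 0 ≤ K) (ρ : ℝ) : 0 ≤ volterraWeight K ρ := by
  unfold volterraWeight
  positivity

theorem exp_neg_volterraWeight_mul_le {K : ℝ} (hK : 0 < K) (ρ : ℝ) :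
    exp (-volterraWeight K ρ) * (|ρ| * (1 + |ρ|)) ≤ 2 / K := by
  have hexp : volterraWeight K ρ ≤ exp (volterraWeight K ρ) := by
    linarith [add_one_le_exp (volterraWeight K ρ)]
  rw [exp_neg, inv_mul_le_iff₀ (exp_pos _)]
  calc |ρ| * (1 + |ρ|) ≤ 2 / K * volterraWeight K ρ := by
        rw [volterraWeight, ← mul_assoc, div_mul_cancel₀ _ hK.ne', ← sq_abs]
        linarith [abs_nonneg ρ]
    _ ≤ 2 / K * exp (volterraWeight K ρ) := by gcongr
    _ = _ := mul_comm _ _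

theorem integral_exp_volterraWeight (K ρ : ℝ) :
    ∫ x in (0 : ℝ)..1, K * (|ρ| + ρ ^ 2 * x) * exp (volterraWeight K (ρ * x)) =
      exp (volterraWeight K ρ) - 1 := by
  have hderiv (x : ℝ) : HasDerivAt (fun x ↦ exp (K * (|ρ| * x + ρ ^ 2 * x ^ 2 / 2)))
      (K * (|ρ| + ρ ^ 2 * x) * exp (K * (|ρ| * x + ρ ^ 2 * x ^ 2 / 2))) x := by
    have h := ((((hasDerivAt_id x).const_mul |ρ|).add
      ((((hasDerivAt_id x).pow 2).const_mul (ρ ^ 2)).div_const 2)).const_mul K).exp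
    exact h.congr_deriv (by simp; ring)
  have hweight : Set.EqOn (fun x ↦ K * (|ρ| + ρ ^ 2 * x) * exp (volterraWeight K (ρ * x)))
      (fun x ↦ K * (|ρ| + ρ ^ 2 * x) * exp (K * (|ρ| * x + ρ ^ 2 * x ^ 2 / 2)))
      (Set.uIcc 0 1) := by
    intro x hx
    rw [Set.uIcc_of_le zero_le_one] at hx
    simp only [volterraWeight, abs_mul, abs_of_nonneg hx.1, mul_pow]
  rw [intervalIntegral.integral_congr hweight,
    intervalIntegral.integral_eq_sub_of_hasDerivAt (fun x _ ↦ hderiv x)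
      (Continuous.intervalIntegrable (by fun_prop) _ _)]
  simp [volterraWeight]

theorem norm_integral_le_mul_one_add_abs [NormedAddCommGroup E] [NormedSpace ℝ E] {φ : ℝ → E}
    {C ρ : ℝ} (hC : 0 ≤ C)
    (hφ : ∀ x ∈ Set.Icc (0 : ℝ) 1, ‖φ x‖ ≤ C * (1 + |ρ * x|)) :
    ‖∫ x in (0 : ℝ)..1, φ x‖ ≤ C * (1 + |ρ|) := by
  have hbound : ∀ x ∈ Set.uIoc (0 : ℝ) 1, ‖φ x‖ ≤ C * (1 + |ρ|) := by
    intro x hx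
    rw [Set.uIoc_of_le zero_le_one] at hx
    refine (hφ x ⟨hx.1.le, hx.2⟩).trans ?_
    rw [abs_mul, abs_of_pos hx.1]
    gcongr
    exact mul_le_of_le_one_right (abs_nonneg ρ) hx.2
  simpa using intervalIntegral.norm_integral_le_of_norm_le_const hbound

variable [PseudoMetricSpace X] [NormedAddCommGroup E]

/-- A field `F a x t v`, with parameter `a`, for which the singular Volterra equation
`f a ρ = f₀ + ρ ∫₀¹ F a x (ρ x) (f a (ρ x)) dx` is well posed on the whole line. The variable
`x = t / ρ` carries the singular factor of the differential equation; all constants may grow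
linearly in the time `t`. -/
structure IsVolterraField (F : X → ℝ → ℝ → E → E) (L M : ℝ) : Prop where
  continuous : Continuous fun p : X × ℝ × ℝ × E ↦ F p.1 p.2.1 p.2.2.1 p.2.2.2
  lipschitz_pos : 0 < L
  norm_sub_le : ∀ a t v w, ∀ x ∈ Set.Icc (0 : ℝ) 1,
    ‖F a x t v - F a x t w‖ ≤ L * (1 + |t|) * ‖v - w‖
  norm_le : ∀ a t v, ∀ x ∈ Set.Icc (0 : ℝ) 1, ‖F a x t v‖ ≤ M * (1 + |t|)
  norm_sub_le_dist : ∀ a b t v, ∀ x ∈ Set.Icc (0 : ℝ) 1,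
    ‖F a x t v - F b x t v‖ ≤ dist a b * (M * (1 + |t|))

namespace IsVolterraField

variable {F : X → ℝ → ℝ → E → E} {L M : ℝ}

theorem bound_nonneg [Nonempty X] (h : IsVolterraField F L M) : 0 ≤ M := by
  obtain ⟨a⟩ := ‹Nonempty X›
  simpa using (norm_nonneg _).trans (h.norm_le a 0 0 0 (by simp))

theorem continuous_comp (h : IsVolterraField F L M) (a : X) {g : ℝ → E} (hg : Continuous g) :
    Continuous fun p : ℝ × ℝ ↦ F a p.2 (p.1 * p.2) (g (p.1 * p.2)) :=
  h.continuous.comp (f := fun p : ℝ × ℝ ↦ (a, p.2, p.1 * p.2, g (p.1 * p.2))) (by fun_prop)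

theorem intervalIntegrable (h : IsVolterraField F L M) (a : X) {g : ℝ → E} (hg : Continuous g)
    (ρ : ℝ) :
    IntervalIntegrable (fun x ↦ F a x (ρ * x) (g (ρ * x))) MeasureTheory.volume 0 1 :=
  ((h.continuous_comp a hg).comp (Continuous.prodMk_right ρ)).intervalIntegrable _ _

end IsVolterraField

variable [NormedSpace ℝ E]

/-- The average `∫₀¹ F a x (ρ x) (g (ρ x)) dx` on the right-hand side of the singular Volterra
equation. -/
noncomputable def volterraIntegral (F : X → ℝ → ℝ → E → E) (a : X) (g : ℝ → E) (ρ : ℝ) : E :=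
  ∫ x in (0 : ℝ)..1, F a x (ρ * x) (g (ρ * x))

namespace IsVolterraField

variable {F : X → ℝ → ℝ → E → E} {L M : ℝ}

theorem continuous_volterraIntegral (h : IsVolterraField F L M) (a : X) {g : ℝ → E}
    (hg : Continuous g) : Continuous (volterraIntegral F a g) :=
  intervalIntegral.continuous_parametric_intervalIntegral_of_continuous'
    (h.continuous_comp a hg) _ _

theorem norm_volterraIntegral_le (h : IsVolterraField F L M) (a : X) (g : ℝ → E) (ρ : ℝ) :
    ‖volterraIntegral F a g ρ‖ ≤ M * (1 + |ρ|) :=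
  have : Nonempty X := ⟨a⟩
  norm_integral_le_mul_one_add_abs h.bound_nonneg fun x hx ↦ h.norm_le _ _ _ x hx

theorem norm_volterraIntegral_sub_le_dist (h : IsVolterraField F L M) (a b : X) {g : ℝ → E}
    (hg : Continuous g) (ρ : ℝ) :
    ‖volterraIntegral F a g ρ - volterraIntegral F b g ρ‖ ≤ dist a b * M * (1 + |ρ|) := by
  have : Nonempty X := ⟨a⟩
  rw [volterraIntegral, volterraIntegral, ← intervalIntegral.integral_sub
    (h.intervalIntegrable a hg ρ) (h.intervalIntegrable b hg ρ)]
  refine norm_integral_le_mul_one_add_abs (mul_nonneg dist_nonneg h.bound_nonneg) fun x hx ↦ ?_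
  rw [mul_assoc]
  exact h.norm_sub_le_dist _ _ _ _ x hx

theorem abs_mul_norm_volterraIntegral_sub_le (h : IsVolterraField F L M) (a : X)
    {g₁ g₂ : ℝ → E} (hg₁ : Continuous g₁) (hg₂ : Continuous g₂) {D : ℝ} (hD : 0 ≤ D)
    (hg : ∀ t, ‖g₁ t - g₂ t‖ ≤ exp (volterraWeight (2 * L) t) * D) (ρ : ℝ) :
    |ρ| * ‖volterraIntegral F a g₁ ρ - volterraIntegral F a g₂ ρ‖ ≤
      exp (volterraWeight (2 * L) ρ) * (D / 2) := by
  have hL := h.lipschitz_pos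
  rw [volterraIntegral, volterraIntegral, ← intervalIntegral.integral_sub
    (h.intervalIntegrable a hg₁ ρ) (h.intervalIntegrable a hg₂ ρ)]
  have hpointwise : ∀ x ∈ Set.Ioc (0 : ℝ) 1,
      ‖F a x (ρ * x) (g₁ (ρ * x)) - F a x (ρ * x) (g₂ (ρ * x))‖ ≤
        L * (1 + |ρ| * x) * (exp (volterraWeight (2 * L) (ρ * x)) * D) := by
    intro x hx
    refine (h.norm_sub_le _ _ _ _ x ⟨hx.1.le, hx.2⟩).trans ?_
    rw [abs_mul, abs_of_pos hx.1]
    have := hx.1.le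
    gcongr
    exact hg _
  calc |ρ| * _ ≤ |ρ| * ∫ x in (0 : ℝ)..1,
          L * (1 + |ρ| * x) * (exp (volterraWeight (2 * L) (ρ * x)) * D) := by
        gcongr
        exact intervalIntegral.norm_integral_le_of_norm_le zero_le_one
          (.of_forall hpointwise) (Continuous.intervalIntegrable (by fun_prop) _ _)
    _ = D / 2 * ∫ x in (0 : ℝ)..1,
          2 * L * (|ρ| + ρ ^ 2 * x) * exp (volterraWeight (2 * L) (ρ * x)) := by
        rw [← intervalIntegral.integral_const_mul, ← intervalIntegral.integral_const_mul]
        congr 1 with x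
        rw [← sq_abs ρ]
        ring
    _ = D / 2 * (exp (volterraWeight (2 * L) ρ) - 1) := by rw [integral_exp_volterraWeight]
    _ ≤ _ := by linarith

/-- The Volterra operator conjugated by the exponential weight: its fixed points, multiplied by the
weight, are the solutions of the singular Volterra equation. -/
noncomputable def operator (h : IsVolterraField F L M) (f₀ : E) (a : X)
    (g : BoundedContinuousFunction ℝ E) : BoundedContinuousFunction ℝ E :=
  BoundedContinuousFunction.ofNormedAddCommGroup
    (fun ρ ↦ exp (-volterraWeight (2 * L) ρ) •
      (f₀ + ρ • volterraIntegral F a (fun t ↦ exp (volterraWeight (2 * L) t) • g t) ρ))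
    (by
      have := h.continuous_volterraIntegral a
        (g := fun t ↦ exp (volterraWeight (2 * L) t) • g t) (by fun_prop)
      fun_prop)
    (‖f₀‖ + M * (2 / (2 * L)))
    (by
      have : Nonempty X := ⟨a⟩
      have hM := h.bound_nonneg
      have hL := h.lipschitz_pos
      intro ρ
      have hexp : exp (-volterraWeight (2 * L) ρ) ≤ 1 :=
        exp_le_one_iff.2 (neg_nonpos.2 (volterraWeight_nonneg (by positivity) ρ))
      rw [norm_smul, norm_of_nonneg (exp_pos _).le]
      calc _ ≤ exp (-volterraWeight (2 * L) ρ) * (‖f₀‖ + |ρ| * (M * (1 + |ρ|))) := by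
            gcongr
            refine (norm_add_le _ _).trans ?_
            rw [norm_smul, norm_eq_abs]
            gcongr
            exact h.norm_volterraIntegral_le _ _ ρ
        _ = exp (-volterraWeight (2 * L) ρ) * ‖f₀‖ +
              M * (exp (-volterraWeight (2 * L) ρ) * (|ρ| * (1 + |ρ|))) := by ring
        _ ≤ 1 * ‖f₀‖ + M * (2 / (2 * L)) := by
            gcongr
            exact exp_neg_volterraWeight_mul_le (by positivity) ρ
        _ = _ := by rw [one_mul])

theorem operator_apply (h : IsVolterraField F L M) (f₀ : E) (a : X)
    (g : BoundedContinuousFunction ℝ E) (ρ : ℝ) :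
    h.operator f₀ a g ρ = exp (-volterraWeight (2 * L) ρ) •
      (f₀ + ρ • volterraIntegral F a (fun t ↦ exp (volterraWeight (2 * L) t) • g t) ρ) :=
  rfl

theorem dist_operator_apply (h : IsVolterraField F L M) (f₀ : E) (a b : X)
    (g₁ g₂ : BoundedContinuousFunction ℝ E) (ρ : ℝ) :
    dist (h.operator f₀ a g₁ ρ) (h.operator f₀ b g₂ ρ) =
      exp (-volterraWeight (2 * L) ρ) * (|ρ| *
        ‖volterraIntegral F a (fun t ↦ exp (volterraWeight (2 * L) t) • g₁ t) ρ -
          volterraIntegral F b (fun t ↦ exp (volterraWeight (2 * L) t) • g₂ t) ρ‖) := by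
  rw [dist_eq_norm, operator_apply, operator_apply, ← smul_sub, add_sub_add_left_eq_sub,
    ← smul_sub, norm_smul, norm_smul, norm_of_nonneg (exp_pos _).le, norm_eq_abs]

theorem contractingWith_operator (h : IsVolterraField F L M) (f₀ : E) (a : X) :
    ContractingWith (1 / 2) (h.operator f₀ a) := by
  refine ⟨by norm_num, LipschitzWith.of_dist_le_mul fun g₁ g₂ ↦ ?_⟩
  rw [BoundedContinuousFunction.dist_le (by positivity)]
  intro ρ
  rw [dist_operator_apply, exp_neg, inv_mul_le_iff₀ (exp_pos _)]
  have hweight (t : ℝ) : ‖exp (volterraWeight (2 * L) t) • g₁ t -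
      exp (volterraWeight (2 * L) t) • g₂ t‖ ≤ exp (volterraWeight (2 * L) t) * dist g₁ g₂ := by
    rw [← smul_sub, norm_smul, norm_of_nonneg (exp_pos _).le, ← dist_eq_norm]
    gcongr
    exact BoundedContinuousFunction.dist_coe_le_dist t
  refine (h.abs_mul_norm_volterraIntegral_sub_le a (by fun_prop) (by fun_prop) dist_nonneg
    hweight ρ).trans_eq ?_
  push_cast
  ring

theorem dist_operator_le (h : IsVolterraField F L M) (f₀ : E) (a b : X)
    (g : BoundedContinuousFunction ℝ E) :
    dist (h.operator f₀ a g) (h.operator f₀ b g) ≤ dist a b * M * (2 / (2 * L)) := by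
  have : Nonempty X := ⟨a⟩
  have hM := h.bound_nonneg
  have hL := h.lipschitz_pos
  rw [BoundedContinuousFunction.dist_le (by positivity)]
  intro ρ
  rw [dist_operator_apply]
  calc _ ≤ exp (-volterraWeight (2 * L) ρ) * (|ρ| * (dist a b * M * (1 + |ρ|))) := by
        gcongr
        exact h.norm_volterraIntegral_sub_le_dist a b (by fun_prop) ρ
    _ = dist a b * M * (exp (-volterraWeight (2 * L) ρ) * (|ρ| * (1 + |ρ|))) := by ring
    _ ≤ _ := by
        gcongr
        exact exp_neg_volterraWeight_mul_le (by positivity) ρ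

theorem exists_solution [CompleteSpace E] (h : IsVolterraField F L M) (f₀ : E) :
    ∃ f : X → ℝ → E, Continuous (Function.uncurry f) ∧
      ∀ a ρ, f a ρ = f₀ + ρ • volterraIntegral F a (f a) ρ := by
  have hcontr := h.contractingWith_operator f₀
  let G (a : X) : BoundedContinuousFunction ℝ E := (hcontr a).fixedPoint (h.operator f₀ a)
  have hfix (a : X) : h.operator f₀ a (G a) = G a := (hcontr a).fixedPoint_isFixedPt
  have hG : Continuous G := by
    rw [continuous_iff_continuousAt]
    intro b
    rw [ContinuousAt, tendsto_iff_dist_tendsto_zero]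
    have hdist (a : X) : dist (G a) (G b) ≤ _ := (hcontr a).fixedPoint_lipschitz_in_map
      (hcontr b) (C := dist a b * M * (2 / (2 * L))) (h.dist_operator_le f₀ a b)
    refine squeeze_zero (fun _ ↦ dist_nonneg) hdist ?_
    have hcont : Continuous fun a ↦ dist a b * M * (2 / (2 * L)) / (1 - (1 / 2 : NNReal)) := by
      fun_prop
    simpa using hcont.tendsto b
  refine ⟨fun a ρ ↦ exp (volterraWeight (2 * L) ρ) • G a ρ, ?_, fun a ρ ↦ ?_⟩
  · have : Continuous fun q : X × ℝ ↦ G q.1 q.2 := by fun_prop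
    simp only [Function.uncurry_def]
    fun_prop
  · have hρ := DFunLike.congr_fun (hfix a) ρ
    rw [operator_apply] at hρ
    simp only [← hρ, smul_smul, ← exp_add]
    simp

end IsVolterraField

end Volterra

/-! ### Truncation -/

section BoundedLipschitz

variable {V W : Type*} [PseudoMetricSpace V] [PseudoMetricSpace W]

/-- A real function bounded by `M` and Lipschitz with constant `L`, both constants being real so
that they can be computed with. -/
structure IsBoundedLipschitz (f : V → ℝ) (M L : ℝ) : Prop where
  abs_le : ∀ v, |f v| ≤ M
  abs_sub_le : ∀ v w, |f v - f w| ≤ L * dist v w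

namespace IsBoundedLipschitz

variable {f g : V → ℝ} {M M' L L' : ℝ}

theorem continuous (hf : IsBoundedLipschitz f M L) : Continuous f :=
  (LipschitzWith.of_dist_le' fun v w ↦ hf.abs_sub_le v w).continuous

theorem const_mul (hf : IsBoundedLipschitz f M L) (c : ℝ) :
    IsBoundedLipschitz (fun v ↦ c * f v) (|c| * M) (|c| * L) where
  abs_le v := by
    rw [abs_mul]
    exact mul_le_mul_of_nonneg_left (hf.abs_le v) (abs_nonneg c)
  abs_sub_le v w := by
    rw [← mul_sub, abs_mul, mul_assoc]
    exact mul_le_mul_of_nonneg_left (hf.abs_sub_le v w) (abs_nonneg c)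

theorem add (hf : IsBoundedLipschitz f M L) (hg : IsBoundedLipschitz g M' L') :
    IsBoundedLipschitz (fun v ↦ f v + g v) (M + M') (L + L') where
  abs_le v := (abs_add_le _ _).trans (add_le_add (hf.abs_le v) (hg.abs_le v))
  abs_sub_le v w := by
    rw [add_sub_add_comm, add_mul]
    exact (abs_add_le _ _).trans (add_le_add (hf.abs_sub_le v w) (hg.abs_sub_le v w))

theorem sub (hf : IsBoundedLipschitz f M L) (hg : IsBoundedLipschitz g M' L') :
    IsBoundedLipschitz (fun v ↦ f v - g v) (M + M') (L + L') := by
  simpa [sub_eq_add_neg] using hf.add (hg.const_mul (-1))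

theorem mul (hf : IsBoundedLipschitz f M L) (hg : IsBoundedLipschitz g M' L') :
    IsBoundedLipschitz (fun v ↦ f v * g v) (M * M') (L * M' + M * L') where
  abs_le v := by
    rw [abs_mul]
    exact mul_le_mul (hf.abs_le v) (hg.abs_le v) (abs_nonneg _)
      ((abs_nonneg _).trans (hf.abs_le v))
  abs_sub_le v w := calc
    |f v * g v - f w * g w| = |(f v - f w) * g v + f w * (g v - g w)| := by congr 1; ring
    _ ≤ |f v - f w| * |g v| + |f w| * |g v - g w| := by
      rw [← abs_mul, ← abs_mul]
      exact abs_add_le _ _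
    _ ≤ L * dist v w * M' + M * (L' * dist v w) := add_le_add
      (mul_le_mul (hf.abs_sub_le v w) (hg.abs_le v) (abs_nonneg _)
        ((abs_nonneg _).trans (hf.abs_sub_le v w)))
      (mul_le_mul (hf.abs_le w) (hg.abs_sub_le v w) (abs_nonneg _)
        ((abs_nonneg _).trans (hf.abs_le w)))
    _ = _ := by ring

theorem comp_lipschitzWith_one (hf : IsBoundedLipschitz f M L) (hL : 0 ≤ L) {φ : W → V}
    (hφ : LipschitzWith 1 φ) : IsBoundedLipschitz (fun w ↦ f (φ w)) M L where
  abs_le w := hf.abs_le (φ w)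
  abs_sub_le v w := (hf.abs_sub_le _ _).trans
    (mul_le_mul_of_nonneg_left (by simpa using hφ.dist_le_mul v w) hL)

end IsBoundedLipschitz

end BoundedLipschitz

section Truncation

variable {S c : ℝ}

/-- The nearest point of `[-S, S]`. -/
noncomputable def clamp (S σ : ℝ) : ℝ := max (-S) (min σ S)

theorem clamp_mem_Icc (hS : 0 ≤ S) (σ : ℝ) : clamp S σ ∈ Set.Icc (-S) S :=
  ⟨le_max_left _ _, max_le (by linarith) (min_le_right _ _)⟩

theorem clamp_of_abs_le {σ : ℝ} (hσ : |σ| ≤ S) : clamp S σ = σ := by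
  rw [clamp, min_eq_left (abs_le.1 hσ).2, max_eq_right (abs_le.1 hσ).1]

theorem abs_clamp_of_le_abs {σ : ℝ} (hS : 0 ≤ S) (hσ : S ≤ |σ|) : |clamp S σ| = S := by
  rcases le_abs.1 hσ with h | h
  · rw [clamp, min_eq_right h, max_eq_right (by linarith), abs_of_nonneg hS]
  · rw [clamp, min_eq_left (by linarith), max_eq_left (by linarith), abs_neg, abs_of_nonneg hS]

theorem lipschitzWith_clamp (S : ℝ) : LipschitzWith 1 (clamp S) :=
  (LipschitzWith.id.min_const S).const_max (-S)

theorem isBoundedLipschitz_clamp (hS : 0 ≤ S) : IsBoundedLipschitz (clamp S) S 1 where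
  abs_le σ := abs_le.2 (clamp_mem_Icc hS σ)
  abs_sub_le σ τ := by simpa [dist_eq] using (lipschitzWith_clamp S).dist_le_mul σ τ

theorem exists_isBoundedLipschitz_comp_clamp {g : ℝ → ℝ} (hS : 0 ≤ S)
    (hg : ContDiffOn ℝ 1 g (Set.Icc (-S) S)) :
    ∃ M L, 0 ≤ L ∧ IsBoundedLipschitz (fun σ ↦ g (clamp S σ)) M L := by
  obtain ⟨L, hL⟩ := hg.exists_lipschitzOnWith one_ne_zero (convex_Icc _ _) isCompact_Icc
  obtain ⟨M, hM⟩ := isCompact_Icc.exists_bound_of_continuousOn hg.continuousOn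
  refine ⟨M, L, L.2, fun σ ↦ hM _ (clamp_mem_Icc hS σ), fun σ τ ↦ ?_⟩
  refine (hL.dist_le_mul _ (clamp_mem_Icc hS σ) _ (clamp_mem_Icc hS τ)).trans ?_
  gcongr
  simpa using (lipschitzWith_clamp S).dist_le_mul σ τ

theorem one_sub_sq_pos_of_mem_Icc (hS : S < 1) {x : ℝ} (hx : x ∈ Set.Icc (-S) S) :
    0 < 1 - x ^ 2 := by
  nlinarith [hx.1, hx.2]

theorem contDiffOn_sqrt_one_sub_sq (hS : S < 1) :
    ContDiffOn ℝ 1 (fun x ↦ √(1 - x ^ 2)) (Set.Icc (-S) S) :=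
  ContDiffOn.sqrt (by fun_prop) fun _ hx ↦ (one_sub_sq_pos_of_mem_Icc hS hx).ne'

theorem contDiffOn_div_sqrt_one_sub_sq (hS : S < 1) :
    ContDiffOn ℝ 1 (fun x ↦ x / √(1 - x ^ 2)) (Set.Icc (-S) S) :=
  ContDiffOn.div (by fun_prop) (contDiffOn_sqrt_one_sub_sq hS) fun _ hx ↦
    (sqrt_pos.2 (one_sub_sq_pos_of_mem_Icc hS hx)).ne'

theorem abs_lt_of_abs_clamp_div_sqrt_lt (hS : 0 ≤ S) {σ : ℝ}
    (h : |clamp S σ / √(1 - clamp S σ ^ 2)| < S / √(1 - S ^ 2)) : |σ| < S := by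
  by_contra! hσ
  rw [abs_div, abs_of_nonneg (sqrt_nonneg _), ← sq_abs (clamp S σ),
    abs_clamp_of_le_abs hS hσ] at h
  exact h.false

theorem isBoundedLipschitz_inv_max (hc : 0 < c) :
    IsBoundedLipschitz (fun u ↦ (max u c)⁻¹) c⁻¹ (c⁻¹ * c⁻¹) := by
  have hpos (u : ℝ) : 0 < max u c := hc.trans_le (le_max_right _ _)
  have hle (u : ℝ) : (max u c)⁻¹ ≤ c⁻¹ := inv_anti₀ hc (le_max_right _ _)
  have hmax (u v : ℝ) : |max v c - max u c| ≤ |u - v| := by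
    simpa [dist_eq, abs_sub_comm] using (LipschitzWith.id.max_const c).dist_le_mul v u
  refine ⟨fun u ↦ ?_, fun u v ↦ ?_⟩
  · rw [abs_of_pos (inv_pos.2 (hpos u))]
    exact hle u
  · rw [inv_sub_inv (hpos u).ne' (hpos v).ne', abs_div, abs_mul, abs_of_pos (hpos u),
      abs_of_pos (hpos v)]
    calc |max v c - max u c| / (max u c * max v c) ≤ |u - v| / (c * c) :=
          div_le_div₀ (abs_nonneg _) (hmax u v) (by positivity)
            (mul_le_mul (le_max_right _ _) (le_max_right _ _) hc.le (hpos u).le)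
      _ = c⁻¹ * c⁻¹ * dist u v := by rw [dist_eq]; field_simp

theorem isBoundedLipschitz_min_max (hc : 0 ≤ c) {B : ℝ} (hB : 0 ≤ B) :
    IsBoundedLipschitz (fun u ↦ min (max u c) B) B 1 where
  abs_le u := by
    rw [abs_of_nonneg (le_min (hc.trans (le_max_right _ _)) hB)]
    exact min_le_right _ _
  abs_sub_le u v := by
    simpa [dist_eq] using ((LipschitzWith.id.max_const c).min_const B).dist_le_mul u v

end Truncation

section SingularIntegral

variable {h : ℝ → ℝ}

theorem hasDerivAt_mul_integral_comp_mul (hh : Continuous h) (ρ : ℝ) :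
    HasDerivAt (fun ρ ↦ ρ * ∫ x in (0 : ℝ)..1, h (ρ * x)) (h ρ) ρ := by
  have hsubst (ρ : ℝ) : ρ * ∫ x in (0 : ℝ)..1, h (ρ * x) = ∫ t in (0 : ℝ)..ρ, h t := by
    simp
  simp only [hsubst]
  exact (hh.integral_hasStrictDerivAt 0 ρ).hasDerivAt

theorem mul_integral_rpow_mul_comp_mul {P ρ : ℝ} (hρ : 0 < ρ) :
    ρ * ∫ x in (0 : ℝ)..1, x ^ P * h (ρ * x) = ρ ^ (-P) * ∫ t in (0 : ℝ)..ρ, t ^ P * h t := by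
  have hsubst := intervalIntegral.smul_integral_comp_mul_left (a := 0) (b := 1)
    (fun t ↦ t ^ P * h t) ρ
  simp only [mul_zero, mul_one, smul_eq_mul] at hsubst
  have hsplit : Set.EqOn (fun x ↦ (ρ * x) ^ P * h (ρ * x)) (fun x ↦ ρ ^ P * (x ^ P * h (ρ * x)))
      (Set.uIcc 0 1) := by
    intro x hx
    rw [Set.uIcc_of_le zero_le_one] at hx
    simp only [mul_rpow hρ.le hx.1, mul_assoc]
  rw [← hsubst, intervalIntegral.integral_congr hsplit, intervalIntegral.integral_const_mul,
    mul_left_comm, ← mul_assoc (ρ ^ (-P)), ← rpow_add hρ, neg_add_cancel, rpow_zero, one_mul]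

theorem hasDerivAt_mul_integral_rpow_mul_comp_mul {P ρ : ℝ} (hP : 0 ≤ P) (hh : Continuous h)
    (hρ : 0 < ρ) :
    HasDerivAt (fun ρ ↦ ρ * ∫ x in (0 : ℝ)..1, x ^ P * h (ρ * x))
      (h ρ - P / ρ * (ρ * ∫ x in (0 : ℝ)..1, x ^ P * h (ρ * x))) ρ := by
  have hcont : Continuous fun t ↦ t ^ P * h t :=
    (continuous_id.rpow_const fun _ ↦ Or.inr hP).mul hh
  have hprod := ((hasDerivAt_rpow_const (p := -P) (Or.inl hρ.ne')).mul
    (hcont.integral_hasStrictDerivAt 0 ρ).hasDerivAt).congr_of_eventuallyEq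
      (f₁ := fun ρ ↦ ρ * ∫ x in (0 : ℝ)..1, x ^ P * h (ρ * x)) (by
        filter_upwards [lt_mem_nhds hρ] with x hx using mul_integral_rpow_mul_comp_mul hx)
  refine hprod.congr_deriv ?_
  have hcancel : ρ ^ (-P) * ρ ^ P = 1 := by rw [← rpow_add hρ, neg_add_cancel, rpow_zero]
  rw [mul_integral_rpow_mul_comp_mul hρ, rpow_sub_one hρ.ne']
  linear_combination h ρ * hcancel

end SingularIntegral

section TruncatedField

/-- The slope `tan θ` as a function of `σ = sin θ`, with `σ` clamped to `[-S, S]`. -/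
noncomputable def truncSlope (S σ : ℝ) : ℝ := clamp S σ / √(1 - clamp S σ ^ 2)

/-- `cos θ` as a function of `σ = sin θ`, with `σ` clamped to `[-S, S]`. -/
noncomputable def truncCos (S σ : ℝ) : ℝ := √(1 - clamp S σ ^ 2)

/-- The truncated right-hand side of `σ' + (P / t) σ = h` for the pair `v = (U, σ)` of the height
and the sine of the inclination of a rescaled profile, where `ε = a ^ 2`. The height is kept above
`c`, and below the a priori bound `1 + B |t|` which holds as long as the slope is at most `B`. -/
noncomputable def truncForcing (Q S c B ε t : ℝ) (v : ℝ × ℝ) : ℝ :=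
  ε / 2 * (t * clamp S v.2 - truncCos S v.2 * min (max v.1 c) (1 + B * |t|)) +
    Q * (truncCos S v.2 * (max v.1 c)⁻¹)

/-- The truncated first-order system for `v = (U, σ)`, in the form of a Volterra field. -/
noncomputable def truncField (P Q S c B : ℝ) (ε : unitInterval) (x t : ℝ) (v : ℝ × ℝ) : ℝ × ℝ :=
  (truncSlope S v.2, x ^ P * truncForcing Q S c B ε t v)

variable {P Q S c B M L : ℝ}

theorem isBoundedLipschitz_truncForcing (hS : 0 ≤ S) (hc : 0 < c) (hB : 0 ≤ B) (hL : 0 ≤ L)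
    (hcos : IsBoundedLipschitz (truncCos S) M L) (ε t : ℝ) :
    IsBoundedLipschitz (truncForcing Q S c B ε t)
      (|ε / 2| * (|t| * S + M * (1 + B * |t|)) + |Q| * (M * c⁻¹))
      (|ε / 2| * (|t| * 1 + (L * (1 + B * |t|) + M * 1)) +
        |Q| * (L * c⁻¹ + M * (c⁻¹ * c⁻¹))) := by
  have hcos' := hcos.comp_lipschitzWith_one hL (φ := fun v : ℝ × ℝ ↦ v.2) .prod_snd
  have hclamp := (isBoundedLipschitz_clamp hS).comp_lipschitzWith_one zero_le_one
    (φ := fun v : ℝ × ℝ ↦ v.2) .prod_snd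
  have hheight := (isBoundedLipschitz_min_max hc.le (B := 1 + B * |t|)
    (by positivity)).comp_lipschitzWith_one zero_le_one (φ := fun v : ℝ × ℝ ↦ v.1) .prod_fst
  have hinv := (isBoundedLipschitz_inv_max hc).comp_lipschitzWith_one (by positivity)
    (φ := fun v : ℝ × ℝ ↦ v.1) .prod_fst
  exact (((hclamp.const_mul t).sub (hcos'.mul hheight)).const_mul (ε / 2)).add
    ((hcos'.mul hinv).const_mul Q)

theorem abs_truncForcing_sub_le (hS : 0 ≤ S) (hc : 0 < c) (hB : 0 ≤ B)
    (hcos : ∀ σ, |truncCos S σ| ≤ M) (ε ε' t : ℝ) (v : ℝ × ℝ) :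
    |truncForcing Q S c B ε t v - truncForcing Q S c B ε' t v| ≤
      |ε - ε'| * (|t| * S + M * (1 + B * |t|)) := by
  have hdiff : truncForcing Q S c B ε t v - truncForcing Q S c B ε' t v = (ε - ε') *
      ((t * clamp S v.2 - truncCos S v.2 * min (max v.1 c) (1 + B * |t|)) / 2) := by
    unfold truncForcing
    ring
  have hterm : |t * clamp S v.2 - truncCos S v.2 * min (max v.1 c) (1 + B * |t|)| ≤
      |t| * S + M * (1 + B * |t|) := by
    refine (abs_sub _ _).trans ?_
    rw [abs_mul, abs_mul]
    gcongr
    · exact (isBoundedLipschitz_clamp hS).abs_le _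
    · exact (abs_nonneg _).trans (hcos v.2)
    · exact hcos v.2
    · exact (isBoundedLipschitz_min_max hc.le (by positivity)).abs_le _
  rw [hdiff, abs_mul, abs_div, abs_two]
  gcongr
  linarith [abs_nonneg (t * clamp S v.2 - truncCos S v.2 * min (max v.1 c) (1 + B * |t|))]

theorem continuous_truncForcing (hc : 0 < c) (hcos : Continuous (truncCos S)) :
    Continuous fun p : ℝ × ℝ × ℝ × ℝ ↦ truncForcing Q S c B p.1 p.2.1 p.2.2 := by
  have hclamp := (lipschitzWith_clamp S).continuous
  have hne (u : ℝ) : max u c ≠ 0 := (hc.trans_le (le_max_right _ _)).ne'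
  unfold truncForcing
  fun_prop (disch := exact fun _ ↦ hne _)

theorem continuous_truncField (hP : 0 ≤ P) (hc : 0 < c) (hslope : Continuous (truncSlope S))
    (hcos : Continuous (truncCos S)) :
    Continuous fun p : unitInterval × ℝ × ℝ × ℝ × ℝ ↦
      truncField P Q S c B p.1 p.2.1 p.2.2.1 p.2.2.2 := by
  have hforcing := (continuous_truncForcing (Q := Q) (B := B) hc hcos).comp
    (f := fun p : unitInterval × ℝ × ℝ × ℝ × ℝ ↦ ((p.1 : ℝ), p.2.2.1, p.2.2.2)) (by fun_prop)
  exact (hslope.comp (by fun_prop)).prodMk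
    (((continuous_fst.comp continuous_snd).rpow_const fun _ ↦ Or.inr hP).mul hforcing)

theorem isBoundedLipschitz_truncForcing_of_abs_le (hS : 0 ≤ S) (hc : 0 < c) (hB : 0 ≤ B)
    (hL : 0 ≤ L) (hcos : IsBoundedLipschitz (truncCos S) M L) {ε : ℝ} (hε : |ε / 2| ≤ 1) (t : ℝ) :
    IsBoundedLipschitz (truncForcing Q S c B ε t)
      ((S + M * (1 + B) + |Q| * (M * c⁻¹)) * (1 + |t|))
      ((1 + L * (1 + B) + M + |Q| * (L * c⁻¹ + M * (c⁻¹ * c⁻¹))) * (1 + |t|)) := by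
  have hM : 0 ≤ M := (abs_nonneg _).trans (hcos.abs_le 0)
  have hforcing := isBoundedLipschitz_truncForcing (Q := Q) hS hc hB hL hcos ε t
  refine ⟨fun v ↦ (hforcing.abs_le v).trans ?_, fun v w ↦ (hforcing.abs_sub_le v w).trans ?_⟩
  · calc _ ≤ 1 * (|t| * S + M * (1 + B * |t|)) + |Q| * (M * c⁻¹) := by gcongr
      _ ≤ _ := by
        rw [← sub_nonneg]
        ring_nf
        positivity
  · gcongr
    calc _ ≤ 1 * (|t| * 1 + (L * (1 + B * |t|) + M * 1)) +
          |Q| * (L * c⁻¹ + M * (c⁻¹ * c⁻¹)) := by gcongr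
      _ ≤ _ := by
        rw [← sub_nonneg]
        ring_nf
        positivity

theorem exists_isVolterraField_truncField (hP : 0 ≤ P) (hS : 0 ≤ S) (hc : 0 < c) (hB : 0 ≤ B)
    {L₁ L₂ M₂ : ℝ} (hL₁ : 0 ≤ L₁) (hL₂ : 0 ≤ L₂)
    (hslope : IsBoundedLipschitz (truncSlope S) B L₁)
    (hcos : IsBoundedLipschitz (truncCos S) M₂ L₂) :
    ∃ L M, IsVolterraField (truncField P Q S c B) L M := by
  have hM₂ : 0 ≤ M₂ := (abs_nonneg _).trans (hcos.abs_le 0)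
  have hforcing (ε : unitInterval) (t : ℝ) :=
    isBoundedLipschitz_truncForcing_of_abs_le (Q := Q) hS hc hB hL₂ hcos (ε := ε)
      (abs_le.2 ⟨by linarith [ε.2.1], by linarith [ε.2.2]⟩) t
  have hpow {x : ℝ} (hx : x ∈ Set.Icc (0 : ℝ) 1) (y : ℝ) : |x ^ P * y| ≤ |y| := by
    rw [abs_mul, abs_of_nonneg (rpow_nonneg hx.1 _)]
    exact mul_le_of_le_one_left (abs_nonneg y) (rpow_le_one hx.1 hx.2 hP)
  set L := 1 + L₂ * (1 + B) + M₂ + |Q| * (L₂ * c⁻¹ + M₂ * (c⁻¹ * c⁻¹))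
  set M := S + M₂ * (1 + B) + |Q| * (M₂ * c⁻¹)
  have hL : 0 < L := by positivity
  have hM : 0 ≤ M := by positivity
  refine ⟨L₁ + L, B + M, continuous_truncField hP hc hslope.continuous hcos.continuous,
    by positivity, fun ε t v w x hx ↦ max_le ?_ ?_, fun ε t v x hx ↦ max_le ?_ ?_,
    fun ε ε' t v x hx ↦ max_le ?_ ?_⟩
  · refine (hslope.abs_sub_le _ _).trans ?_
    gcongr
    · nlinarith [abs_nonneg t]
    · exact norm_snd_le (v - w)
  · simp only [truncField, Prod.snd_sub, ← mul_sub]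
    refine (hpow hx _).trans (((hforcing ε t).abs_sub_le v w).trans ?_)
    rw [dist_eq_norm]
    gcongr
    exact le_add_of_nonneg_left hL₁
  · exact (hslope.abs_le _).trans (by nlinarith [abs_nonneg t])
  · refine (hpow hx _).trans (((hforcing ε t).abs_le v).trans ?_)
    gcongr
    exact le_add_of_nonneg_left hB
  · simp only [truncField, Prod.fst_sub, sub_self, norm_zero]
    positivity
  · simp only [truncField, Prod.snd_sub, ← mul_sub]
    refine (hpow hx _).trans ((abs_truncForcing_sub_le hS hc hB hcos.abs_le _ _ t v).trans ?_)
    rw [Subtype.dist_eq, dist_eq]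
    gcongr
    simp only [M]
    rw [← sub_nonneg]
    ring_nf
    positivity

end TruncatedField

/-! ### Rescaled profiles -/

section VolterraSolution

variable {P Q S c B L M : ℝ} {ε : unitInterval} {g : ℝ → ℝ × ℝ}

theorem hasDerivAt_fst_of_volterra (hF : IsVolterraField (truncField P Q S c B) L M)
    (hslope : Continuous (truncSlope S)) (hg : Continuous g)
    (heq : ∀ ρ, g ρ = (1, 0) + ρ • volterraIntegral (truncField P Q S c B) ε g ρ) (ρ : ℝ) :
    HasDerivAt (fun ρ ↦ (g ρ).1) (truncSlope S (g ρ).2) ρ := by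
  have hfst (ρ : ℝ) : (g ρ).1 = 1 + ρ * ∫ x in (0 : ℝ)..1, truncSlope S (g (ρ * x)).2 := by
    conv_lhs => rw [heq]
    exact congrArg (1 + ρ * ·) ((ContinuousLinearMap.fst ℝ ℝ ℝ).intervalIntegral_comp_comm
      (hF.intervalIntegrable ε hg ρ)).symm
  exact ((hasDerivAt_mul_integral_comp_mul (h := fun t ↦ truncSlope S (g t).2)
    (by fun_prop) ρ).const_add 1).congr_of_eventuallyEq (.of_forall hfst)

theorem hasDerivAt_snd_of_volterra (hF : IsVolterraField (truncField P Q S c B) L M)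
    (hP : 0 ≤ P) (hc : 0 < c) (hcos : Continuous (truncCos S)) (hg : Continuous g)
    (heq : ∀ ρ, g ρ = (1, 0) + ρ • volterraIntegral (truncField P Q S c B) ε g ρ)
    {ρ : ℝ} (hρ : 0 < ρ) :
    HasDerivAt (fun ρ ↦ (g ρ).2) (truncForcing Q S c B ε ρ (g ρ) - P / ρ * (g ρ).2) ρ := by
  have hsnd (ρ : ℝ) : (g ρ).2 = ρ * ∫ x in (0 : ℝ)..1,
      x ^ P * truncForcing Q S c B ε (ρ * x) (g (ρ * x)) := by
    conv_lhs => rw [heq]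
    exact (zero_add _).trans (congrArg (ρ * ·)
      ((ContinuousLinearMap.snd ℝ ℝ ℝ).intervalIntegral_comp_comm
        (hF.intervalIntegrable ε hg ρ)).symm)
  have hforcing : Continuous fun t ↦ truncForcing Q S c B ε t (g t) :=
    (continuous_truncForcing hc hcos).comp (f := fun t ↦ ((ε : ℝ), t, g t)) (by fun_prop)
  rw [hsnd ρ]
  exact (hasDerivAt_mul_integral_rpow_mul_comp_mul hP hforcing hρ).congr_of_eventuallyEq
    (.of_forall hsnd)

end VolterraSolution

theorem hasDerivAt_div_sqrt_one_sub_sq {σ : ℝ → ℝ} {s ρ : ℝ} (hσ : HasDerivAt σ s ρ)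
    (hpos : 0 < 1 - σ ρ ^ 2) :
    HasDerivAt (fun ρ ↦ σ ρ / √(1 - σ ρ ^ 2)) (s / √(1 - σ ρ ^ 2) ^ 3) ρ := by
  have hsqrt : 0 < √(1 - σ ρ ^ 2) := sqrt_pos.2 hpos
  refine (hσ.div (((hσ.fun_pow 2).const_sub 1).sqrt hpos.ne') hsqrt.ne').congr_deriv ?_
  have hsq : √(1 - σ ρ ^ 2) ^ 2 = 1 - σ ρ ^ 2 := sq_sqrt hpos.le
  set k := √(1 - σ ρ ^ 2)
  push_cast
  field_simp
  linear_combination s * hsq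

theorem hasDerivAt_truncSlope {σ : ℝ → ℝ} {S s ρ : ℝ} (hS : S ≤ 1) (hσ : HasDerivAt σ s ρ)
    (hlt : |σ ρ| < S) :
    HasDerivAt (fun ρ ↦ truncSlope S (σ ρ)) (s / √(1 - σ ρ ^ 2) ^ 3) ρ := by
  have hpos : 0 < 1 - σ ρ ^ 2 := by
    rw [sub_pos, sq_lt_one_iff_abs_lt_one]
    exact hlt.trans_le hS
  refine (hasDerivAt_div_sqrt_one_sub_sq hσ hpos).congr_of_eventuallyEq ?_
  filter_upwards [hσ.continuousAt.abs.eventually (gt_mem_nhds hlt)] with x hx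
  rw [truncSlope, clamp_of_abs_le hx.le]

theorem exists_div_sqrt_one_sub_sq_eq {W : ℝ} (hW : 0 < W) :
    ∃ S, 0 < S ∧ S < 1 ∧ S / √(1 - S ^ 2) = W := by
  have hsqrt : 0 < √(1 + W ^ 2) := by positivity
  refine ⟨W / √(1 + W ^ 2), div_pos hW hsqrt,
    (div_lt_one hsqrt).2 (lt_sqrt_of_sq_lt (by linarith)), ?_⟩
  have hcos : 1 - (W / √(1 + W ^ 2)) ^ 2 = (1 / √(1 + W ^ 2)) ^ 2 := by
    rw [div_pow, div_pow, sq_sqrt (by positivity)]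
    field_simp
    ring
  rw [hcos, sqrt_sq (by positivity)]
  field_simp

/-- A family of solutions of the self-shrinker equation in rescaled variables: if `u` is a profile
with `u 0 = a`, then `U a ρ = u (a * ρ) / a` and `w a ρ = u' (a * ρ)`, so the parameter `a ^ 2`
multiplies the non-minimal terms of the equation. The differential equation is only required as
long as the slope stays below `W` and the height above `c`; `P` and `Q` are the dimensions `p - 1`
and `q - 1` of the two spherical factors. -/
structure RescaledProfile (P Q W c : ℝ) where
  /-- the rescaled height -/
  U : ℝ → ℝ → ℝ
  /-- the slope -/
  w : ℝ → ℝ → ℝ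
  continuous_U : Continuous (Function.uncurry U)
  continuous_w : Continuous (Function.uncurry w)
  U_zero : ∀ a, U a 0 = 1
  w_zero : ∀ a, w a 0 = 0
  hasDerivAt_U : ∀ a ρ, HasDerivAt (U a) (w a ρ) ρ
  hasDerivAt_w : ∀ {a ρ}, a ^ 2 ≤ 1 → 0 < ρ → |w a ρ| < W → c < U a ρ →
    HasDerivAt (w a) ((1 + w a ρ ^ 2) *
      ((a ^ 2 * ρ / 2 - P / ρ) * w a ρ - a ^ 2 * U a ρ / 2 + Q / U a ρ)) ρ

namespace RescaledProfile

variable {P Q S c B : ℝ}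

theorem slope_equation_of_truncForcing {a u σ ρ : ℝ} (hS : S ≤ 1) (hσ : |σ| < S)
    (hu : 0 < u) (hcu : c ≤ u) (huB : u ≤ 1 + B * |ρ|) :
    (truncForcing Q S c B (a ^ 2) ρ (u, σ) - P / ρ * σ) / √(1 - σ ^ 2) ^ 3 =
      (1 + truncSlope S σ ^ 2) *
        ((a ^ 2 * ρ / 2 - P / ρ) * truncSlope S σ - a ^ 2 * u / 2 + Q / u) := by
  have hpos : 0 < 1 - σ ^ 2 := by
    rw [sub_pos, sq_lt_one_iff_abs_lt_one]
    exact hσ.trans_le hS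
  have hsqrt : 0 < √(1 - σ ^ 2) := sqrt_pos.2 hpos
  have hsec : 1 + (σ / √(1 - σ ^ 2)) ^ 2 = 1 / √(1 - σ ^ 2) ^ 2 := by
    rw [div_pow, sq_sqrt hpos.le]
    field_simp
    ring
  simp only [truncForcing, truncSlope, truncCos, clamp_of_abs_le hσ.le, max_eq_left hcu,
    min_eq_left huB, hsec]
  generalize P / ρ = κ
  field_simp [hsqrt.ne']
  ring

theorem le_one_add_mul_abs {u s : ℝ → ℝ} (hzero : u 0 = 1) (hu : ∀ ρ, HasDerivAt u (s ρ) ρ)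
    (hs : ∀ ρ, |s ρ| ≤ B) (ρ : ℝ) : u ρ ≤ 1 + B * |ρ| := by
  have hmvt := convex_univ.norm_image_sub_le_of_norm_hasDerivWithin_le (f := u) (C := B)
    (fun x _ ↦ (hu x).hasDerivWithinAt) (fun x _ ↦ hs x) (Set.mem_univ 0) (Set.mem_univ ρ)
  simp only [norm_eq_abs, sub_zero, hzero] at hmvt
  linarith [le_abs_self (u ρ - 1)]

theorem nonempty {P Q W c : ℝ} (hP : 0 ≤ P) (hW : 0 < W) (hc : 0 < c) :
    Nonempty (RescaledProfile P Q W c) := by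
  obtain ⟨S, hS, hS1, hSW⟩ := exists_div_sqrt_one_sub_sq_eq hW
  obtain ⟨B, L₁, hL₁, hslope⟩ :=
    exists_isBoundedLipschitz_comp_clamp hS.le (contDiffOn_div_sqrt_one_sub_sq hS1)
  obtain ⟨M₂, L₂, hL₂, hcos⟩ :=
    exists_isBoundedLipschitz_comp_clamp hS.le (contDiffOn_sqrt_one_sub_sq hS1)
  have hB : 0 ≤ B := (abs_nonneg _).trans (hslope.abs_le 0)
  change IsBoundedLipschitz (truncSlope S) _ _ at hslope
  change IsBoundedLipschitz (truncCos S) _ _ at hcos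
  obtain ⟨L, M, hF⟩ := exists_isVolterraField_truncField (Q := Q) hP hS.le hc hB hL₁ hL₂ hslope hcos
  obtain ⟨f, hf, heq⟩ := hF.exists_solution (1, 0)
  let ε (a : ℝ) : unitInterval := Set.projIcc 0 1 zero_le_one (a ^ 2)
  have hg : Continuous fun x : ℝ × ℝ ↦ f (ε x.1) x.2 := by
    refine hf.comp (f := fun x : ℝ × ℝ ↦ (ε x.1, x.2)) ?_
    exact (continuous_projIcc.comp (by fun_prop)).prodMk continuous_snd
  have hg' (a : ℝ) : Continuous (f (ε a)) := hg.comp (Continuous.prodMk_right a)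
  have hzero (a : ℝ) : f (ε a) 0 = (1, 0) := by simpa using heq (ε a) 0
  have hU (a ρ : ℝ) := hasDerivAt_fst_of_volterra hF hslope.continuous (hg' a) (heq (ε a)) ρ
  refine ⟨⟨fun a ρ ↦ (f (ε a) ρ).1, fun a ρ ↦ truncSlope S (f (ε a) ρ).2, hg.fst,
    hslope.continuous.comp hg.snd, fun a ↦ by rw [hzero], fun a ↦ ?_, hU,
    fun {a ρ} ha hρ hw hu ↦ ?_⟩⟩
  · simp [hzero, truncSlope, clamp_of_abs_le (abs_zero.trans_le hS.le)]
  · have hσ : |(f (ε a) ρ).2| < S := abs_lt_of_abs_clamp_div_sqrt_lt hS.le (hSW ▸ hw)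
    refine (hasDerivAt_truncSlope hS1.le (hasDerivAt_snd_of_volterra hF hP hc hcos.continuous
      (hg' a) (heq (ε a)) hρ) hσ).congr_deriv ?_
    have hε : (ε a : ℝ) = a ^ 2 := by simp [ε, Set.projIcc, ha, sq_nonneg]
    rw [hε]
    exact slope_equation_of_truncForcing hS1.le hσ (hc.trans hu) hu.le
      (le_one_add_mul_abs (by rw [hzero]) (hU a) (fun _ ↦ hslope.abs_le _) ρ)

end RescaledProfile

section RealAnalysis

variable {f f' : ℝ → ℝ} {a b c : ℝ}

theorem exists_first_hit (hab : a ≤ b) (hf : ContinuousOn f (Set.Icc a b)) (ha : f a < c)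
    (hb : c ≤ f b) : ∃ s ∈ Set.Ioc a b, f s = c ∧ ∀ t ∈ Set.Ico a s, f t < c := by
  have hcompact : IsCompact (Set.Icc a b ∩ f ⁻¹' {c}) :=
    isCompact_Icc.of_isClosed_subset (hf.preimage_isClosed_of_isClosed isClosed_Icc
      isClosed_singleton) Set.inter_subset_left
  obtain ⟨x, hx, hfx⟩ := intermediate_value_Icc hab hf ⟨ha.le, hb⟩
  obtain ⟨s, ⟨hs, hfs⟩, hleast⟩ := hcompact.exists_isLeast ⟨x, hx, hfx⟩
  have has : a ≠ s := by
    rintro rfl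
    exact ha.ne hfs
  refine ⟨s, ⟨hs.1.lt_of_ne has, hs.2⟩, hfs, fun t ht ↦ ?_⟩
  by_contra! hct
  have htb := ht.2.le.trans hs.2
  obtain ⟨y, hy, hfy⟩ := intermediate_value_Icc ht.1
    (hf.mono (Set.Icc_subset_Icc_right htb)) ⟨ha.le, hct⟩
  exact (hleast ⟨⟨hy.1, hy.2.trans htb⟩, hfy⟩).not_gt (hy.2.trans_lt ht.2)

theorem le_of_hasDerivAt_nonpos (hab : a ≤ b) (hc : ContinuousOn f (Set.Icc a b))
    (hd : ∀ x ∈ Set.Ioo a b, HasDerivAt f (f' x) x) (hf' : ∀ x ∈ Set.Ioo a b, f' x ≤ 0) :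
    f b ≤ f a := by
  rw [← interior_Icc] at hd hf'
  exact antitoneOn_of_hasDerivWithinAt_nonpos (convex_Icc a b) hc
    (fun x hx ↦ (hd x hx).hasDerivWithinAt) hf' (Set.left_mem_Icc.2 hab)
    (Set.right_mem_Icc.2 hab) hab

theorem le_of_hasDerivAt_nonneg (hab : a ≤ b) (hc : ContinuousOn f (Set.Icc a b))
    (hd : ∀ x ∈ Set.Ioo a b, HasDerivAt f (f' x) x) (hf' : ∀ x ∈ Set.Ioo a b, 0 ≤ f' x) :
    f a ≤ f b := by
  rw [← interior_Icc] at hd hf'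
  exact monotoneOn_of_hasDerivWithinAt_nonneg (convex_Icc a b) hc
    (fun x hx ↦ (hd x hx).hasDerivWithinAt) hf' (Set.left_mem_Icc.2 hab)
    (Set.right_mem_Icc.2 hab) hab

theorem le_mul_exp_of_hasDerivAt_le (hab : a ≤ b) (hc : ContinuousOn f (Set.Icc a b))
    (hd : ∀ x ∈ Set.Ioo a b, HasDerivAt f (f' x) x)
    (hf' : ∀ x ∈ Set.Ioo a b, f' x ≤ c * f x) : f b ≤ f a * exp (c * (b - a)) := by
  have h := le_of_hasDerivAt_nonpos (f := fun x ↦ f x * exp (-(c * (x - a))))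
    (f' := fun x ↦ (f' x - c * f x) * exp (-(c * (x - a)))) hab (hc.mul (by fun_prop))
    (fun x hx ↦ ((hd x hx).mul (((hasDerivAt_id x).sub_const a).const_mul c).neg.exp).congr_deriv
      (by simp only [id, Pi.neg_apply]; ring))
    (fun x hx ↦ mul_nonpos_of_nonpos_of_nonneg (sub_nonpos.2 (hf' x hx)) (exp_pos _).le)
  rwa [sub_self, mul_zero, neg_zero, exp_zero, mul_one, exp_neg, ← div_eq_mul_inv,
    div_le_iff₀ (exp_pos _)] at h

end RealAnalysis

namespace RescaledProfile

variable {P Q W c a : ℝ}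

theorem continuous_U_apply (X : RescaledProfile P Q W c) (a : ℝ) : Continuous (X.U a) :=
  X.continuous_U.comp (Continuous.prodMk_right a)

theorem continuous_w_apply (X : RescaledProfile P Q W c) (a : ℝ) : Continuous (X.w a) :=
  X.continuous_w.comp (Continuous.prodMk_right a)

theorem abs_U_sub_one_le (X : RescaledProfile P Q W c) {s : ℝ} (hs : 0 ≤ s)
    (hw : ∀ t ∈ Set.Ico 0 s, |X.w a t| ≤ 1 / 2) : |X.U a s - 1| ≤ s / 2 := by
  have hmvt := norm_image_sub_le_of_norm_deriv_le_segment' (C := 1 / 2)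
    (fun t _ ↦ (X.hasDerivAt_U a t).hasDerivWithinAt) hw s (Set.right_mem_Icc.2 hs)
  rw [norm_eq_abs, X.U_zero, sub_zero] at hmvt
  linarith

theorem two_mul_mul_slope_rate_le {u w t : ℝ} (hP : 0 ≤ P) (hQ : 0 ≤ Q) (ha : a ^ 2 ≤ 1)
    (ht : 0 < t) (ht' : t ≤ 1 / 10) (hw : |w| ≤ 1 / 2) (hu : |u - 1| ≤ 1 / 4) :
    2 * w * ((1 + w ^ 2) * ((a ^ 2 * t / 2 - P / t) * w - a ^ 2 * u / 2 + Q / u)) ≤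
      5 / 4 * (1 + 2 * Q) := by
  obtain ⟨hu₁, hu₂⟩ := abs_le.1 hu
  have hsq : w ^ 2 ≤ 1 / 4 := by
    rw [← sq_abs]
    nlinarith [abs_nonneg w]
  have hforce : |Q / u - a ^ 2 * u / 2| ≤ 2 * Q + 5 / 8 := by
    have hu₀ : 0 < u := by linarith
    have hQu : Q / u ≤ 2 * Q := by
      rw [div_le_iff₀ hu₀]
      nlinarith
    have hau : a ^ 2 * u ≤ 1 * (5 / 4) := by
      gcongr
      linarith
    have hQu₀ : 0 ≤ Q / u := by positivity
    have hau₀ : 0 ≤ a ^ 2 * u := by positivity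
    exact abs_le.2 ⟨by linarith, by linarith⟩
  have hwork : w * (Q / u - a ^ 2 * u / 2) ≤ 1 / 2 * (2 * Q + 5 / 8) := by
    refine (le_abs_self _).trans ?_
    rw [abs_mul]
    gcongr
  have hdrag : w * ((a ^ 2 * t / 2 - P / t) * w - a ^ 2 * u / 2 + Q / u) ≤
      1 / 2 * (1 + 2 * Q) := calc
    _ = a ^ 2 * t / 2 * w ^ 2 - P / t * w ^ 2 + w * (Q / u - a ^ 2 * u / 2) := by ring
    _ ≤ 1 * (1 / 10) / 2 * (1 / 4) - 0 + 1 / 2 * (2 * Q + 5 / 8) := by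
      gcongr
      positivity
    _ ≤ _ := by linarith
  calc _ = 2 * ((1 + w ^ 2) * (w * ((a ^ 2 * t / 2 - P / t) * w - a ^ 2 * u / 2 + Q / u))) := by
        ring
    _ ≤ 2 * ((1 + w ^ 2) * (1 / 2 * (1 + 2 * Q))) := by gcongr
    _ ≤ 2 * ((1 + 1 / 4) * (1 / 2 * (1 + 2 * Q))) := by gcongr
    _ = _ := by ring

theorem sq_w_lt (X : RescaledProfile P Q W c) (hP : 0 ≤ P) (hQ : 0 ≤ Q) (hW : 1 / 2 < W)
    (hc : c < 3 / 4) (ha : a ^ 2 ≤ 1) {ρ : ℝ}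
    (hρ : ρ ∈ Set.Icc 0 (1 / (10 * (1 + 2 * Q)))) : X.w a ρ ^ 2 < 1 / 4 := by
  by_contra! hcon
  have hwc := X.continuous_w_apply a
  obtain ⟨x, hx, hwx, hbelow⟩ := exists_first_hit (f := fun x ↦ X.w a x ^ 2) hρ.1
    (by fun_prop) (by norm_num [X.w_zero]) hcon
  have hxQ : x * (10 * (1 + 2 * Q)) ≤ 1 := (le_div_iff₀ (by positivity)).1 (hx.2.trans hρ.2)
  have hx10 : x ≤ 1 / 10 := by nlinarith [hx.1]
  have hw {t : ℝ} (ht : t ∈ Set.Ico 0 x) : |X.w a t| ≤ 1 / 2 :=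
    abs_le_of_sq_le_sq (by linarith [hbelow t ht]) (by norm_num)
  have hU {t : ℝ} (ht : t ∈ Set.Ioo 0 x) : |X.U a t - 1| ≤ 1 / 4 :=
    (X.abs_U_sub_one_le ht.1.le fun s hs ↦ hw ⟨hs.1, hs.2.trans ht.2⟩).trans (by linarith [ht.2])
  have hgrowth := le_of_hasDerivAt_nonpos (f := fun x ↦ X.w a x ^ 2 - 5 / 4 * (1 + 2 * Q) * x)
    (f' := fun t ↦ 2 * X.w a t * ((1 + X.w a t ^ 2) *
      ((a ^ 2 * t / 2 - P / t) * X.w a t - a ^ 2 * X.U a t / 2 + Q / X.U a t)) -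
      5 / 4 * (1 + 2 * Q)) hx.1.le (by fun_prop)
    (fun t ht ↦ by
      have hwt := hw ⟨ht.1.le, ht.2⟩
      have hUt := (abs_le.1 (hU ht)).1
      have hd := X.hasDerivAt_w ha ht.1 (by linarith) (by linarith)
      refine ((hd.fun_pow 2).sub ((hasDerivAt_id t).const_mul _)).congr_deriv ?_
      simp)
    fun t ht ↦ sub_nonpos.2 (two_mul_mul_slope_rate_le hP hQ ha ht.1 (ht.2.le.trans hx10)
      (hw ⟨ht.1.le, ht.2⟩) (hU ht))
  simp only [X.w_zero, hwx] at hgrowth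
  linarith

theorem abs_w_le_and_abs_U_sub_one_le (X : RescaledProfile P Q W c) (hP : 0 ≤ P) (hQ : 0 ≤ Q)
    (hW : 1 / 2 < W) (hc : c < 3 / 4) (ha : a ^ 2 ≤ 1) {ρ : ℝ}
    (hρ : ρ ∈ Set.Icc 0 (1 / (10 * (1 + 2 * Q)))) :
    |X.w a ρ| ≤ 1 / 2 ∧ |X.U a ρ - 1| ≤ 1 / 4 := by
  have hw {t : ℝ} (ht : t ∈ Set.Icc 0 ρ) : |X.w a t| ≤ 1 / 2 :=
    abs_le_of_sq_le_sq (by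
      linarith [X.sq_w_lt hP hQ hW hc ha ⟨ht.1, ht.2.trans hρ.2⟩]) (by norm_num)
  refine ⟨hw (Set.right_mem_Icc.2 hρ.1), (X.abs_U_sub_one_le hρ.1 fun t ht ↦
    hw ⟨ht.1, ht.2.le⟩).trans ?_⟩
  have hρ10 : ρ * (10 * (1 + 2 * Q)) ≤ 1 := (le_div_iff₀ (by positivity)).1 hρ.2
  nlinarith [hρ.1]

end RescaledProfile

/-! ### The Lyapunov function -/

section Lyapunov

variable {P Q lam φ v s : ℝ}

/-- The part of the Lyapunov function depending on the height `φ = u / r`: a multiple of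
`x - 1 - log x` at `x = φ / lam`. -/
noncomputable def heightPotential (Q lam φ : ℝ) : ℝ := Q * (φ / lam - 1 - log (φ / lam))

/-- The part of the Lyapunov function depending on the slope `v = u'`: the integral of
`(x - lam) / (1 + x ^ 2)` from `lam` to `v`. -/
noncomputable def slopePotential (lam v : ℝ) : ℝ :=
  (log (1 + v ^ 2) - log (1 + lam ^ 2)) / 2 - lam * (arctan v - arctan lam)

/-- A Lyapunov function for the minimal cone equation in logarithmic variables: it vanishes exactly
at the cone `φ = v = lam`, and decreases along minimal hypersurfaces. -/
noncomputable def lyapunov (Q lam φ v : ℝ) : ℝ := heightPotential Q lam φ + slopePotential lam v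

/-- The derivative of the Lyapunov function along a self-shrinker, where `s = r ^ 2`. -/
noncomputable def lyapunovRate (P Q lam s φ v : ℝ) : ℝ :=
  -(Q * (φ - lam) ^ 2 / (lam * φ)) - P * (v - lam) ^ 2 + s / 2 * ((v - lam) * (v - φ))

theorem hasDerivAt_heightPotential (hlam : 0 < lam) (hφ : 0 < φ) :
    HasDerivAt (heightPotential Q lam) (Q * (1 / lam - 1 / φ)) φ := by
  have hdiv : HasDerivAt (fun φ ↦ φ / lam) (1 / lam) φ := (hasDerivAt_id φ).div_const lam
  refine (((hdiv.sub_const 1).sub (hdiv.log (by positivity))).const_mul Q).congr_deriv ?_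
  field_simp

theorem hasDerivAt_slopePotential (lam v : ℝ) :
    HasDerivAt (slopePotential lam) ((v - lam) / (1 + v ^ 2)) v := by
  have hsq : HasDerivAt (fun v : ℝ ↦ 1 + v ^ 2) (2 * v) v := by
    simpa using (hasDerivAt_pow 2 v).const_add 1
  refine ((((hsq.log (by positivity)).sub_const (log (1 + lam ^ 2))).div_const 2).sub
    (((hasDerivAt_arctan v).sub_const (arctan lam)).const_mul lam)).congr_deriv ?_
  field_simp

theorem le_of_hasDerivAt_sub_mul_nonneg {g k : ℝ → ℝ} {x₀ x : ℝ}
    (hg : ∀ y, HasDerivAt g ((y - x₀) * k y) y) (hk : ∀ y ∈ Set.uIcc x₀ x, 0 ≤ k y) :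
    g x₀ ≤ g x := by
  have hcont : Continuous g := continuous_iff_continuousAt.2 fun y ↦ (hg y).continuousAt
  rcases le_total x₀ x with h | h
  · rw [Set.uIcc_of_le h] at hk
    exact le_of_hasDerivAt_nonneg h hcont.continuousOn (fun y _ ↦ hg y) fun y hy ↦
      mul_nonneg (sub_nonneg.2 hy.1.le) (hk y (Set.Ioo_subset_Icc_self hy))
  · rw [Set.uIcc_of_ge h] at hk
    exact le_of_hasDerivAt_nonpos h hcont.continuousOn (fun y _ ↦ hg y) fun y hy ↦
      mul_nonpos_of_nonpos_of_nonneg (sub_nonpos.2 hy.2.le) (hk y (Set.Ioo_subset_Icc_self hy))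

theorem slopePotential_self (lam : ℝ) : slopePotential lam lam = 0 := by simp [slopePotential]

theorem hasDerivAt_const_mul_sq_sub (c x₀ x : ℝ) :
    HasDerivAt (fun x ↦ c * (x - x₀) ^ 2) (2 * c * (x - x₀)) x :=
  ((((hasDerivAt_id x).sub_const x₀).fun_pow 2).const_mul c).congr_deriv (by simp; ring)

theorem slopePotential_le (lam v : ℝ) : slopePotential lam v ≤ (v - lam) ^ 2 / 2 := by
  have hmono := le_of_hasDerivAt_sub_mul_nonneg (x₀ := lam) (x := v)
    (g := fun x ↦ 1 / 2 * (x - lam) ^ 2 - slopePotential lam x) (k := fun x ↦ x ^ 2 / (1 + x ^ 2))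
    (fun x ↦ ((hasDerivAt_const_mul_sq_sub _ _ _).sub
      (hasDerivAt_slopePotential lam x)).congr_deriv (by field_simp; ring))
    fun x _ ↦ by positivity
  simp only [sub_self, slopePotential_self] at hmono
  linarith

theorem le_slopePotential {V : ℝ} (hlam : |lam| ≤ V) (hv : |v| ≤ V) :
    (v - lam) ^ 2 / (2 * (1 + V ^ 2)) ≤ slopePotential lam v := by
  have hmono := le_of_hasDerivAt_sub_mul_nonneg (x₀ := lam) (x := v)
    (g := fun x ↦ slopePotential lam x - 1 / (2 * (1 + V ^ 2)) * (x - lam) ^ 2)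
    (k := fun x ↦ 1 / (1 + x ^ 2) - 1 / (1 + V ^ 2))
    (fun x ↦ ((hasDerivAt_slopePotential lam x).sub
      (hasDerivAt_const_mul_sq_sub _ _ _)).congr_deriv (by field_simp)) fun x hx ↦ by
    have hxV : |x| ≤ V := abs_le.2 (Set.uIcc_subset_Icc (abs_le.1 hlam) (abs_le.1 hv) hx)
    rw [sub_nonneg, ← sq_abs x]
    gcongr
  simp only [sub_self, slopePotential_self] at hmono
  rw [div_eq_mul_one_div, mul_comm]
  linarith

theorem slopePotential_nonneg (lam v : ℝ) : 0 ≤ slopePotential lam v :=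
  le_trans (by positivity) (le_slopePotential (le_max_left |lam| |v|) (le_max_right _ _))

theorem heightPotential_le (hQ : 0 ≤ Q) (hlam : 0 < lam) (hφ : 0 < φ) :
    heightPotential Q lam φ ≤ Q * (φ - lam) ^ 2 / (lam * φ) := by
  have hlog := one_sub_inv_le_log_of_pos (show 0 < φ / lam by positivity)
  calc heightPotential Q lam φ ≤ Q * (φ / lam - 1 - (1 - (φ / lam)⁻¹)) := by
        unfold heightPotential
        gcongr
    _ = _ := by field_simp

theorem le_heightPotential (hQ : 0 ≤ Q) (hlam : 0 < lam) (hφ : 0 < φ) :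
    Q * (√(φ / lam) - 1) ^ 2 ≤ heightPotential Q lam φ := by
  have hx : 0 < φ / lam := by positivity
  have hlog := log_le_sub_one_of_pos (sqrt_pos.2 hx)
  rw [log_sqrt hx.le] at hlog
  unfold heightPotential
  gcongr
  nlinarith [sq_sqrt hx.le]

theorem heightPotential_nonneg (hQ : 0 ≤ Q) (hlam : 0 < lam) (hφ : 0 < φ) :
    0 ≤ heightPotential Q lam φ :=
  le_trans (by positivity) (le_heightPotential hQ hlam hφ)

theorem lyapunov_nonneg (hQ : 0 ≤ Q) (hlam : 0 < lam) (hφ : 0 < φ) :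
    0 ≤ lyapunov Q lam φ v :=
  add_nonneg (heightPotential_nonneg hQ hlam hφ) (slopePotential_nonneg lam v)

theorem lyapunov_le (hQ : 0 ≤ Q) (hlam : 0 < lam) (hφ : 0 < φ) :
    lyapunov Q lam φ v ≤ Q * (φ - lam) ^ 2 / (lam * φ) + (v - lam) ^ 2 / 2 :=
  add_le_add (heightPotential_le hQ hlam hφ) (slopePotential_le lam v)

theorem mem_Icc_of_heightPotential_le {E : ℝ} (hQ : 1 ≤ Q) (hlam : 0 < lam) (hφ : 0 < φ)
    (hE : heightPotential Q lam φ ≤ E) :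
    φ ∈ Set.Icc (lam * exp (-1 - E)) (lam * (2 * (E + 1))) := by
  have hx : 0 < φ / lam := by positivity
  have hpotential : φ / lam - 1 - log (φ / lam) ≤ E :=
    (le_mul_of_one_le_left (by linarith [log_le_sub_one_of_pos hx]) hQ).trans hE
  constructor
  · rw [mul_comm, ← le_div_iff₀ hlam, ← le_log_iff_exp_le hx]
    linarith
  · have hhalf := log_le_sub_one_of_pos (half_pos hx)
    rw [log_div hx.ne' two_ne_zero] at hhalf
    have htwo := log_le_sub_one_of_pos (zero_lt_two' ℝ)
    rw [mul_comm, ← div_le_iff₀ hlam]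
    linarith

theorem abs_le_of_slopePotential_le {E : ℝ} (hlam : 0 ≤ lam) (hE : slopePotential lam v ≤ E) :
    |v| ≤ exp (2 * E + log (1 + lam ^ 2) + 2 * lam * π) := by
  have harctan : lam * (arctan v - arctan lam) ≤ lam * π := by
    gcongr
    linarith [arctan_lt_pi_div_two v, neg_pi_div_two_lt_arctan lam]
  have hlog : log (1 + v ^ 2) ≤ 2 * E + log (1 + lam ^ 2) + 2 * lam * π := by
    unfold slopePotential at hE
    linarith
  rw [log_le_iff_le_exp (by positivity)] at hlog
  have habs : |v| ≤ 1 + v ^ 2 := by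
    rw [← sq_abs]
    nlinarith [sq_nonneg (|v| - 1), abs_nonneg v]
  exact habs.trans hlog

theorem sq_sub_le_mul_heightPotential {Φ : ℝ} (hQ : 1 ≤ Q) (hlam : 0 < lam) (hφ : 0 < φ)
    (hΦ : φ ≤ Φ) : (φ - lam) ^ 2 ≤ 2 * lam * (Φ + lam) * heightPotential Q lam φ := by
  have hsq := sq_sqrt (show 0 ≤ φ / lam by positivity)
  have hlower : (√(φ / lam) - 1) ^ 2 ≤ heightPotential Q lam φ :=
    (le_mul_of_one_le_left (sq_nonneg _) hQ).trans (le_heightPotential (by linarith) hlam hφ)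
  set x := √(φ / lam)
  have hφx : φ = lam * x ^ 2 := by
    rw [hsq]
    field_simp
  have hsum : lam * (x + 1) ^ 2 ≤ 2 * (Φ + lam) := by nlinarith [sq_nonneg (x - 1)]
  calc (φ - lam) ^ 2 = lam * (lam * (x + 1) ^ 2) * (x - 1) ^ 2 := by
        rw [hφx]
        ring
    _ ≤ lam * (2 * (Φ + lam)) * heightPotential Q lam φ := by
        have hΦ₀ : 0 < Φ := hφ.trans_le hΦ
        gcongr
    _ = _ := by ring

/-- The sublevel set `lyapunov ≤ E` lies in the box `m < φ ≤ Φ`, `|v| < W`, on which the Lyapunov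
function dominates the squared distance to the cone. -/
structure IsLyapunovTrap (Q lam E m Φ W M : ℝ) : Prop where
  m_pos : 0 < m
  Φ_pos : 0 < Φ
  M_pos : 0 < M
  bounds : ∀ {φ v}, 0 < φ → lyapunov Q lam φ v ≤ E → m < φ ∧ φ ≤ Φ ∧ |v| < W ∧
    (φ - lam) ^ 2 + (v - lam) ^ 2 ≤ M * lyapunov Q lam φ v

theorem exists_isLyapunovTrap {E b B : ℝ} (hQ : 1 ≤ Q) (hlam : 0 < lam) (hE : 0 ≤ E) (hb : 0 < b) :
    ∃ m Φ W M, IsLyapunovTrap Q lam E m Φ W M ∧ m ≤ b ∧ B ≤ W := by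
  set V := max lam (exp (2 * E + log (1 + lam ^ 2) + 2 * lam * π))
  have hΦ : 0 < lam * (2 * (E + 1)) := by positivity
  set Φ := lam * (2 * (E + 1))
  have hm : 0 < lam * exp (-1 - E) := by positivity
  refine ⟨min b (lam * exp (-1 - E) / 2), Φ, max B (V + 1),
    2 * lam * (Φ + lam) + 2 * (1 + V ^ 2),
    ⟨lt_min hb (half_pos hm), hΦ, by positivity, fun {φ v} hφ hle ↦ ?_⟩,
    min_le_left _ _, le_max_left _ _⟩
  have hheight := heightPotential_nonneg (by linarith : 0 ≤ Q) hlam hφ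
  have hslope := slopePotential_nonneg lam v
  unfold lyapunov at hle ⊢
  obtain ⟨hφm, hφΦ⟩ := mem_Icc_of_heightPotential_le hQ hlam hφ (by linarith : _ ≤ E)
  have hvV : |v| ≤ V :=
    (abs_le_of_slopePotential_le hlam.le (by linarith)).trans (le_max_right _ _)
  refine ⟨(min_le_right _ _).trans_lt (by linarith), hφΦ,
    lt_max_of_lt_right (by linarith), ?_⟩
  have hφsq := sq_sub_le_mul_heightPotential hQ hlam hφ hφΦ
  have hvsq := le_slopePotential ((abs_of_pos hlam).trans_le (le_max_left _ _)) hvV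
  rw [div_le_iff₀ (by positivity)] at hvsq
  have hcross : 0 ≤ 2 * (1 + V ^ 2) * heightPotential Q lam φ +
      2 * lam * (Φ + lam) * slopePotential lam v := by positivity
  linarith

theorem lyapunovRate_le_neg_half_mul {Φ : ℝ} (hP : 1 ≤ P) (hQ : 0 ≤ Q) (hlam : 0 < lam)
    (hφ : 0 < φ) (hΦ : φ ≤ Φ) (hs : 0 ≤ s) (hs₂ : s ≤ 1 / 2) (hsΦ : s ≤ Q / (lam * Φ)) :
    lyapunovRate P Q lam s φ v ≤ -(1 / 2) * lyapunov Q lam φ v := by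
  have hupper := lyapunov_le (v := v) hQ hlam hφ
  have hS : s * (φ - lam) ^ 2 ≤ Q * (φ - lam) ^ 2 / (lam * φ) := calc
    _ ≤ Q / (lam * φ) * (φ - lam) ^ 2 := by
      gcongr
      exact hsΦ.trans (by gcongr)
    _ = _ := by ring
  have hcross : s / 2 * ((v - lam) * (v - φ)) ≤
      s / 2 * (3 / 2 * (v - lam) ^ 2 + (φ - lam) ^ 2 / 2) := by
    gcongr
    nlinarith [sq_nonneg ((v - lam) + (φ - lam))]
  have hsv : s * (v - lam) ^ 2 ≤ 1 / 2 * (v - lam) ^ 2 := by gcongr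
  have hPv : 1 * (v - lam) ^ 2 ≤ P * (v - lam) ^ 2 := by gcongr
  have hS₀ : 0 ≤ s * (φ - lam) ^ 2 := by positivity
  have hv₀ : 0 ≤ (v - lam) ^ 2 := sq_nonneg _
  unfold lyapunovRate
  linarith

theorem lyapunovRate_le_mul {M b : ℝ} (hP : 0 ≤ P) (hQ : 0 ≤ Q) (hlam : 0 < lam) (hφ : 0 < φ)
    (hs : 0 ≤ s) (hsb : s ≤ b)
    (hM : (φ - lam) ^ 2 + (v - lam) ^ 2 ≤ M * lyapunov Q lam φ v) :
    lyapunovRate P Q lam s φ v ≤ b * M * lyapunov Q lam φ v := by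
  have hb : 0 ≤ b := hs.trans hsb
  have hcross : (v - lam) * (v - φ) ≤ 2 * ((φ - lam) ^ 2 + (v - lam) ^ 2) := by
    nlinarith [sq_nonneg ((v - lam) + (φ - lam)), sq_nonneg (φ - lam), sq_nonneg (v - lam)]
  have hheight : 0 ≤ Q * (φ - lam) ^ 2 / (lam * φ) := by positivity
  have hslope : 0 ≤ P * (v - lam) ^ 2 := by positivity
  calc lyapunovRate P Q lam s φ v ≤ s / 2 * ((v - lam) * (v - φ)) := by
        unfold lyapunovRate
        linarith
    _ ≤ s / 2 * (2 * ((φ - lam) ^ 2 + (v - lam) ^ 2)) := by gcongr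
    _ = s * ((φ - lam) ^ 2 + (v - lam) ^ 2) := by ring
    _ ≤ b * (M * lyapunov Q lam φ v) := by gcongr
    _ = _ := (mul_assoc _ _ _).symm

end Lyapunov

section LogTrajectory

variable {P Q lam a τ₀ m W E Φ M : ℝ} {φ v : ℝ → ℝ}

theorem hasDerivAt_lyapunov {r τ : ℝ} (hlam : 0 < lam) (hQ : Q = P * lam ^ 2) (hφ : 0 < φ τ)
    (hdφ : HasDerivAt φ (v τ - φ τ) τ)
    (hdv : HasDerivAt v
      ((1 + v τ ^ 2) * (Q / φ τ - P * v τ + r ^ 2 / 2 * (v τ - φ τ))) τ) :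
    HasDerivAt (fun x ↦ lyapunov Q lam (φ x) (v x))
      (lyapunovRate P Q lam (r ^ 2) (φ τ) (v τ)) τ := by
  refine (((hasDerivAt_heightPotential hlam hφ).comp τ hdφ).add
    ((hasDerivAt_slopePotential lam (v τ)).comp τ hdv)).congr_deriv ?_
  rw [lyapunovRate, hQ]
  field_simp
  ring

/-- The self-shrinker equation in logarithmic variables `r = a * exp τ`, `φ = u / r`, `v = u'`.
The equation for `v` is only required after the time `τ₀`, in the region `|v| < W`, `m < φ`. -/
structure IsLogTrajectory (P Q a τ₀ m W : ℝ) (φ v : ℝ → ℝ) : Prop where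
  continuous_v : Continuous v
  hasDerivAt_φ : ∀ τ, HasDerivAt φ (v τ - φ τ) τ
  hasDerivAt_v : ∀ {τ}, τ₀ ≤ τ → |v τ| < W → m < φ τ → HasDerivAt v
    ((1 + v τ ^ 2) * (Q / φ τ - P * v τ + (a * exp τ) ^ 2 / 2 * (v τ - φ τ))) τ

namespace IsLogTrajectory

variable {s t κ : ℝ}

theorem continuous_φ (h : IsLogTrajectory P Q a τ₀ m W φ v) : Continuous φ :=
  continuous_iff_continuousAt.2 fun τ ↦ (h.hasDerivAt_φ τ).continuousAt

theorem continuousOn_lyapunov (h : IsLogTrajectory P Q a τ₀ m W φ v) (hlam : 0 < lam)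
    (hφ : ∀ x ∈ Set.Icc s t, 0 < φ x) :
    ContinuousOn (fun x ↦ lyapunov Q lam (φ x) (v x)) (Set.Icc s t) := by
  intro x hx
  have hheight : ContinuousAt (fun x ↦ heightPotential Q lam (φ x)) x :=
    (hasDerivAt_heightPotential hlam (hφ x hx)).continuousAt.comp h.continuous_φ.continuousAt
  have hslope : ContinuousAt (fun x ↦ slopePotential lam (v x)) x :=
    (hasDerivAt_slopePotential lam (v x)).continuousAt.comp h.continuous_v.continuousAt
  exact (hheight.add hslope).continuousWithinAt

theorem lyapunov_le_mul_exp (h : IsLogTrajectory P Q a τ₀ m W φ v)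
    (htrap : IsLyapunovTrap Q lam E m Φ W M) (hlam : 0 < lam) (hQ : Q = P * lam ^ 2)
    (hs : τ₀ ≤ s) (hst : s ≤ t) (hφ : ∀ x ∈ Set.Icc s t, 0 < φ x)
    (hE : ∀ x ∈ Set.Ioo s t, lyapunov Q lam (φ x) (v x) ≤ E)
    (hrate : ∀ x ∈ Set.Icc s t, 0 < φ x → lyapunov Q lam (φ x) (v x) ≤ E →
      lyapunovRate P Q lam ((a * exp x) ^ 2) (φ x) (v x) ≤ κ * lyapunov Q lam (φ x) (v x)) :
    lyapunov Q lam (φ t) (v t) ≤ lyapunov Q lam (φ s) (v s) * exp (κ * (t - s)) := by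
  refine le_mul_exp_of_hasDerivAt_le (f := fun x ↦ lyapunov Q lam (φ x) (v x)) hst
    (h.continuousOn_lyapunov hlam hφ) (fun x hx ↦ ?_) fun x hx ↦
    hrate x (Set.Ioo_subset_Icc_self hx) (hφ x (Set.Ioo_subset_Icc_self hx)) (hE x hx)
  have hφx := hφ x (Set.Ioo_subset_Icc_self hx)
  obtain ⟨hm, -, hW, -⟩ := htrap.bounds hφx (hE x hx)
  exact hasDerivAt_lyapunov hlam hQ hφx (h.hasDerivAt_φ x)
    (h.hasDerivAt_v (hs.trans hx.1.le) hW hm)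

theorem lyapunov_lt_of_pos (h : IsLogTrajectory P Q a τ₀ m W φ v)
    (htrap : IsLyapunovTrap Q lam E m Φ W M) (hlam : 0 < lam) (hQ : Q = P * lam ^ 2)
    (hs : τ₀ ≤ s) (hst : s ≤ t) (hφ : ∀ x ∈ Set.Icc s t, 0 < φ x)
    (hrate : ∀ x ∈ Set.Icc s t, 0 < φ x → lyapunov Q lam (φ x) (v x) ≤ E →
      lyapunovRate P Q lam ((a * exp x) ^ 2) (φ x) (v x) ≤ κ * lyapunov Q lam (φ x) (v x))
    (hlt : ∀ x ∈ Set.Icc s t, lyapunov Q lam (φ s) (v s) * exp (κ * (x - s)) < E) :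
    lyapunov Q lam (φ t) (v t) < E := by
  by_contra! hcon
  have hinit : lyapunov Q lam (φ s) (v s) < E := by simpa using hlt s (Set.left_mem_Icc.2 hst)
  obtain ⟨x, hx, hLx, hbelow⟩ :=
    exists_first_hit hst (h.continuousOn_lyapunov hlam hφ) hinit hcon
  have hsub : Set.Icc s x ⊆ Set.Icc s t := Set.Icc_subset_Icc_right hx.2
  have hle := h.lyapunov_le_mul_exp htrap hlam hQ hs hx.1.le (fun y hy ↦ hφ y (hsub hy))
    (fun y hy ↦ (hbelow y ⟨hy.1.le, hy.2⟩).le) fun y hy ↦ hrate y (hsub hy)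
  exact (hLx.symm.trans_le hle).not_gt (hlt x ⟨hx.1.le, hx.2⟩)

theorem lt_φ_and_lyapunov_le (h : IsLogTrajectory P Q a τ₀ m W φ v)
    (htrap : IsLyapunovTrap Q lam E m Φ W M) (hlam : 0 < lam) (hQ : Q = P * lam ^ 2)
    (hs : τ₀ ≤ s) (hst : s ≤ t) (hφs : m < φ s)
    (hrate : ∀ x ∈ Set.Icc s t, 0 < φ x → lyapunov Q lam (φ x) (v x) ≤ E →
      lyapunovRate P Q lam ((a * exp x) ^ 2) (φ x) (v x) ≤ κ * lyapunov Q lam (φ x) (v x))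
    (hlt : ∀ x ∈ Set.Icc s t, lyapunov Q lam (φ s) (v s) * exp (κ * (x - s)) < E) :
    m < φ t ∧ lyapunov Q lam (φ t) (v t) ≤ lyapunov Q lam (φ s) (v s) * exp (κ * (t - s)) := by
  have hbounded {y : ℝ} (hy : y ∈ Set.Icc s t) (hφ : ∀ x ∈ Set.Icc s y, 0 < φ x) :
      lyapunov Q lam (φ y) (v y) < E :=
    have hsub : Set.Icc s y ⊆ Set.Icc s t := Set.Icc_subset_Icc_right hy.2
    h.lyapunov_lt_of_pos htrap hlam hQ hs hy.1 hφ (fun x hx ↦ hrate x (hsub hx))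
      fun x hx ↦ hlt x (hsub hx)
  have hφ : ∀ y ∈ Set.Icc s t, m < φ y := by
    intro y hy
    by_contra! hcon
    obtain ⟨x, hx, hφx, habove⟩ := exists_first_hit (f := fun x ↦ -φ x) hy.1
      h.continuous_φ.neg.continuousOn (neg_lt_neg hφs) (neg_le_neg hcon)
    have hpos : ∀ z ∈ Set.Icc s x, 0 < φ z := by
      intro z hz
      have hm := htrap.m_pos
      rcases hz.2.lt_or_eq with hlt | rfl
      · linarith [habove z ⟨hz.1, hlt⟩]
      · linarith
    have hLx := hbounded ⟨hx.1.le, hx.2.trans hy.2⟩ hpos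
    linarith [(htrap.bounds (hpos x ⟨hx.1.le, le_rfl⟩) hLx.le).1]
  have hpos : ∀ y ∈ Set.Icc s t, 0 < φ y := fun y hy ↦ htrap.m_pos.trans (hφ y hy)
  refine ⟨hφ t (Set.right_mem_Icc.2 hst), h.lyapunov_le_mul_exp htrap hlam hQ hs hst hpos
    (fun y hy ↦ ?_) hrate⟩
  exact (hbounded (Set.Ioo_subset_Icc_self hy) fun x hx ↦ hpos x ⟨hx.1, hx.2.trans hy.2.le⟩).le

theorem inner_decay {r₀ : ℝ} (h : IsLogTrajectory P Q a τ₀ m W φ v)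
    (htrap : IsLyapunovTrap Q lam E m Φ W M) (hP : 1 ≤ P) (hlam : 0 < lam)
    (hQ : Q = P * lam ^ 2) (ha : 0 < a) (hr₀ : r₀ ^ 2 ≤ 1 / 2) (hr₀Φ : r₀ ^ 2 ≤ Q / (lam * Φ))
    (hφ₀ : m < φ τ₀) (hE : lyapunov Q lam (φ τ₀) (v τ₀) < E) {τ : ℝ} (hτ : τ₀ ≤ τ)
    (hτr : a * exp τ ≤ r₀) : m < φ τ ∧
      lyapunov Q lam (φ τ) (v τ) ≤ lyapunov Q lam (φ τ₀) (v τ₀) * exp (-(1 / 2) * (τ - τ₀)) := by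
  have hQ₀ : 0 ≤ Q := by
    rw [hQ]
    positivity
  refine h.lt_φ_and_lyapunov_le htrap hlam hQ le_rfl hτ hφ₀ (fun x hx hφx hLx ↦ ?_) fun x hx ↦ ?_
  · obtain ⟨-, hΦ, -, -⟩ := htrap.bounds hφx hLx
    have hr : (a * exp x) ^ 2 ≤ r₀ ^ 2 := by
      gcongr
      exact le_trans (by gcongr; exact hx.2) hτr
    exact lyapunovRate_le_neg_half_mul hP hQ₀ hlam hφx hΦ (sq_nonneg _) (hr.trans hr₀)
      (hr.trans hr₀Φ)
  · have hexp : exp (-(1 / 2) * (x - τ₀)) ≤ 1 := exp_le_one_iff.2 (by linarith [hx.1])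
    exact (mul_le_of_le_one_right (lyapunov_nonneg hQ₀ hlam (htrap.m_pos.trans hφ₀))
      hexp).trans_lt hE

theorem outer_growth {R e : ℝ} (h : IsLogTrajectory P Q a τ₀ m W φ v)
    (htrap : IsLyapunovTrap Q lam E m Φ W M) (hP : 0 ≤ P) (hlam : 0 < lam)
    (hQ : Q = P * lam ^ 2) (ha : 0 < a) (hs : τ₀ ≤ s) (hφs : m < φ s)
    (hE : lyapunov Q lam (φ s) (v s) * exp (R ^ 2 * M * (log (R / a) - s)) ≤ e) (he : e < E)
    {τ : ℝ} (hτ : s ≤ τ) (hτR : a * exp τ ≤ R) : m < φ τ ∧ lyapunov Q lam (φ τ) (v τ) ≤ e := by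
  have hM := htrap.M_pos
  have hQ₀ : 0 ≤ Q := by
    rw [hQ]
    positivity
  have hR : 0 < R := hτR.trans_lt' (by positivity)
  have hτlog : τ ≤ log (R / a) := by
    rwa [le_log_iff_exp_le (by positivity), le_div_iff₀' ha]
  have hL₀ := lyapunov_nonneg (v := v s) hQ₀ hlam (htrap.m_pos.trans hφs)
  have hgrowth {x : ℝ} (hx : x ≤ τ) :
      lyapunov Q lam (φ s) (v s) * exp (R ^ 2 * M * (x - s)) ≤ e := by
    refine le_trans ?_ hE
    gcongr
    exact hx.trans hτlog
  refine And.imp_right (·.trans (hgrowth le_rfl)) (h.lt_φ_and_lyapunov_le htrap hlam hQ hs hτ hφs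
    (fun x hx hφx hLx ↦ ?_) fun x hx ↦ (hgrowth hx.2).trans_lt he)
  obtain ⟨-, -, -, hdist⟩ := htrap.bounds hφx hLx
  have hr : (a * exp x) ^ 2 ≤ R ^ 2 := by
    gcongr
    exact le_trans (by gcongr; exact hx.2) hτR
  exact lyapunovRate_le_mul hP hQ₀ hlam hφx (sq_nonneg _) hr hdist

end IsLogTrajectory

end LogTrajectory

/-! ### The shooting family -/

section ConeLinearization

variable {P Q lam φ v s A B z y : ℝ}

/-- The coefficient `A` in the planar system `z' = y`, `y' = -A z + B y` for the deviation
`z = φ - lam`, `y = v - φ` of a self-shrinker from the cone. -/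
noncomputable def coneStiffness (P lam φ v : ℝ) : ℝ := (1 + v ^ 2) * P * (1 + lam / φ)

/-- The coefficient `B` in the planar system `z' = y`, `y' = -A z + B y` for the deviation from
the cone, where `s = r ^ 2`. -/
noncomputable def coneDamping (P s v : ℝ) : ℝ := (1 + v ^ 2) * (s / 2 - P) - 1

theorem rotation_form_le (hB : B ^ 2 ≤ 49) (hA : B ^ 2 / 4 + 1 / 2 ≤ A) (z y : ℝ) :
    -A * z ^ 2 + B * (z * y) - y ^ 2 ≤ -(1 / 52) * (z ^ 2 + y ^ 2) := by
  nlinarith [sq_nonneg (51 / 52 * y - B / 2 * z), sq_nonneg z,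
    mul_nonneg (sub_nonneg.2 hB) (sq_nonneg z), mul_nonneg (sub_nonneg.2 hA) (sq_nonneg z)]

theorem rotation_form_le_of_close {n : ℝ} (h₂ : 2 ≤ n) (h₅ : n ≤ 5) (hA : |A - 2 * n| < 1 / 10)
    (hB : |B + (n + 1)| < 1 / 10) (z y : ℝ) :
    -A * z ^ 2 + B * (z * y) - y ^ 2 ≤ -(1 / 52) * (z ^ 2 + y ^ 2) := by
  rw [abs_lt] at hA hB
  -- the cone is a focus: `(n + 1) ^ 2 < 8 * n` for `2 ≤ n ≤ 5`
  have hfocus : (n + 1) ^ 2 - 8 * n ≤ -4 := by nlinarith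
  have hBsq : B ^ 2 ≤ (n + 1) ^ 2 + 13 / 10 := by nlinarith
  exact rotation_form_le (by nlinarith) (by linarith) z y

theorem exists_rotation_form_le (hlam : 0 < lam) (hQ : Q = P * lam ^ 2) (h₂ : 2 ≤ P + Q)
    (h₅ : P + Q ≤ 5) : ∃ ε > 0, ∀ φ v s : ℝ, |φ - lam| < ε → |v - lam| < ε → |s| < ε → ∀ z y : ℝ,
      -coneStiffness P lam φ v * z ^ 2 + coneDamping P s v * (z * y) - y ^ 2 ≤
        -(1 / 52) * (z ^ 2 + y ^ 2) := by
  have hA : ContinuousAt (fun x : ℝ × ℝ × ℝ ↦ coneStiffness P lam x.1 x.2.1) (lam, lam, 0) :=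
    ContinuousAt.mul (by fun_prop)
      (continuousAt_const.add (continuousAt_const.div continuousAt_fst hlam.ne'))
  have hB : ContinuousAt (fun x : ℝ × ℝ × ℝ ↦ coneDamping P x.2.2 x.2.1) (lam, lam, 0) := by
    unfold coneDamping
    fun_prop
  have hA₀ : coneStiffness P lam lam lam = 2 * (P + Q) := by
    rw [coneStiffness, div_self hlam.ne', hQ]
    ring
  have hB₀ : coneDamping P 0 lam = -(P + Q + 1) := by
    rw [coneDamping, hQ]
    ring
  obtain ⟨ε₁, hε₁, hA⟩ := Metric.continuousAt_iff.1 hA (1 / 10) (by norm_num)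
  obtain ⟨ε₂, hε₂, hB⟩ := Metric.continuousAt_iff.1 hB (1 / 10) (by norm_num)
  refine ⟨min ε₁ ε₂, lt_min hε₁ hε₂, fun φ v s hφ hv hs ↦ ?_⟩
  have hdist : dist ((φ, v, s) : ℝ × ℝ × ℝ) (lam, lam, 0) < min ε₁ ε₂ := by
    simp only [Prod.dist_eq, dist_eq, sub_zero]
    exact max_lt hφ (max_lt hv hs)
  replace hA := hA (hdist.trans_le (min_le_left _ _))
  replace hB := hB (hdist.trans_le (min_le_right _ _))
  rw [dist_eq, hA₀] at hA
  rw [dist_eq, hB₀, sub_neg_eq_add] at hB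
  exact rotation_form_le_of_close h₂ h₅ hA hB

end ConeLinearization

theorem exists_mul_exp_neg_half_le (E C : ℝ) {e : ℝ} (he : 0 < e) :
    ∃ x ≥ 0, E * (exp (-(1 / 2) * x) * C) ≤ e := by
  have hexp : Tendsto (fun x : ℝ ↦ exp (-(1 / 2) * x)) atTop (nhds 0) :=
    tendsto_exp_atBot.comp (tendsto_id.const_mul_atTop_of_neg (by norm_num))
  have hlim : Tendsto (fun x ↦ E * (exp (-(1 / 2) * x) * C)) atTop (nhds 0) := by
    simpa using (hexp.mul_const C).const_mul E
  exact ((eventually_ge_atTop 0).and (hlim.eventually_le_const he)).exists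

theorem exists_forall_lyapunov_le {P Q lam τ₀ m W E Φ M E₀ r₀ R e : ℝ}
    (htrap : IsLyapunovTrap Q lam E m Φ W M) (hP : 1 ≤ P) (hlam : 0 < lam) (hQ : Q = P * lam ^ 2)
    (hr₀ : 0 < r₀) (hr₀R : r₀ ≤ R) (hr₀sq : r₀ ^ 2 ≤ 1 / 2) (hr₀Φ : r₀ ^ 2 ≤ Q / (lam * Φ))
    (hE₀ : E₀ < E) (he : 0 < e) (heE : e < E) :
    ∃ x ≥ 0, ∀ {a : ℝ} {φ v : ℝ → ℝ}, 0 < a → IsLogTrajectory P Q a τ₀ m W φ v → m < φ τ₀ →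
      lyapunov Q lam (φ τ₀) (v τ₀) ≤ E₀ → a * exp (τ₀ + x) ≤ r₀ → ∀ τ, τ₀ + x ≤ τ →
        a * exp τ ≤ R → m < φ τ ∧ lyapunov Q lam (φ τ) (v τ) ≤ e := by
  have hM := htrap.M_pos
  have hR : 0 < R := hr₀.trans_le hr₀R
  -- the decay over the time `x` has to beat the growth between the radii `r₀` and `R`
  obtain ⟨x, hx, hxe⟩ := exists_mul_exp_neg_half_le E₀ (exp (R ^ 2 * M * log (R / r₀))) he
  refine ⟨x, hx, fun {a φ v} ha h hφ₀ hL₀ har τ hτ hτR ↦ ?_⟩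
  have hL₀' : 0 ≤ lyapunov Q lam (φ τ₀) (v τ₀) :=
    lyapunov_nonneg (by rw [hQ]; positivity) hlam (htrap.m_pos.trans hφ₀)
  have hinner {t : ℝ} (ht : τ₀ + x ≤ t) (htr : a * exp t ≤ r₀) : m < φ t ∧
      lyapunov Q lam (φ t) (v t) * exp (R ^ 2 * M * log (R / r₀)) ≤ e := by
    obtain ⟨hφ, hL⟩ := h.inner_decay htrap hP hlam hQ ha hr₀sq hr₀Φ hφ₀ (hL₀.trans_lt hE₀)
      (by linarith) htr
    refine ⟨hφ, le_trans ?_ hxe⟩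
    rw [← mul_assoc]
    gcongr
    exact hL.trans (mul_le_mul hL₀ (exp_le_exp.2 (by linarith)) (exp_pos _).le (hL₀'.trans hL₀))
  have hlog : 0 ≤ log (R / r₀) := log_nonneg ((one_le_div hr₀).2 hr₀R)
  rcases le_total (a * exp τ) r₀ with hτr | hτr
  · obtain ⟨hφ, hL⟩ := hinner hτ hτr
    refine ⟨hφ, (le_mul_of_one_le_right ?_ (one_le_exp (by positivity))).trans hL⟩
    exact lyapunov_nonneg (by rw [hQ]; positivity) hlam (htrap.m_pos.trans hφ)
  · have hexp : exp (log (r₀ / a)) = r₀ / a := exp_log (by positivity)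
    have hs : τ₀ + x ≤ log (r₀ / a) := by
      rwa [le_log_iff_exp_le (by positivity), le_div_iff₀' ha]
    have hsτ : log (r₀ / a) ≤ τ := by
      rwa [log_le_iff_le_exp (by positivity), div_le_iff₀' ha]
    obtain ⟨hφ, hL⟩ := hinner hs (by rw [hexp, mul_div_cancel₀ _ ha.ne'])
    have hdiff : log (R / a) - log (r₀ / a) = log (R / r₀) := by
      rw [log_div hR.ne' ha.ne', log_div hr₀.ne' ha.ne', log_div hR.ne' hr₀.ne']
      ring
    exact h.outer_growth htrap (by linarith) hlam hQ ha (by linarith) hφ (by rwa [hdiff]) heE hsτ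
      hτR

theorem IsLyapunovTrap.abs_sub_le {Q lam E m Φ W M d φ v : ℝ}
    (htrap : IsLyapunovTrap Q lam E m Φ W M) (hφ : 0 < φ) (hE : lyapunov Q lam φ v ≤ E)
    (hd : 0 ≤ d) (hL : M * lyapunov Q lam φ v ≤ d ^ 2) : |φ - lam| ≤ d ∧ |v - lam| ≤ d := by
  obtain ⟨-, -, -, hdist⟩ := htrap.bounds hφ hE
  exact ⟨abs_le_of_sq_le_sq (by linarith [sq_nonneg (v - lam)]) hd,
    abs_le_of_sq_le_sq (by linarith [sq_nonneg (φ - lam)]) hd⟩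

theorem exists_forall_trapped {P Q lam τ₀ m W E Φ M E₀ r₀ R d : ℝ}
    (htrap : IsLyapunovTrap Q lam E m Φ W M) (hP : 1 ≤ P) (hlam : 0 < lam) (hQ : Q = P * lam ^ 2)
    (hr₀ : 0 < r₀) (hr₀R : r₀ ≤ R) (hr₀sq : r₀ ^ 2 ≤ 1 / 2) (hr₀Φ : r₀ ^ 2 ≤ Q / (lam * Φ))
    (hE₀ : 0 ≤ E₀) (hE : E₀ < E) (hd : 0 < d) :
    ∃ τ₁ ≥ τ₀, ∀ {a : ℝ} {φ v : ℝ → ℝ}, 0 < a → IsLogTrajectory P Q a τ₀ m W φ v → m < φ τ₀ →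
      lyapunov Q lam (φ τ₀) (v τ₀) ≤ E₀ → a * exp τ₁ ≤ r₀ → ∀ τ, τ₀ ≤ τ → a * exp τ ≤ R →
        |v τ| < W ∧ m < φ τ ∧ (τ₁ ≤ τ → |φ τ - lam| ≤ d ∧ |v τ - lam| ≤ d) := by
  have hM := htrap.M_pos
  have hE' : 0 < E := hE₀.trans_lt hE
  obtain ⟨x, hx, H⟩ := exists_forall_lyapunov_le (e := min (d ^ 2 / M) (E / 2)) htrap hP hlam hQ
    hr₀ hr₀R hr₀sq hr₀Φ hE (by positivity) ((min_le_right _ _).trans_lt (half_lt_self hE'))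
  refine ⟨τ₀ + x, le_add_of_nonneg_right hx, fun {a φ v} ha h hφ₀ hL₀ har τ hτ hτR ↦ ?_⟩
  rcases le_or_gt (τ₀ + x) τ with hxτ | hτx
  · obtain ⟨hφ, hL⟩ := H ha h hφ₀ hL₀ har τ hxτ hτR
    rw [le_min_iff, le_div_iff₀' hM] at hL
    have hLE : lyapunov Q lam (φ τ) (v τ) ≤ E := hL.2.trans (half_lt_self hE').le
    have hφ' := htrap.m_pos.trans hφ
    exact ⟨(htrap.bounds hφ' hLE).2.2.1, hφ, fun _ ↦ htrap.abs_sub_le hφ' hLE hd.le hL.1⟩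
  · obtain ⟨hφ, hL⟩ := h.inner_decay htrap hP hlam hQ ha hr₀sq hr₀Φ hφ₀ (hL₀.trans_lt hE) hτ
      (le_trans (by gcongr) har)
    have hexp : exp (-(1 / 2) * (τ - τ₀)) ≤ 1 := exp_le_one_iff.2 (by linarith)
    have hL₀' : 0 ≤ lyapunov Q lam (φ τ₀) (v τ₀) :=
      lyapunov_nonneg (by rw [hQ]; positivity) hlam (htrap.m_pos.trans hφ₀)
    have hLE : lyapunov Q lam (φ τ) (v τ) ≤ E :=
      (hL.trans (mul_le_of_le_one_right hL₀' hexp)).trans (hL₀.trans hE.le)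
    exact ⟨(htrap.bounds (htrap.m_pos.trans hφ) hLE).2.2.1, hφ, fun hxτ ↦ absurd hxτ hτx.not_ge⟩

namespace RescaledProfile

variable {P Q W c a τ : ℝ}

/-- The height `u / r` of the rescaled profile as a function of `τ = log ρ`. -/
noncomputable def φ (X : RescaledProfile P Q W c) (a τ : ℝ) : ℝ := X.U a (exp τ) * exp (-τ)

/-- The slope of the rescaled profile as a function of `τ = log ρ`. -/
noncomputable def v (X : RescaledProfile P Q W c) (a τ : ℝ) : ℝ := X.w a (exp τ)

theorem U_exp (X : RescaledProfile P Q W c) (a τ : ℝ) : X.U a (exp τ) = X.φ a τ * exp τ := by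
  rw [φ, mul_assoc, ← exp_add, neg_add_cancel, exp_zero, mul_one]

theorem continuous_φ (X : RescaledProfile P Q W c) : Continuous (Function.uncurry X.φ) :=
  (X.continuous_U.comp (continuous_fst.prodMk (continuous_exp.comp continuous_snd))).mul
    (by fun_prop)

theorem continuous_v (X : RescaledProfile P Q W c) : Continuous (Function.uncurry X.v) :=
  X.continuous_w.comp (continuous_fst.prodMk (continuous_exp.comp continuous_snd))

theorem hasDerivAt_φ (X : RescaledProfile P Q W c) (a τ : ℝ) :
    HasDerivAt (X.φ a) (X.v a τ - X.φ a τ) τ := by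
  have hexp : exp τ * exp (-τ) = 1 := by rw [← exp_add, add_neg_cancel, exp_zero]
  refine (((X.hasDerivAt_U a (exp τ)).comp τ (hasDerivAt_exp τ)).mul
    (hasDerivAt_neg τ).exp).congr_deriv ?_
  simp only [Function.comp, φ, v]
  linear_combination X.w a (exp τ) * hexp

theorem hasDerivAt_v (X : RescaledProfile P Q W c) (ha : a ^ 2 ≤ 1) (hv : |X.v a τ| < W)
    (hφ : 0 < X.φ a τ) (hc : c < X.φ a τ * exp τ) :
    HasDerivAt (X.v a) ((1 + X.v a τ ^ 2) * (Q / X.φ a τ - P * X.v a τ +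
      (a * exp τ) ^ 2 / 2 * (X.v a τ - X.φ a τ))) τ := by
  rw [← U_exp] at hc
  refine ((X.hasDerivAt_w ha (exp_pos τ) hv hc).comp τ (hasDerivAt_exp τ)).congr_deriv ?_
  rw [U_exp]
  unfold v
  field_simp
  ring

theorem isLogTrajectory {τ₀ m : ℝ} (X : RescaledProfile P Q W c) (ha : a ^ 2 ≤ 1) (hm : 0 ≤ m)
    (hc : c ≤ m * exp τ₀) : IsLogTrajectory P Q a τ₀ m W (X.φ a) (X.v a) where
  continuous_v := X.continuous_v.comp (Continuous.prodMk_right a)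
  hasDerivAt_φ := X.hasDerivAt_φ a
  hasDerivAt_v hτ hv hφ := X.hasDerivAt_v ha hv (hm.trans_lt hφ) <| calc
    c ≤ m * exp τ₀ := hc
    _ < X.φ a _ * exp τ₀ := by gcongr
    _ ≤ X.φ a _ * exp _ := by
      have hφ₀ := hm.trans_lt hφ
      gcongr

theorem φ_mem_Icc_and_abs_v_le (X : RescaledProfile P Q W c) (hP : 0 ≤ P) (hQ : 0 ≤ Q)
    (hW : 1 / 2 < W) (hc : c < 3 / 4) (ha : a ^ 2 ≤ 1) (hτ : exp τ = 1 / (10 * (1 + 2 * Q))) :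
    X.φ a τ ∈ Set.Icc (1 / (2 * exp τ)) (2 / exp τ) ∧ |X.v a τ| ≤ 1 / 2 := by
  obtain ⟨hw, hU⟩ := X.abs_w_le_and_abs_U_sub_one_le hP hQ hW hc ha ⟨(exp_pos τ).le, hτ.le⟩
  rw [U_exp, abs_le] at hU
  refine ⟨⟨?_, ?_⟩, hw⟩
  · rw [div_le_iff₀ (by positivity)]
    linarith
  · rw [le_div_iff₀ (by positivity)]
    linarith

end RescaledProfile

/-- A bound for the Lyapunov function in the box `1 / (2 ρ) ≤ φ ≤ 2 / ρ`, `|v| ≤ 1 / 2`, which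
contains all rescaled profiles at the small radius `ρ`. -/
noncomputable def initialEnergy (Q lam ρ : ℝ) : ℝ :=
  Q * (2 / ρ + lam) ^ 2 / (lam * (1 / (2 * ρ))) + (1 / 2 + lam) ^ 2 / 2

theorem lyapunov_le_initialEnergy {Q lam φ v ρ : ℝ} (hQ : 0 ≤ Q) (hlam : 0 < lam) (hρ : 0 < ρ)
    (hφ : φ ∈ Set.Icc (1 / (2 * ρ)) (2 / ρ)) (hv : |v| ≤ 1 / 2) :
    lyapunov Q lam φ v ≤ initialEnergy Q lam ρ := by
  obtain ⟨hv₁, hv₂⟩ := abs_le.1 hv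
  have hρ' : 0 < 1 / (2 * ρ) := by positivity
  have hφ₀ : 0 < φ := hρ'.trans_le hφ.1
  have hφsq : (φ - lam) ^ 2 ≤ (2 / ρ + lam) ^ 2 := by
    have hφ₂ := hφ.2
    exact sq_le_sq' (by linarith) (by linarith)
  have hvsq : (v - lam) ^ 2 ≤ (1 / 2 + lam) ^ 2 := sq_le_sq' (by linarith) (by linarith)
  refine (lyapunov_le hQ hlam hφ₀).trans ?_
  unfold initialEnergy
  gcongr
  exact hφ.1

/-- A family of rescaled profiles `X.U a` together with the constants that control it: for
`0 < a ≤ δ` the profile solves the equation at least up to the radius `R`, and from the time `τ₁`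
on it is so close to the cone that it rotates around it as long as `r ≤ r₀`. -/
structure ShootingFamily (P Q lam R W c : ℝ) extends RescaledProfile P Q W c where
  τ₀ : ℝ
  τ₁ : ℝ
  r₀ : ℝ
  δ : ℝ
  m : ℝ
  d : ℝ
  δ_pos : 0 < δ
  δ_le_one : δ ≤ 1
  r₀_pos : 0 < r₀
  r₀_le : r₀ ≤ R
  sq_r₀_le : r₀ ^ 2 ≤ d
  m_pos : 0 < m
  m_lt : m < lam / 2
  le_W : 3 / 2 * lam + 2 ≤ W
  c_pos : 0 < c
  c_le : c ≤ m * exp τ₀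
  τ₀_le_τ₁ : τ₀ ≤ τ₁
  δ_mul_exp_le : δ * exp τ₁ ≤ r₀
  d_le : d ≤ lam / 4
  two_mul_d_lt : 2 * d < 1 / R
  rotation_form_le : ∀ {φ v s}, |φ - lam| ≤ d → |v - lam| ≤ d → |s| ≤ d → ∀ z y : ℝ,
    -coneStiffness P lam φ v * z ^ 2 + coneDamping P s v * (z * y) - y ^ 2 ≤
      -(1 / 52) * (z ^ 2 + y ^ 2)
  initial : ∀ {a ρ}, a ∈ Set.Ioc 0 δ → ρ ∈ Set.Icc 0 (exp τ₀) →
    |w a ρ| < W ∧ c < U a ρ ∧ lam * ρ < U a ρ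
  valid : ∀ {a τ}, a ∈ Set.Ioc 0 δ → τ₀ ≤ τ → a * exp τ ≤ R →
    |toRescaledProfile.v a τ| < W ∧ m < toRescaledProfile.φ a τ
  near_cone : ∀ {a τ}, a ∈ Set.Ioc 0 δ → τ₁ ≤ τ → a * exp τ ≤ R →
    |toRescaledProfile.φ a τ - lam| ≤ d ∧ |toRescaledProfile.v a τ - lam| ≤ d

theorem RescaledProfile.initial_bounds {P Q lam W c a ρ : ℝ} (X : RescaledProfile P Q W c)
    (hP : 0 ≤ P) (hQ : 1 ≤ Q) (hlam : lam ≤ 2) (hW : 1 / 2 < W) (hc : c ≤ 1 / 4) (ha : a ^ 2 ≤ 1)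
    (hρ : ρ ∈ Set.Icc 0 (1 / (10 * (1 + 2 * Q)))) :
    |X.w a ρ| < W ∧ c < X.U a ρ ∧ lam * ρ < X.U a ρ := by
  obtain ⟨hw, hU⟩ := X.abs_w_le_and_abs_U_sub_one_le hP (by linarith) hW (by linarith) ha hρ
  have hρ₂ := (le_div_iff₀ (by positivity)).1 hρ.2
  have hlamρ : lam * ρ ≤ 1 / 5 := by nlinarith [hρ.1]
  rw [abs_le] at hU
  exact ⟨hw.trans_lt hW, by linarith, by linarith⟩

theorem exists_shootingFamily_of_trap {P Q lam R τ₀ m Φ W M r₀ d : ℝ} (hP : 1 ≤ P) (hQ₁ : 1 ≤ Q)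
    (hlam : 0 < lam) (hlam₂ : lam ≤ 2) (hQ : Q = P * lam ^ 2)
    (hτ₀ : exp τ₀ = 1 / (10 * (1 + 2 * Q)))
    (htrap : IsLyapunovTrap Q lam (initialEnergy Q lam (exp τ₀) + 1) m Φ W M)
    (hmlam : m < lam / 2) (hmφ : m < 1 / (2 * exp τ₀)) (hW : 3 / 2 * lam + 2 ≤ W)
    (hr₀ : 0 < r₀) (hr₀R : r₀ ≤ R) (hr₀sq : r₀ ^ 2 ≤ 1 / 2) (hr₀Φ : r₀ ^ 2 ≤ Q / (lam * Φ))
    (hr₀d : r₀ ^ 2 ≤ d) (hd : 0 < d) (hdlam : d ≤ lam / 4) (hdR : 2 * d < 1 / R)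
    (hrot : ∀ {φ v s}, |φ - lam| ≤ d → |v - lam| ≤ d → |s| ≤ d → ∀ z y : ℝ,
      -coneStiffness P lam φ v * z ^ 2 + coneDamping P s v * (z * y) - y ^ 2 ≤
        -(1 / 52) * (z ^ 2 + y ^ 2)) :
    ∃ c, Nonempty (ShootingFamily P Q lam R W c) := by
  have hP₀ : 0 ≤ P := by linarith
  have hQ₀ : 0 ≤ Q := by linarith
  have hm := htrap.m_pos
  have hE₀ : 0 ≤ initialEnergy Q lam (exp τ₀) := by
    unfold initialEnergy
    positivity
  obtain ⟨τ₁, hτ₁, H⟩ := exists_forall_trapped htrap hP hlam hQ hr₀ hr₀R hr₀sq hr₀Φ hE₀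
    (lt_add_one _) hd (τ₀ := τ₀)
  set c := min (1 / 4) (m * exp τ₀)
  have hc : c ≤ 1 / 4 := min_le_left _ _
  have hc₀ : 0 < c := by positivity
  have hW₁ : 1 / 2 < W := by linarith
  obtain ⟨X⟩ := RescaledProfile.nonempty (P := P) (Q := Q) hP₀ (by linarith : 0 < W) hc₀
  set δ := min 1 (r₀ / exp τ₁)
  have hδ : δ * exp τ₁ ≤ r₀ := (le_div_iff₀ (exp_pos _)).1 (min_le_right _ _)
  have hsq {a : ℝ} (ha : a ∈ Set.Ioc 0 δ) : a ^ 2 ≤ 1 :=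
    pow_le_one₀ ha.1.le (ha.2.trans (min_le_left _ _))
  have hX {a τ : ℝ} (ha : a ∈ Set.Ioc 0 δ) (hτ : τ₀ ≤ τ) (hτR : a * exp τ ≤ R) :
      |X.v a τ| < W ∧ m < X.φ a τ ∧ (τ₁ ≤ τ → |X.φ a τ - lam| ≤ d ∧ |X.v a τ - lam| ≤ d) := by
    obtain ⟨hφ, hv⟩ := X.φ_mem_Icc_and_abs_v_le hP₀ hQ₀ hW₁ (by linarith) (hsq ha) hτ₀
    exact H ha.1 (X.isLogTrajectory (hsq ha) hm.le (min_le_right _ _)) (hmφ.trans_le hφ.1)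
      (lyapunov_le_initialEnergy hQ₀ hlam (exp_pos τ₀) hφ hv)
      ((mul_le_mul_of_nonneg_right ha.2 (exp_pos _).le).trans hδ) τ hτ hτR
  exact ⟨c, ⟨{
    toRescaledProfile := X
    τ₀, τ₁, r₀, δ, m, d
    δ_pos := by positivity
    δ_le_one := min_le_left _ _
    r₀_pos := hr₀
    r₀_le := hr₀R
    sq_r₀_le := hr₀d
    m_pos := hm
    m_lt := hmlam
    le_W := hW
    c_pos := hc₀
    c_le := min_le_right _ _
    τ₀_le_τ₁ := hτ₁
    δ_mul_exp_le := hδ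
    d_le := hdlam
    two_mul_d_lt := hdR
    rotation_form_le := hrot
    initial := fun ha hρ ↦ X.initial_bounds hP₀ hQ₁ hlam₂ hW₁ hc (hsq ha) (hτ₀ ▸ hρ)
    valid := fun ha hτ hτR ↦ (hX ha hτ hτR).imp_right And.left
    near_cone := fun ha hτ hτR ↦ (hX ha (hτ₁.trans hτ) hτR).2.2 hτ }⟩⟩

theorem exists_shootingFamily {P Q lam R : ℝ} (hP : 1 ≤ P) (hQ₁ : 1 ≤ Q) (hlam : 0 < lam)
    (hlam₂ : lam ≤ 2) (hQ : Q = P * lam ^ 2) (hR : 1 ≤ R) (hPQ : P + Q ≤ 5) :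
    ∃ W c, Nonempty (ShootingFamily P Q lam R W c) := by
  obtain ⟨τ₀, hτ₀⟩ : ∃ τ₀, exp τ₀ = 1 / (10 * (1 + 2 * Q)) := ⟨_, exp_log (by positivity)⟩
  obtain ⟨m, Φ, W, M, htrap, hmb, hW⟩ := exists_isLyapunovTrap
    (E := initialEnergy Q lam (exp τ₀) + 1) (b := min (lam / 4) (1 / (4 * exp τ₀)))
    (B := 3 / 2 * lam + 2) hQ₁ hlam (by unfold initialEnergy; positivity) (by positivity)
  rw [le_min_iff] at hmb
  have hΦ := htrap.Φ_pos
  obtain ⟨ε, hε, hrot⟩ := exists_rotation_form_le hlam hQ (by linarith) hPQ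
  have hd : 0 < min (lam / 4) (min (1 / (4 * R)) (ε / 2)) := by positivity
  obtain ⟨hdlam, hdR, hdε⟩ : _ ∧ _ ∧ _ := by
    simpa only [le_min_iff] using le_refl (min (lam / 4) (min (1 / (4 * R)) (ε / 2)))
  set d := min (lam / 4) (min (1 / (4 * R)) (ε / 2))
  have hb : 0 < min (1 / 2) (min (Q / (lam * Φ)) d) := by positivity
  set b := min (1 / 2) (min (Q / (lam * Φ)) d)
  obtain ⟨hb₁, hbΦ, hbd⟩ : b ≤ 1 / 2 ∧ b ≤ Q / (lam * Φ) ∧ b ≤ d := by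
    exact ⟨min_le_left _ _, le_min_iff.1 (min_le_right _ _)⟩
  have hsq : b ^ 2 ≤ b := by nlinarith
  refine ⟨W, exists_shootingFamily_of_trap (r₀ := b) (d := d) hP hQ₁ hlam hlam₂ hQ hτ₀ htrap
    (by linarith) (hmb.2.trans_lt (by gcongr; norm_num)) hW hb (by linarith) (by linarith)
    (hsq.trans hbΦ) (hsq.trans hbd) hd hdlam ?_ fun hφ hv hs ↦ hrot _ _ _ (by linarith)
    (by linarith) (by linarith)⟩
  calc 2 * d ≤ 2 * (1 / (4 * R)) := by gcongr
    _ < 1 / R := by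
      field_simp
      norm_num

/-! ### Rotation in the plane -/

section PlanarSystem

/-- A solution on `[s, t]` of the planar system `z' = y`, `y' = -A z + B y`. The deviations
`z = φ - lam` and `y = v - φ` of a profile from the cone solve such a system, with
`A = coneStiffness` and `B = coneDamping`. -/
structure IsPlanarTrajectory (A B z y : ℝ → ℝ) (s t : ℝ) : Prop where
  hasDerivAt_z : ∀ x ∈ Set.Icc s t, HasDerivAt z (y x) x
  hasDerivAt_y : ∀ x ∈ Set.Icc s t, HasDerivAt y (-A x * z x + B x * y x) x

/-- The derivative of the polar angle of `(z, y)` along `z' = y`, `y' = -A z + B y`. -/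
noncomputable def angularRate (A B z y : ℝ) : ℝ :=
  (z * (-A * z + B * y) - y * y) / (z ^ 2 + y ^ 2)

theorem angularRate_zero_left {y : ℝ} (A B : ℝ) (hy : y ≠ 0) : angularRate A B 0 y = -1 := by
  unfold angularRate
  field_simp
  ring

theorem two_mul_inner_ge {a b α β z y : ℝ} (ha : |a| ≤ α) (hb : |b| ≤ β) :
    -(1 + α + 2 * β) * (z ^ 2 + y ^ 2) ≤ 2 * z * y + 2 * y * (-a * z + b * y) := by
  obtain ⟨ha₁, ha₂⟩ := abs_le.1 ha
  have hb₁ := neg_le_of_abs_le hb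
  have hβ : 0 ≤ β := (abs_nonneg b).trans hb
  have hdiff : 0 ≤ (1 + α + (1 - a)) * (z + y) ^ 2 := by
    have : 0 ≤ 1 + α + (1 - a) := by linarith
    positivity
  have hsum : 0 ≤ (1 + α - (1 - a)) * (z - y) ^ 2 := by
    have : 0 ≤ 1 + α - (1 - a) := by linarith
    positivity
  have hquad : 0 ≤ (β + b) * y ^ 2 := by
    have : 0 ≤ β + b := by linarith
    positivity
  nlinarith [mul_nonneg hβ (sq_nonneg z)]

theorem sqrt_mul_cos_arctan_div {z y : ℝ} (hz : 0 < z) :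
    √(z ^ 2 + y ^ 2) * cos (arctan (y / z)) = z := by
  have : z ^ 2 + y ^ 2 = z ^ 2 * (1 + (y / z) ^ 2) := by field_simp
  rw [cos_arctan, this, sqrt_mul (sq_nonneg z), sqrt_sq hz.le]
  field_simp

theorem sqrt_mul_sin_arctan_div {z y : ℝ} (hz : 0 < z) :
    √(z ^ 2 + y ^ 2) * sin (arctan (y / z)) = y := by
  rw [← tan_mul_cos (cos_arctan_pos _).ne', tan_arctan, mul_left_comm,
    sqrt_mul_cos_arctan_div hz, div_mul_cancel₀ _ hz.ne']

namespace IsPlanarTrajectory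

variable {A B z y ω : ℝ → ℝ} {s t : ℝ}

theorem continuousOn_z (h : IsPlanarTrajectory A B z y s t) : ContinuousOn z (Set.Icc s t) :=
  HasDerivAt.continuousOn h.hasDerivAt_z

theorem continuousOn_y (h : IsPlanarTrajectory A B z y s t) : ContinuousOn y (Set.Icc s t) :=
  HasDerivAt.continuousOn h.hasDerivAt_y

theorem mono_right (h : IsPlanarTrajectory A B z y s t) {t' : ℝ} (ht : t' ≤ t) :
    IsPlanarTrajectory A B z y s t' where
  hasDerivAt_z x hx := h.hasDerivAt_z x ⟨hx.1, hx.2.trans ht⟩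
  hasDerivAt_y x hx := h.hasDerivAt_y x ⟨hx.1, hx.2.trans ht⟩

theorem z_nonneg_of_le (h : IsPlanarTrajectory A B z y s t) (hst : s ≤ t) (hz : z s = 0)
    (hzy : ∀ x ∈ Set.Ioo s t, z x ≤ y x) : 0 ≤ z t := by
  have := le_mul_exp_of_hasDerivAt_le (f := fun x ↦ -z x) (f' := fun x ↦ -y x) (c := 1) hst
    h.continuousOn_z.neg (fun x hx ↦ (h.hasDerivAt_z x (Set.Ioo_subset_Icc_self hx)).neg)
    (fun x hx ↦ by linarith [hzy x hx])
  rw [hz, neg_zero, zero_mul] at this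
  linarith

theorem y_le_y_sub_z (h : IsPlanarTrajectory A B z y s t) (hst : s ≤ t)
    (hA : ∀ x ∈ Set.Icc s t, 0 ≤ A x) (hB : ∀ x ∈ Set.Icc s t, 1 + A x ≤ B x) (hz : z s = 0)
    (hzy : ∀ x ∈ Set.Ioo s t, z x ≤ y x) : y s ≤ y t - z t := by
  have := le_of_hasDerivAt_nonneg (f := fun x ↦ y x - z x)
    (f' := fun x ↦ (-A x * z x + B x * y x) - y x) hst (h.continuousOn_y.sub h.continuousOn_z)
    (fun x hx ↦ (h.hasDerivAt_y x (Set.Ioo_subset_Icc_self hx)).sub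
      (h.hasDerivAt_z x (Set.Ioo_subset_Icc_self hx)))
    (fun x hx ↦ by
      have hx' := Set.Ioo_subset_Icc_self hx
      have hzx : 0 ≤ z x := (h.mono_right hx.2.le).z_nonneg_of_le hx.1.le hz
        fun r hr ↦ hzy r ⟨hr.1, hr.2.trans hx.2⟩
      have hAx := hA x hx'
      have hBx := hB x hx'
      calc 0 ≤ (B x - 1) * (y x - z x) + (B x - 1 - A x) * z x :=
            add_nonneg (mul_nonneg (by linarith) (by linarith [hzy x hx]))
              (mul_nonneg (by linarith) hzx)
        _ = (-A x * z x + B x * y x) - y x := by ring)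
  simpa only [hz, sub_zero] using this

theorem y_le_of_z_eq_zero (h : IsPlanarTrajectory A B z y s t) (hst : s ≤ t)
    (hA : ∀ x ∈ Set.Icc s t, 0 ≤ A x) (hB : ∀ x ∈ Set.Icc s t, 1 + A x ≤ B x) (hz : z s = 0)
    (hy : 0 < y s) : y s ≤ y t := by
  have hzy : ∀ x ∈ Set.Icc s t, z x < y x := by
    intro x hx
    by_contra! hcross
    obtain ⟨r, hr, hr₀, hbefore⟩ := exists_first_hit (f := fun x ↦ z x - y x) (c := 0) hx.1
      ((h.continuousOn_z.sub h.continuousOn_y).mono (Set.Icc_subset_Icc_right hx.2))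
      (by linarith) (by linarith)
    have hrt := hr.2.trans hx.2
    have := (h.mono_right hrt).y_le_y_sub_z hr.1.le (fun x hx ↦ hA x ⟨hx.1, hx.2.trans hrt⟩)
      (fun x hx ↦ hB x ⟨hx.1, hx.2.trans hrt⟩) hz
      fun x hx ↦ by linarith [hbefore x ⟨hx.1.le, hx.2⟩]
    linarith
  have hgap := h.y_le_y_sub_z hst hA hB hz fun x hx ↦ (hzy x (Set.Ioo_subset_Icc_self hx)).le
  have hzt := h.z_nonneg_of_le hst hz fun x hx ↦ (hzy x (Set.Ioo_subset_Icc_self hx)).le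
  linarith

theorem sq_add_sq_pos (h : IsPlanarTrajectory A B z y s t) (hst : s ≤ t)
    (hA : ContinuousOn A (Set.Icc s t)) (hB : ContinuousOn B (Set.Icc s t)) (hz : z s ≠ 0) :
    0 < z t ^ 2 + y t ^ 2 := by
  obtain ⟨α, hα⟩ := isCompact_Icc.exists_bound_of_continuousOn hA
  obtain ⟨β, hβ⟩ := isCompact_Icc.exists_bound_of_continuousOn hB
  have := le_mul_exp_of_hasDerivAt_le (f := fun x ↦ -(z x ^ 2 + y x ^ 2))
    (f' := fun x ↦ -(2 * z x * y x + 2 * y x * (-A x * z x + B x * y x)))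
    (c := -(1 + α + 2 * β)) hst ((h.continuousOn_z.pow 2).add (h.continuousOn_y.pow 2)).neg
    (fun x hx ↦ (((h.hasDerivAt_z x (Set.Ioo_subset_Icc_self hx)).pow 2).add
      ((h.hasDerivAt_y x (Set.Ioo_subset_Icc_self hx)).pow 2)).neg.congr_deriv
        (by simp only [Nat.cast_ofNat, Nat.add_one_sub_one, pow_one]))
    (fun x hx ↦ by
      have := two_mul_inner_ge (z := z x) (y := y x) (hα x (Set.Ioo_subset_Icc_self hx))
        (hβ x (Set.Ioo_subset_Icc_self hx))
      linarith)
  have hs : 0 < (z s ^ 2 + y s ^ 2) * exp (-(1 + α + 2 * β) * (t - s)) := by positivity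
  linarith

theorem sqrt_mul_cos_add_sin (h : IsPlanarTrajectory A B z y s t)
    (hpos : ∀ x ∈ Set.Icc s t, 0 < z x ^ 2 + y x ^ 2) (hz : 0 < z s)
    (hω : ∀ x ∈ Set.Icc s t, HasDerivAt ω (angularRate (A x) (B x) (z x) (y x)) x)
    (hωs : ω s = arctan (y s / z s)) {x : ℝ} (hx : x ∈ Set.Icc s t) :
    z x * cos (ω x) + y x * sin (ω x) = √(z x ^ 2 + y x ^ 2) := by
  have hderiv : ∀ x ∈ Set.Icc s t, HasDerivAt
      (fun x ↦ (z x * cos (ω x) + y x * sin (ω x)) / √(z x ^ 2 + y x ^ 2)) 0 x := by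
    intro x hx
    have hz' := h.hasDerivAt_z x hx
    have hy' := h.hasDerivAt_y x hx
    have hsqrt : √(z x ^ 2 + y x ^ 2) ≠ 0 := (sqrt_pos.2 (hpos x hx)).ne'
    refine (((hz'.mul (hω x hx).cos).add (hy'.mul (hω x hx).sin)).div
      (((hz'.pow 2).add (hy'.pow 2)).sqrt (hpos x hx).ne') hsqrt).congr_deriv ?_
    have hne := (hpos x hx).ne'
    have hsq := sq_sqrt (hpos x hx).le
    simp only [Pi.add_apply, Pi.mul_apply, Pi.pow_apply, angularRate, Nat.cast_ofNat,
      Nat.add_one_sub_one, pow_one]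
    field_simp
    rw [hsq]
    ring
  have hst := hx.1.trans hx.2
  have hconst := constant_of_has_deriv_right_zero (HasDerivAt.continuousOn hderiv)
    (fun x hx ↦ (hderiv x (Set.Ico_subset_Icc_self hx)).hasDerivWithinAt) x hx
  have hs := sqrt_pos.2 (hpos s (Set.left_mem_Icc.2 hst))
  have hinit : z s * cos (ω s) + y s * sin (ω s) = √(z s ^ 2 + y s ^ 2) := by
    have hcos := sqrt_mul_cos_arctan_div (y := y s) hz
    have hsin := sqrt_mul_sin_arctan_div (y := y s) hz
    rw [← hωs] at hcos hsin
    linear_combination √(z s ^ 2 + y s ^ 2) * sin_sq_add_cos_sq (ω s) - cos (ω s) * hcos -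
      sin (ω s) * hsin
  rw [hinit, div_self hs.ne', div_eq_one_iff_eq (sqrt_pos.2 (hpos x hx)).ne'] at hconst
  exact hconst

theorem eq_sqrt_mul_cos_and_sin (h : IsPlanarTrajectory A B z y s t)
    (hpos : ∀ x ∈ Set.Icc s t, 0 < z x ^ 2 + y x ^ 2) (hz : 0 < z s)
    (hω : ∀ x ∈ Set.Icc s t, HasDerivAt ω (angularRate (A x) (B x) (z x) (y x)) x)
    (hωs : ω s = arctan (y s / z s)) {x : ℝ} (hx : x ∈ Set.Icc s t) :
    z x = √(z x ^ 2 + y x ^ 2) * cos (ω x) ∧ y x = √(z x ^ 2 + y x ^ 2) * sin (ω x) := by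
  have hproj := h.sqrt_mul_cos_add_sin hpos hz hω hωs hx
  have hsq := sq_sqrt (hpos x hx).le
  set r := √(z x ^ 2 + y x ^ 2)
  have hdist : (z x - r * cos (ω x)) ^ 2 + (y x - r * sin (ω x)) ^ 2 = 0 := by
    linear_combination r ^ 2 * sin_sq_add_cos_sq (ω x) - hsq - 2 * r * hproj
  constructor <;> nlinarith [sq_nonneg (z x - r * cos (ω x)), sq_nonneg (y x - r * sin (ω x))]

end IsPlanarTrajectory

end PlanarSystem

section Crossings

theorem eventually_lt_and_gt_of_hasDerivAt_neg {f : ℝ → ℝ} {f' x : ℝ} (h : HasDerivAt f f' x)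
    (hf' : f' < 0) : ∀ᶠ y in nhds x, (x < y → f y < f x) ∧ (y < x → f x < f y) := by
  have hsign := eventually_nhdsWithin_sign_eq_of_deriv_neg (f := fun y ↦ f y - f x)
    (by rwa [(h.sub_const (f x)).deriv]) (sub_self _)
  filter_upwards [hsign] with y hy
  refine ⟨fun hxy ↦ ?_, fun hyx ↦ ?_⟩
  · rwa [sign_neg (sub_neg.2 hxy), sign_eq_neg_one_iff, sub_neg] at hy
  · rwa [sign_pos (sub_pos.2 hyx), sign_eq_one_iff, sub_pos] at hy

theorem lt_of_hasDerivAt_neg_of_eq {ω ω' : ℝ → ℝ} {s t l : ℝ}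
    (hω : ∀ x ∈ Set.Icc s t, HasDerivAt ω (ω' x) x)
    (hneg : ∀ x ∈ Set.Icc s t, ω x = l → ω' x < 0) (hs : ω s ≤ l) {x : ℝ}
    (hx : x ∈ Set.Ioc s t) : ω x < l := by
  have hle := image_le_of_deriv_right_lt_deriv_boundary (HasDerivAt.continuousOn hω)
    (fun x hx ↦ (hω x (Set.Ico_subset_Icc_self hx)).hasDerivWithinAt) (B := fun _ ↦ l) hs
    (fun x ↦ hasDerivAt_const x l) (fun x hx ↦ hneg x (Set.Ico_subset_Icc_self hx))
  have hx' := Set.Ioc_subset_Icc_self hx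
  refine (hle hx').lt_of_ne fun hxl ↦ ?_
  have hleft := eventually_lt_and_gt_of_hasDerivAt_neg (hω x hx') (hneg x hx' hxl)
  obtain ⟨y, hy, hys⟩ := ((hleft.filter_mono nhdsWithin_le_nhds).and (Ioo_mem_nhdsLT hx.1)).exists
  exact (hxl ▸ hy.2 hys.2).not_ge (hle ⟨hys.1.le, hys.2.le.trans hx.2⟩)

/-- The angles `π / 2 - k π` at which a clockwise rotating point crosses the vertical axis. -/
noncomputable def crossingAngle (k : ℕ) : ℝ := π / 2 - k * π

theorem crossingAngle_strictAnti : StrictAnti crossingAngle := fun j k hjk ↦ by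
  have : (j : ℝ) < k := mod_cast hjk
  unfold crossingAngle
  gcongr

theorem cos_crossingAngle (k : ℕ) : cos (crossingAngle k) = 0 := by
  rw [crossingAngle, cos_pi_div_two_sub, sin_nat_mul_pi]

theorem sin_crossingAngle (k : ℕ) : sin (crossingAngle k) = (-1) ^ k := by
  rw [crossingAngle, sin_pi_div_two_sub, cos_nat_mul_pi]

theorem tendsto_crossingAngle : Tendsto crossingAngle atTop atBot :=
  tendsto_const_nhds.add_atBot
    (tendsto_neg_atTop_atBot.comp (tendsto_natCast_atTop_atTop.atTop_mul_const pi_pos))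

theorem exists_crossingAngle_eq {θ : ℝ} (hcos : cos θ = 0) (hθ : θ < π / 2) :
    ∃ k ≥ 1, θ = crossingAngle k := by
  obtain ⟨i, rfl⟩ := cos_eq_zero_iff.1 hcos
  have hi : i < 0 := by
    by_contra! hi
    have : (0 : ℝ) ≤ i := mod_cast hi
    nlinarith [pi_pos]
  obtain ⟨k, rfl⟩ : ∃ k : ℕ, i = -k := ⟨(-i).toNat, by omega⟩
  refine ⟨k, by omega, ?_⟩
  rw [crossingAngle]
  push_cast
  ring

section Count

variable {ω ω' : ℝ → ℝ} {s t : ℝ}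

theorem lt_of_le_of_cos_eq_zero (hω : ∀ x ∈ Set.Icc s t, HasDerivAt ω (ω' x) x)
    (hneg : ∀ x ∈ Set.Icc s t, cos (ω x) = 0 → ω' x < 0) {l u x : ℝ} (hl : cos l = 0)
    (hu : s ≤ u) (hul : ω u ≤ l) (hx : x ∈ Set.Ioc u t) : ω x < l :=
  lt_of_hasDerivAt_neg_of_eq (fun x hx ↦ hω x ⟨hu.trans hx.1, hx.2⟩)
    (fun x hx hxl ↦ hneg x ⟨hu.trans hx.1, hx.2⟩ (hxl ▸ hl)) hul hx

theorem image_cos_eq_zero {k : ℕ} (hst : s ≤ t)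
    (hω : ∀ x ∈ Set.Icc s t, HasDerivAt ω (ω' x) x)
    (hneg : ∀ x ∈ Set.Icc s t, cos (ω x) = 0 → ω' x < 0)
    (hs : ω s ∈ Set.Ioo (-(π / 2)) (π / 2))
    (ht : ω t ∈ Set.Ioo (crossingAngle (k + 1)) (crossingAngle k)) :
    ω '' {x ∈ Set.Icc s t | cos (ω x) = 0} = crossingAngle '' Set.Icc 1 k := by
  ext θ
  constructor
  · rintro ⟨x, ⟨hx, hcos⟩, rfl⟩
    have hup : ω x < π / 2 := by
      rcases hx.1.eq_or_lt with rfl | hlt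
      · exact hs.2
      · exact lt_of_le_of_cos_eq_zero hω hneg cos_pi_div_two le_rfl hs.2.le ⟨hlt, hx.2⟩
    have hlow : crossingAngle (k + 1) < ω x := by
      by_contra! hle
      rcases hx.2.eq_or_lt with rfl | hlt
      · exact hle.not_gt ht.1
      · exact (lt_of_le_of_cos_eq_zero hω hneg (cos_crossingAngle _) hx.1 hle
          ⟨hlt, le_rfl⟩).not_gt ht.1
    obtain ⟨j, hj, hωj⟩ := exists_crossingAngle_eq hcos hup
    rw [hωj, crossingAngle_strictAnti.lt_iff_gt] at hlow
    exact ⟨j, ⟨hj, Nat.lt_succ_iff.1 hlow⟩, hωj.symm⟩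
  · rintro ⟨j, ⟨hj, hjk⟩, rfl⟩
    have hone : crossingAngle j ≤ -(π / 2) := by
      refine (crossingAngle_strictAnti.antitone hj).trans_eq ?_
      rw [crossingAngle]
      ring
    obtain ⟨x, hx, hωx⟩ := intermediate_value_Icc' hst (HasDerivAt.continuousOn hω)
      ⟨ht.2.le.trans (crossingAngle_strictAnti.antitone hjk), hone.trans hs.1.le⟩
    exact ⟨x, ⟨hx, hωx ▸ cos_crossingAngle j⟩, hωx⟩

theorem encard_cos_eq_zero {k : ℕ} (hst : s ≤ t)
    (hω : ∀ x ∈ Set.Icc s t, HasDerivAt ω (ω' x) x)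
    (hneg : ∀ x ∈ Set.Icc s t, cos (ω x) = 0 → ω' x < 0)
    (hs : ω s ∈ Set.Ioo (-(π / 2)) (π / 2))
    (ht : ω t ∈ Set.Ioo (crossingAngle (k + 1)) (crossingAngle k)) :
    {x ∈ Set.Icc s t | cos (ω x) = 0}.encard = k := by
  have hinj : Set.InjOn ω {x ∈ Set.Icc s t | cos (ω x) = 0} := by
    intro x hx x' hx' heq
    by_contra hne
    rcases lt_or_gt_of_ne hne with hlt | hlt
    · exact (lt_of_le_of_cos_eq_zero hω hneg hx.2 hx.1.1 le_rfl ⟨hlt, hx'.1.2⟩).ne' heq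
    · exact (lt_of_le_of_cos_eq_zero hω hneg hx'.2 hx'.1.1 le_rfl ⟨hlt, hx.1.2⟩).ne heq
  rw [← hinj.encard_image, image_cos_eq_zero hst hω hneg hs ht,
    crossingAngle_strictAnti.injective.encard_image, ← Finset.coe_Icc,
    Set.encard_coe_eq_coe_finsetCard, Nat.card_Icc, Nat.add_sub_cancel]

end Count

end Crossings

/-! ### Behaviour at large radius -/

section ExitSystem

/-- A planar system `z' = y`, `y' = -A z + B y` in the region far from the origin, started at
time `0` on the sphere of radius `R`, so that `R * exp x` is the radius at time `x`. The equation
for `y` and the bounds on `A` and `B` are only required inside the box `|z| ≤ lam / 2`,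
`|y| ≤ 1`. -/
structure ExitSystem (A B z y : ℝ → ℝ) (R lam : ℝ) : Prop where
  le_R : 8 ≤ R
  le_lam : 1 / 2 ≤ lam
  continuous_y : Continuous y
  hasDerivAt_z : ∀ x, HasDerivAt z (y x) x
  hasDerivAt_y : ∀ x, 0 ≤ x → |z x| ≤ lam / 2 → |y x| ≤ 1 →
    HasDerivAt y (-A x * z x + B x * y x) x
  A_nonneg : ∀ x, 0 ≤ x → |z x| ≤ lam / 2 → |y x| ≤ 1 → 0 ≤ A x
  one_add_A_le : ∀ x, 0 ≤ x → |z x| ≤ lam / 2 → |y x| ≤ 1 → 1 + A x ≤ B x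
  forcing_lt : ∀ x, 0 ≤ x → |z x| ≤ lam / 2 → |y x| ≤ 1 → R * exp x * A x * |z x| < B x + 1
  abs_z_zero_le : |z 0| ≤ lam / 4
  abs_y_zero_lt : |y 0| < 1 / R

/-- The weighted velocity `R * exp x * y x`, which is `r u' - u` for a profile `u`, exceeds `1`
before it reaches `-1`. -/
def ExitsUpward (R : ℝ) (y : ℝ → ℝ) : Prop :=
  ∃ x ≥ 0, 1 < R * exp x * y x ∧ ∀ s ∈ Set.Icc 0 x, -1 < R * exp s * y s

theorem ExitsUpward.not_neg {R : ℝ} {y : ℝ → ℝ} (h : ExitsUpward R y) :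
    ¬ExitsUpward R (fun x ↦ -y x) := by
  rintro ⟨x', hx', hlt', hbefore'⟩
  obtain ⟨x, hx, hlt, hbefore⟩ := h
  rcases le_total x x' with hxx' | hxx'
  · linarith [hbefore' x ⟨hx, hxx'⟩]
  · linarith [hbefore x' ⟨hx', hxx'⟩]

theorem ExitsUpward.eventually {R a : ℝ} {y : ℝ → ℝ → ℝ} {S : Set ℝ}
    (hy : ContinuousOn (Function.uncurry y) (S ×ˢ Set.univ)) (ha : S ∈ nhds a)
    (h : ExitsUpward R (y a)) : ∀ᶠ b in nhds a, ExitsUpward R (y b) := by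
  obtain ⟨x, hx, hlt, hbefore⟩ := h
  have hcont (s : ℝ) : ContinuousAt (fun p : ℝ × ℝ ↦ R * exp p.2 * y p.1 p.2) (a, s) :=
    (by fun_prop : Continuous fun p : ℝ × ℝ ↦ R * exp p.2).continuousAt.mul
      (hy.continuousAt (prod_mem_nhds ha univ_mem))
  have hlt' : ∀ᶠ b in nhds a, 1 < R * exp x * y b x :=
    ((hcont x).comp (f := fun b ↦ (b, x)) (by fun_prop)).eventually (lt_mem_nhds hlt)
  have hbefore' : ∀ᶠ b in nhds a, ∀ s ∈ Set.Icc 0 x, -1 < R * exp s * y b s :=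
    isCompact_Icc.eventually_forall_of_forall_eventually
      fun s hs ↦ (hcont s).eventually (lt_mem_nhds (hbefore s hs))
  filter_upwards [hlt', hbefore'] with b hb hb'
  exact ⟨x, hx, hb, hb'⟩

namespace ExitSystem

variable {A B z y : ℝ → ℝ} {R lam a b x : ℝ}

theorem neg (h : ExitSystem A B z y R lam) :
    ExitSystem A B (fun x ↦ -z x) (fun x ↦ -y x) R lam where
  le_R := h.le_R
  le_lam := h.le_lam
  continuous_y := h.continuous_y.neg
  hasDerivAt_z x := (h.hasDerivAt_z x).neg
  hasDerivAt_y x hx hz hy := by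
    rw [abs_neg] at hz hy
    exact (h.hasDerivAt_y x hx hz hy).neg.congr_deriv (by ring)
  A_nonneg x hx hz hy := h.A_nonneg x hx (abs_neg (z x) ▸ hz) (abs_neg (y x) ▸ hy)
  one_add_A_le x hx hz hy := h.one_add_A_le x hx (abs_neg (z x) ▸ hz) (abs_neg (y x) ▸ hy)
  forcing_lt x hx hz hy := by
    rw [abs_neg] at hz hy ⊢
    exact h.forcing_lt x hx hz hy
  abs_z_zero_le := by rw [abs_neg]; exact h.abs_z_zero_le
  abs_y_zero_lt := by rw [abs_neg]; exact h.abs_y_zero_lt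

theorem R_pos (h : ExitSystem A B z y R lam) : 0 < R := by linarith [h.le_R]

theorem continuous_weightedVelocity (h : ExitSystem A B z y R lam) :
    Continuous fun x ↦ R * exp x * y x := by
  have := h.continuous_y
  fun_prop

theorem abs_weightedVelocity_zero_lt (h : ExitSystem A B z y R lam) : |R * exp 0 * y 0| < 1 := by
  have := h.abs_y_zero_lt
  rw [lt_div_iff₀' h.R_pos] at this
  rwa [exp_zero, mul_one, abs_mul, abs_of_pos h.R_pos]

theorem z_add_exp_le (h : ExitSystem A B z y R lam) (hab : a ≤ b)
    (hw : ∀ s ∈ Set.Icc a b, R * exp s * y s ≤ 1) : z b + exp (-b) / R ≤ z a + exp (-a) / R := by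
  have hR := h.R_pos
  have hderiv (x : ℝ) : HasDerivAt (fun x ↦ z x + exp (-x) / R) (y x + -exp (-x) / R) x :=
    (h.hasDerivAt_z x).add
      (((hasDerivAt_neg x).exp.congr_deriv (mul_neg_one _)).div_const R)
  refine le_of_hasDerivAt_nonpos hab (HasDerivAt.continuousOn fun x _ ↦ hderiv x)
    (fun x _ ↦ hderiv x) fun x hx ↦ ?_
  have hy : y x ≤ 1 / (R * exp x) := by
    rw [le_div_iff₀' (by positivity)]
    exact hw x (Set.Ioo_subset_Icc_self hx)
  have hexp : exp (-x) / R = 1 / (R * exp x) := by rw [exp_neg]; field_simp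
  rw [neg_div, hexp]
  linarith

theorem le_z_sub_exp (h : ExitSystem A B z y R lam) (hab : a ≤ b)
    (hw : ∀ s ∈ Set.Icc a b, -1 ≤ R * exp s * y s) :
    z a - exp (-a) / R ≤ z b - exp (-b) / R := by
  have := h.neg.z_add_exp_le hab fun s hs ↦ by linarith [hw s hs]
  linarith

theorem abs_z_le (h : ExitSystem A B z y R lam) (hx : 0 ≤ x)
    (hw : ∀ s ∈ Set.Icc 0 x, |R * exp s * y s| ≤ 1) : |z x| ≤ lam / 2 := by
  have hR := h.R_pos
  have hupper := h.z_add_exp_le hx fun s hs ↦ (abs_le.1 (hw s hs)).2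
  have hlower := h.le_z_sub_exp hx fun s hs ↦ (abs_le.1 (hw s hs)).1
  have hinit : exp (-0) / R ≤ lam / 4 := by
    rw [neg_zero, exp_zero]
    calc 1 / R ≤ 1 / 8 := one_div_le_one_div_of_le (by norm_num) h.le_R
      _ ≤ lam / 4 := by linarith [h.le_lam]
  have hfinal : 0 ≤ exp (-x) / R := by positivity
  obtain ⟨hz₁, hz₂⟩ := abs_le.1 h.abs_z_zero_le
  exact abs_le.2 ⟨by linarith, by linarith⟩

theorem abs_y_le (h : ExitSystem A B z y R lam) (hx : 0 ≤ x) (hw : |R * exp x * y x| ≤ 1) :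
    |y x| ≤ 1 := by
  have hR := h.R_pos
  have hle : 1 ≤ R * exp x := one_le_mul_of_one_le_of_one_le (by linarith [h.le_R]) (one_le_exp hx)
  rw [abs_mul, abs_of_pos (by positivity)] at hw
  exact (le_mul_of_one_le_left (abs_nonneg _) hle).trans hw

theorem isPlanarTrajectory (h : ExitSystem A B z y R lam) (ha : 0 ≤ a)
    (hw : ∀ s ∈ Set.Icc 0 b, |R * exp s * y s| ≤ 1) : IsPlanarTrajectory A B z y a b where
  hasDerivAt_z x _ := h.hasDerivAt_z x
  hasDerivAt_y x hx := by
    have hx₀ := ha.trans hx.1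
    exact h.hasDerivAt_y x hx₀ (h.abs_z_le hx₀ fun s hs ↦ hw s ⟨hs.1, hs.2.trans hx.2⟩)
      (h.abs_y_le hx₀ (hw x ⟨hx₀, hx.2⟩))

theorem y_le_of_z_eq_zero (h : ExitSystem A B z y R lam) (ha : 0 ≤ a) (hab : a ≤ b)
    (hw : ∀ s ∈ Set.Icc 0 b, |R * exp s * y s| ≤ 1) (hz : z a = 0) (hy : 0 < y a) :
    y a ≤ y b := by
  have hbox : ∀ s ∈ Set.Icc a b, |z s| ≤ lam / 2 ∧ |y s| ≤ 1 := fun s hs ↦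
    ⟨h.abs_z_le (ha.trans hs.1) fun u hu ↦ hw u ⟨hu.1, hu.2.trans hs.2⟩,
      h.abs_y_le (ha.trans hs.1) (hw s ⟨ha.trans hs.1, hs.2⟩)⟩
  exact (h.isPlanarTrajectory ha hw).y_le_of_z_eq_zero hab
    (fun s hs ↦ h.A_nonneg s (ha.trans hs.1) (hbox s hs).1 (hbox s hs).2)
    (fun s hs ↦ h.one_add_A_le s (ha.trans hs.1) (hbox s hs).1 (hbox s hs).2) hz hy

theorem exitsUpward_of_hit (h : ExitSystem A B z y R lam) (hx : 0 ≤ x)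
    (hbefore : ∀ s ∈ Set.Ico 0 x, |R * exp s * y s| < 1) (hhit : R * exp x * y x = 1) :
    ExitsUpward R y := by
  have hR := h.R_pos
  have hw : ∀ s ∈ Set.Icc 0 x, |R * exp s * y s| ≤ 1 := fun s hs ↦ by
    rcases hs.2.eq_or_lt with rfl | hlt
    · rw [hhit, abs_one]
    · exact (hbefore s ⟨hs.1, hlt⟩).le
  have hz := h.abs_z_le hx hw
  have hy := h.abs_y_le hx (hw x ⟨hx, le_rfl⟩)
  have hderiv : HasDerivAt (fun s ↦ -(R * exp s * y s))
      (R * exp x * A x * z x - (B x + 1)) x := by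
    refine ((((hasDerivAt_exp x).const_mul R).mul (h.hasDerivAt_y x hx hz hy)).neg).congr_deriv ?_
    linear_combination (-(B x + 1)) * hhit
  have hneg : R * exp x * A x * z x - (B x + 1) < 0 := by
    have hA := h.A_nonneg x hx hz hy
    have hle : R * exp x * A x * z x ≤ R * exp x * A x * |z x| := by
      gcongr
      exact le_abs_self _
    linarith [h.forcing_lt x hx hz hy]
  have hpast := (eventually_lt_and_gt_of_hasDerivAt_neg hderiv hneg).filter_mono
    (nhdsWithin_le_nhds (s := Set.Ioi x))
  obtain ⟨t, ht, hIoc⟩ := (mem_nhdsGT_iff_exists_Ioc_subset).1 hpast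
  refine ⟨t, hx.trans (le_of_lt ht), by linarith [(hIoc ⟨ht, le_rfl⟩).1 ht], fun s hs ↦ ?_⟩
  rcases lt_trichotomy s x with hsx | rfl | hxs
  · exact (abs_lt.1 (hbefore s ⟨hs.1, hsx⟩)).1
  · linarith
  · linarith [(hIoc ⟨hxs, hs.2⟩).1 hxs]

theorem exitsUpward_or_neg (h : ExitSystem A B z y R lam) (hx : 0 ≤ x)
    (hw : 1 < |R * exp x * y x|) : ExitsUpward R y ∨ ExitsUpward R (fun x ↦ -y x) := by
  obtain ⟨s, hs, hhit, hbefore⟩ := exists_first_hit hx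
    h.continuous_weightedVelocity.abs.continuousOn h.abs_weightedVelocity_zero_lt hw.le
  rcases (abs_eq zero_le_one).1 hhit with hhit | hhit
  · exact .inl (h.exitsUpward_of_hit hs.1.le hbefore hhit)
  · refine .inr (h.neg.exitsUpward_of_hit hs.1.le (fun t ht ↦ ?_) (by linarith))
    rw [mul_neg, abs_neg]
    exact hbefore t ht

theorem exists_tendsto (h : ExitSystem A B z y R lam)
    (hw : ∀ x, 0 ≤ x → |R * exp x * y x| ≤ 1) : ∃ L, |L| ≤ lam / 2 ∧ Tendsto z atTop (nhds L) := by
  have hR := h.R_pos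
  have hbox : ∀ᶠ x in atTop, |z x| ≤ lam / 2 := by
    filter_upwards [eventually_ge_atTop 0] with x hx
    exact h.abs_z_le hx fun s hs ↦ hw s hs.1
  have hy : MeasureTheory.IntegrableOn y (Set.Ioi 0) := by
    refine ((integrableOn_exp_neg_Ioi 0).const_mul (1 / R)).mono'
      h.continuous_y.aestronglyMeasurable.restrict ?_
    filter_upwards [MeasureTheory.ae_restrict_mem measurableSet_Ioi] with x hx
    have := hw x (le_of_lt hx)
    rw [abs_mul, abs_of_pos (by positivity), ← le_div_iff₀' (by positivity)] at this
    rw [norm_eq_abs, exp_neg]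
    exact this.trans_eq (by field_simp)
  have hlim := MeasureTheory.tendsto_limUnder_of_hasDerivAt_of_integrableOn_Ioi
    (fun x _ ↦ h.hasDerivAt_z x) hy
  exact ⟨_, le_of_tendsto hlim.abs hbox, hlim⟩

theorem z_ne_zero (h : ExitSystem A B z y R lam) (hw : ∀ x, 0 ≤ x → |R * exp x * y x| ≤ 1)
    (hx : 0 ≤ x) (hne : 0 < z x ^ 2 + y x ^ 2) : z x ≠ 0 := by
  intro hz
  wlog hy : 0 < y x generalizing z y
  · have hy₀ : y x ≠ 0 := fun hy₀ ↦ by simp [hz, hy₀] at hne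
    have hy' := lt_of_le_of_ne (not_lt.1 hy) hy₀
    exact this h.neg (by simpa using hw) (by simpa using hne) (by simpa using hz)
      (by simpa using hy')
  have hR := h.R_pos
  have hlater : x ≤ x + 1 / y x := le_add_of_nonneg_right (by positivity)
  have hy' := h.y_le_of_z_eq_zero hx hlater (fun s hs ↦ hw s hs.1) hz hy
  have hexp : 1 / y x ≤ exp (x + 1 / y x) := by linarith [add_one_le_exp (x + 1 / y x)]
  have hlarge : 8 ≤ R * exp (x + 1 / y x) * y (x + 1 / y x) :=
    calc (8 : ℝ) = 8 * (1 / y x) * y x := by field_simp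
      _ ≤ R * exp (x + 1 / y x) * y (x + 1 / y x) := by
        have := h.le_R
        gcongr
  linarith [(abs_le.1 (hw (x + 1 / y x) (hx.trans hlater))).2]

theorem not_exitsUpward_neg (h : ExitSystem A B z y R lam) (hz : z 0 = 0) (hy : 0 < y 0) :
    ¬ExitsUpward R (fun x ↦ -y x) := by
  rintro ⟨x, hx, hlt, hbefore⟩
  have hR := h.R_pos
  have hinit := (abs_lt.1 h.abs_weightedVelocity_zero_lt).1
  obtain ⟨s, hs, hhit, hfirst⟩ := exists_first_hit (f := fun x ↦ -(R * exp x * y x)) (c := 1) hx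
    h.continuous_weightedVelocity.neg.continuousOn (by linarith) (by linarith)
  have hw : ∀ t ∈ Set.Icc 0 s, |R * exp t * y t| ≤ 1 := fun t ht ↦ by
    refine abs_le.2 ⟨?_, by linarith [hbefore t ⟨ht.1, ht.2.trans hs.2⟩]⟩
    rcases ht.2.eq_or_lt with rfl | hts
    · linarith
    · linarith [hfirst t ⟨ht.1, hts⟩]
  have hys : 0 < y s := hy.trans_le (h.y_le_of_z_eq_zero le_rfl hs.1.le hw hz hy)
  have : 0 < R * exp s * y s := by positivity
  linarith

theorem exitsUpward_of_z_eq_zero (h : ExitSystem A B z y R lam) (hz : z 0 = 0) (hy : 0 < y 0) :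
    ExitsUpward R y := by
  by_contra hup
  refine h.z_ne_zero (fun x hx ↦ ?_) le_rfl (by positivity) hz
  by_contra! hlt
  exact (h.exitsUpward_or_neg hx hlt).elim hup (h.not_exitsUpward_neg hz hy)

end ExitSystem

end ExitSystem

section FarField

variable {P lam φ v z r : ℝ}

theorem coneStiffness_mem_Icc (hP : 0 ≤ P) (hlam : 0 < lam) (hφ : lam / 2 ≤ φ) :
    coneStiffness P lam φ v ∈ Set.Icc 0 ((1 + v ^ 2) * (3 * P)) := by
  have hφ₀ : 0 < φ := by linarith
  have hratio : lam / φ ≤ 2 := by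
    rw [div_le_iff₀ hφ₀]
    linarith
  refine ⟨by unfold coneStiffness; positivity, ?_⟩
  calc coneStiffness P lam φ v ≤ (1 + v ^ 2) * P * (1 + 2) := by unfold coneStiffness; gcongr
    _ = (1 + v ^ 2) * (3 * P) := by ring

theorem one_add_coneStiffness_le_coneDamping (hP : 0 ≤ P) (hlam : 0 < lam) (hφ : lam / 2 ≤ φ)
    (hr : 3 * P * lam + 8 * P + 8 ≤ r) :
    1 + coneStiffness P lam φ v ≤ coneDamping P (r ^ 2) v := by
  have hPlam : 0 ≤ P * lam := by positivity
  have hgap : 4 * P + 2 ≤ r ^ 2 / 2 := by nlinarith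
  calc 1 + coneStiffness P lam φ v ≤ 1 + (1 + v ^ 2) * (3 * P) := by
        gcongr
        exact (coneStiffness_mem_Icc hP hlam hφ).2
    _ ≤ (1 + v ^ 2) * (3 * P + 2) - 1 := by nlinarith [sq_nonneg v]
    _ ≤ (1 + v ^ 2) * (r ^ 2 / 2 - P) - 1 := by gcongr; linarith
    _ = coneDamping P (r ^ 2) v := rfl

theorem mul_coneStiffness_mul_lt (hP : 0 ≤ P) (hlam : 0 < lam) (hφ : lam / 2 ≤ φ)
    (hr : 3 * P * lam + 8 * P + 8 ≤ r) (hz₀ : 0 ≤ z) (hz : z ≤ lam / 2) :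
    r * coneStiffness P lam φ v * z < coneDamping P (r ^ 2) v + 1 := by
  have hPlam : 0 ≤ P * lam := by positivity
  have hr₀ : 0 < r := by linarith
  have hA := (coneStiffness_mem_Icc (v := v) hP hlam hφ).2
  calc r * coneStiffness P lam φ v * z ≤ r * ((1 + v ^ 2) * (3 * P)) * (lam / 2) := by gcongr
    _ = (1 + v ^ 2) * (r * (3 * P * lam) / 2) := by ring
    _ < (1 + v ^ 2) * (r ^ 2 / 2 - P) := by
      gcongr
      nlinarith
    _ = coneDamping P (r ^ 2) v + 1 := by rw [coneDamping]; ring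

end FarField

namespace ShootingFamily

variable {P Q lam R W c a τ t : ℝ}

/-- The deviation `φ - lam` of the profile from the cone. -/
noncomputable def z (S : ShootingFamily P Q lam R W c) (a τ : ℝ) : ℝ := S.φ a τ - lam

/-- The derivative `v - φ` of `z` in the time `τ`. -/
noncomputable def y (S : ShootingFamily P Q lam R W c) (a τ : ℝ) : ℝ := S.v a τ - S.φ a τ

/-- `coneStiffness` along a profile. -/
noncomputable def A (S : ShootingFamily P Q lam R W c) (a τ : ℝ) : ℝ :=
  coneStiffness P lam (S.φ a τ) (S.v a τ)

/-- `coneDamping` along a profile. -/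
noncomputable def B (S : ShootingFamily P Q lam R W c) (a τ : ℝ) : ℝ :=
  coneDamping P ((a * exp τ) ^ 2) (S.v a τ)

/-- The time at which the profile reaches the radius `R`. -/
noncomputable def T (_ : ShootingFamily P Q lam R W c) (a : ℝ) : ℝ := log (R / a)

section Dynamics

theorem R_pos (S : ShootingFamily P Q lam R W c) : 0 < R := S.r₀_pos.trans_le S.r₀_le

theorem lam_pos (S : ShootingFamily P Q lam R W c) : 0 < lam := by linarith [S.m_pos, S.m_lt]

theorem mul_exp_T (S : ShootingFamily P Q lam R W c) (ha : 0 < a) : a * exp (S.T a) = R := by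
  have := S.R_pos
  rw [T, exp_log (by positivity), mul_div_cancel₀ _ ha.ne']

theorem mul_exp_T_add (S : ShootingFamily P Q lam R W c) (ha : 0 < a) (x : ℝ) :
    a * exp (S.T a + x) = R * exp x := by
  rw [exp_add, ← mul_assoc, S.mul_exp_T ha]

theorem τ₁_le_T (S : ShootingFamily P Q lam R W c) (ha : a ∈ Set.Ioc 0 S.δ) : S.τ₁ ≤ S.T a := by
  have := S.R_pos
  rw [T, le_log_iff_exp_le (div_pos this ha.1), le_div_iff₀' ha.1]
  calc a * exp S.τ₁ ≤ S.δ * exp S.τ₁ := by gcongr; exact ha.2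
    _ ≤ R := S.δ_mul_exp_le.trans S.r₀_le

theorem τ₀_le_T (S : ShootingFamily P Q lam R W c) (ha : a ∈ Set.Ioc 0 S.δ) : S.τ₀ ≤ S.T a :=
  S.τ₀_le_τ₁.trans (S.τ₁_le_T ha)

theorem sq_le_one (S : ShootingFamily P Q lam R W c) (ha : a ∈ Set.Ioc 0 S.δ) : a ^ 2 ≤ 1 :=
  pow_le_one₀ ha.1.le (ha.2.trans S.δ_le_one)

theorem c_lt_of_m_lt (S : ShootingFamily P Q lam R W c) (hτ : S.τ₀ ≤ τ) (hφ : S.m < S.φ a τ) :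
    c < S.φ a τ * exp τ := by
  have hm := S.m_pos
  calc c ≤ S.m * exp S.τ₀ := S.c_le
    _ < S.φ a τ * exp S.τ₀ := by gcongr
    _ ≤ S.φ a τ * exp τ := by
      have := hm.trans hφ
      gcongr

theorem hasDerivAt_z (S : ShootingFamily P Q lam R W c) (a τ : ℝ) :
    HasDerivAt (S.z a) (S.y a τ) τ :=
  (S.hasDerivAt_φ a τ).sub_const lam

theorem hasDerivAt_y (S : ShootingFamily P Q lam R W c) (hQ : Q = P * lam ^ 2)
    (ha : a ∈ Set.Ioc 0 S.δ) (hτ : S.τ₀ ≤ τ) (hv : |S.v a τ| < W) (hφ : S.m < S.φ a τ) :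
    HasDerivAt (S.y a) (-S.A a τ * S.z a τ + S.B a τ * S.y a τ) τ := by
  have hφ₀ : 0 < S.φ a τ := S.m_pos.trans hφ
  refine ((S.hasDerivAt_v (S.sq_le_one ha) hv hφ₀ (S.c_lt_of_m_lt hτ hφ)).sub
    (S.hasDerivAt_φ a τ)).congr_deriv ?_
  unfold A B z y coneStiffness coneDamping
  generalize S.v a τ = v
  generalize S.φ a τ = φ at hφ₀
  rw [hQ]
  field_simp
  ring

theorem continuous_z (S : ShootingFamily P Q lam R W c) : Continuous (Function.uncurry S.z) :=
  S.continuous_φ.sub continuous_const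

theorem continuous_y (S : ShootingFamily P Q lam R W c) : Continuous (Function.uncurry S.y) :=
  S.continuous_v.sub S.continuous_φ

theorem continuous_B (S : ShootingFamily P Q lam R W c) : Continuous (Function.uncurry S.B) := by
  have := S.continuous_v
  unfold B coneDamping Function.uncurry at *
  fun_prop

theorem continuousAt_A (S : ShootingFamily P Q lam R W c) (hφ : S.φ a τ ≠ 0) :
    ContinuousAt (Function.uncurry S.A) (a, τ) :=
  ((continuousAt_const.add (S.continuous_v.continuousAt.pow 2)).mul continuousAt_const).mul
    (continuousAt_const.add (continuousAt_const.div S.continuous_φ.continuousAt hφ))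

theorem valid_of_mem_Icc (S : ShootingFamily P Q lam R W c) (ha : a ∈ Set.Ioc 0 S.δ)
    (hτ : τ ∈ Set.Icc S.τ₀ (S.T a)) : |S.v a τ| < W ∧ S.m < S.φ a τ := by
  refine S.valid ha hτ.1 ?_
  rw [← S.mul_exp_T ha.1]
  have := ha.1
  gcongr
  exact hτ.2

theorem isPlanarTrajectory (S : ShootingFamily P Q lam R W c) (hQ : Q = P * lam ^ 2)
    (ha : a ∈ Set.Ioc 0 S.δ)
    (hvalid : ∀ τ ∈ Set.Icc S.τ₀ t, |S.v a τ| < W ∧ S.m < S.φ a τ) :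
    IsPlanarTrajectory (S.A a) (S.B a) (S.z a) (S.y a) S.τ₀ t where
  hasDerivAt_z τ _ := S.hasDerivAt_z a τ
  hasDerivAt_y τ hτ := S.hasDerivAt_y hQ ha hτ.1 (hvalid τ hτ).1 (hvalid τ hτ).2

theorem z_pos (S : ShootingFamily P Q lam R W c) (ha : a ∈ Set.Ioc 0 S.δ) (hτ : τ ≤ S.τ₀) :
    0 < S.z a τ := by
  have h := (S.initial ha ⟨(exp_pos τ).le, exp_le_exp.2 hτ⟩).2.2
  rw [S.U_exp] at h
  exact sub_pos.2 (lt_of_mul_lt_mul_right h (exp_pos _).le)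

theorem sq_add_sq_pos (S : ShootingFamily P Q lam R W c) (hQ : Q = P * lam ^ 2)
    (ha : a ∈ Set.Ioc 0 S.δ) (hτ : S.τ₀ ≤ t)
    (hvalid : ∀ τ ∈ Set.Icc S.τ₀ t, |S.v a τ| < W ∧ S.m < S.φ a τ) :
    0 < S.z a t ^ 2 + S.y a t ^ 2 :=
  (S.isPlanarTrajectory hQ ha hvalid).sq_add_sq_pos hτ
    (fun τ hτ ↦ ((S.continuousAt_A (S.m_pos.trans (hvalid τ hτ).2).ne').comp
      (f := fun τ ↦ (a, τ)) (by fun_prop)).continuousWithinAt)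
    (S.continuous_B.comp (Continuous.prodMk_right a)).continuousOn (S.z_pos ha le_rfl).ne'

theorem sq_add_sq_pos_of_mem_Icc (S : ShootingFamily P Q lam R W c) (hQ : Q = P * lam ^ 2)
    (ha : a ∈ Set.Ioc 0 S.δ) (hτ : τ ∈ Set.Icc S.τ₀ (S.T a)) :
    0 < S.z a τ ^ 2 + S.y a τ ^ 2 :=
  S.sq_add_sq_pos hQ ha hτ.1 fun _ hs ↦ S.valid_of_mem_Icc ha ⟨hs.1, hs.2.trans hτ.2⟩

theorem valid_of_abs_z_le (S : ShootingFamily P Q lam R W c) (hz : |S.z a τ| ≤ lam / 2)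
    (hy : |S.y a τ| ≤ 1) : |S.v a τ| < W ∧ lam / 2 ≤ S.φ a τ := by
  have hW := S.le_W
  have hlam := S.lam_pos
  rw [z, abs_le] at hz
  rw [y, abs_le] at hy
  exact ⟨abs_lt.2 ⟨by linarith, by linarith⟩, by linarith⟩

theorem exitSystem (S : ShootingFamily P Q lam R W c) (hP : 0 ≤ P) (hlam : 1 / 2 ≤ lam)
    (hQ : Q = P * lam ^ 2) (hR : 3 * P * lam + 8 * P + 8 ≤ R) (ha : a ∈ Set.Ioc 0 S.δ) :
    ExitSystem (fun x ↦ S.A a (S.T a + x)) (fun x ↦ S.B a (S.T a + x))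
      (fun x ↦ S.z a (S.T a + x)) (fun x ↦ S.y a (S.T a + x)) R lam := by
  have hlam₀ := S.lam_pos
  have hPlam : 0 ≤ P * lam := by positivity
  have hfar {x : ℝ} (hx : 0 ≤ x) : 3 * P * lam + 8 * P + 8 ≤ a * exp (S.T a + x) := by
    rw [S.mul_exp_T_add ha.1]
    exact hR.trans (le_mul_of_one_le_right S.R_pos.le (one_le_exp hx))
  obtain ⟨hφT, hvT⟩ := S.near_cone ha (S.τ₁_le_T ha) (S.mul_exp_T ha.1).le
  exact {
    le_R := by linarith
    le_lam := hlam
    continuous_y := S.continuous_y.comp (by fun_prop : Continuous fun x ↦ (a, S.T a + x))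
    hasDerivAt_z := fun x ↦ (S.hasDerivAt_z a (S.T a + x)).comp_const_add (S.T a) x
    hasDerivAt_y := fun x hx hz hy ↦ by
      obtain ⟨hv, hφ⟩ := S.valid_of_abs_z_le hz hy
      exact (S.hasDerivAt_y hQ ha (by linarith [S.τ₀_le_T ha]) hv
        (S.m_lt.trans_le hφ)).comp_const_add (S.T a) x
    A_nonneg := fun x _ hz hy ↦
      (coneStiffness_mem_Icc hP hlam₀ (S.valid_of_abs_z_le hz hy).2).1
    one_add_A_le := fun x hx hz hy ↦
      one_add_coneStiffness_le_coneDamping hP hlam₀ (S.valid_of_abs_z_le hz hy).2 (hfar hx)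
    forcing_lt := fun x hx hz hy ↦ by
      rw [← S.mul_exp_T_add ha.1]
      exact mul_coneStiffness_mul_lt hP hlam₀ (S.valid_of_abs_z_le hz hy).2 (hfar hx)
        (abs_nonneg _) hz
    abs_z_zero_le := by
      rw [add_zero]
      exact hφT.trans S.d_le
    abs_y_zero_lt := by
      rw [add_zero, y]
      calc |S.v a (S.T a) - S.φ a (S.T a)|
          ≤ |S.v a (S.T a) - lam| + |lam - S.φ a (S.T a)| := abs_sub_le _ _ _
        _ ≤ 2 * S.d := by rw [abs_sub_comm lam]; linarith
        _ < 1 / R := S.two_mul_d_lt }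

end Dynamics

section Angle

/-- The time `τ`, truncated to the interval `[τ₀, T a]` on which the profile is controlled. -/
noncomputable def clampTime (S : ShootingFamily P Q lam R W c) (a τ : ℝ) : ℝ :=
  max S.τ₀ (min τ (S.T a))

/-- The polar angle of `(z, y)` at time `τ ∈ [τ₀, T a]`, continuous in `τ`. -/
noncomputable def angle (S : ShootingFamily P Q lam R W c) (a τ : ℝ) : ℝ :=
  arctan (S.y a S.τ₀ / S.z a S.τ₀) + ∫ t in S.τ₀..τ,
    angularRate (S.A a (S.clampTime a t)) (S.B a (S.clampTime a t)) (S.z a (S.clampTime a t))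
      (S.y a (S.clampTime a t))

/-- The polar angle of `(z, y)` when the profile reaches the radius `R`. -/
noncomputable def finalAngle (S : ShootingFamily P Q lam R W c) (a : ℝ) : ℝ := S.angle a (S.T a)

theorem clampTime_mem_Icc (S : ShootingFamily P Q lam R W c) (ha : a ∈ Set.Ioc 0 S.δ) (τ : ℝ) :
    S.clampTime a τ ∈ Set.Icc S.τ₀ (S.T a) :=
  ⟨le_max_left _ _, max_le (S.τ₀_le_T ha) (min_le_right _ _)⟩

theorem clampTime_of_mem_Icc (S : ShootingFamily P Q lam R W c) (hτ : τ ∈ Set.Icc S.τ₀ (S.T a)) :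
    S.clampTime a τ = τ := by
  rw [clampTime, min_eq_left hτ.2, max_eq_right hτ.1]

theorem continuousOn_T (S : ShootingFamily P Q lam R W c) : ContinuousOn S.T (Set.Ioi 0) :=
  ContinuousOn.log (continuousOn_const.div continuousOn_id fun _ ha ↦ ne_of_gt ha)
    fun _ ha ↦ (div_pos S.R_pos ha).ne'

theorem continuous_T_restrict (S : ShootingFamily P Q lam R W c) :
    Continuous fun a : Set.Ioc 0 S.δ ↦ S.T a :=
  continuousOn_iff_continuous_domRestrict.1 (S.continuousOn_T.mono fun _ ha ↦ ha.1)

theorem continuous_angularRate_clampTime (S : ShootingFamily P Q lam R W c) (hQ : Q = P * lam ^ 2) :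
    Continuous (Function.uncurry fun (a : Set.Ioc 0 S.δ) t ↦
      angularRate (S.A a (S.clampTime a t)) (S.B a (S.clampTime a t)) (S.z a (S.clampTime a t))
        (S.y a (S.clampTime a t))) := by
  have hclamp : Continuous fun x : Set.Ioc 0 S.δ × ℝ ↦ ((x.1 : ℝ), S.clampTime x.1 x.2) := by
    have := S.continuous_T_restrict.comp (continuous_fst (Y := ℝ))
    exact (continuous_subtype_val.comp continuous_fst).prodMk
      (continuous_const.max (continuous_snd.min this))
  have hz := S.continuous_z.comp hclamp
  have hy := S.continuous_y.comp hclamp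
  have hB := S.continuous_B.comp hclamp
  have hA : Continuous fun x : Set.Ioc 0 S.δ × ℝ ↦ S.A x.1 (S.clampTime x.1 x.2) :=
    continuous_iff_continuousAt.2 fun ⟨a, τ⟩ ↦ by
      have hφ := S.m_pos.trans (S.valid_of_mem_Icc a.2 (S.clampTime_mem_Icc a.2 τ)).2
      exact ContinuousAt.comp (g := Function.uncurry S.A)
        (f := fun x : Set.Ioc 0 S.δ × ℝ ↦ ((x.1 : ℝ), S.clampTime x.1 x.2)) (x := (a, τ))
        (S.continuousAt_A hφ.ne') hclamp.continuousAt
  exact ((hz.mul ((hA.neg.mul hz).add (hB.mul hy))).sub (hy.mul hy)).div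
    ((hz.pow 2).add (hy.pow 2))
    fun ⟨a, τ⟩ ↦ (S.sq_add_sq_pos_of_mem_Icc hQ a.2 (S.clampTime_mem_Icc a.2 τ)).ne'

theorem continuousOn_finalAngle (S : ShootingFamily P Q lam R W c) (hQ : Q = P * lam ^ 2) :
    ContinuousOn S.finalAngle (Set.Ioc 0 S.δ) := by
  rw [continuousOn_iff_continuous_domRestrict]
  have hinit : Continuous fun a : Set.Ioc 0 S.δ ↦ ((a : ℝ), S.τ₀) := by fun_prop
  exact (continuous_arctan.comp ((S.continuous_y.comp hinit).div (S.continuous_z.comp hinit)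
    fun a ↦ (S.z_pos a.2 le_rfl).ne')).add
      (intervalIntegral.continuous_parametric_intervalIntegral_of_continuous
        (S.continuous_angularRate_clampTime hQ) S.continuous_T_restrict)

theorem hasDerivAt_angle (S : ShootingFamily P Q lam R W c) (hQ : Q = P * lam ^ 2)
    (ha : a ∈ Set.Ioc 0 S.δ) (hτ : τ ∈ Set.Icc S.τ₀ (S.T a)) :
    HasDerivAt (S.angle a) (angularRate (S.A a τ) (S.B a τ) (S.z a τ) (S.y a τ)) τ := by
  have hcont := (S.continuous_angularRate_clampTime hQ).comp
    (Continuous.prodMk_right (⟨a, ha⟩ : Set.Ioc 0 S.δ))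
  have := (hcont.integral_hasStrictDerivAt S.τ₀ τ).hasDerivAt
  simp only [Function.comp_apply, Function.uncurry, S.clampTime_of_mem_Icc hτ] at this
  exact this.const_add _

theorem angle_τ₀ (S : ShootingFamily P Q lam R W c) (a : ℝ) :
    S.angle a S.τ₀ = arctan (S.y a S.τ₀ / S.z a S.τ₀) := by
  rw [angle, intervalIntegral.integral_same, add_zero]

theorem angle_τ₀_mem_Ioo (S : ShootingFamily P Q lam R W c) (a : ℝ) :
    S.angle a S.τ₀ ∈ Set.Ioo (-(π / 2)) (π / 2) :=
  S.angle_τ₀ a ▸ arctan_mem_Ioo _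

theorem eq_sqrt_mul_cos_and_sin (S : ShootingFamily P Q lam R W c) (hQ : Q = P * lam ^ 2)
    (ha : a ∈ Set.Ioc 0 S.δ) (hτ : τ ∈ Set.Icc S.τ₀ (S.T a)) :
    S.z a τ = √(S.z a τ ^ 2 + S.y a τ ^ 2) * cos (S.angle a τ) ∧
      S.y a τ = √(S.z a τ ^ 2 + S.y a τ ^ 2) * sin (S.angle a τ) :=
  (S.isPlanarTrajectory hQ ha fun _ hτ ↦ S.valid_of_mem_Icc ha hτ).eq_sqrt_mul_cos_and_sin
    (fun _ hτ ↦ S.sq_add_sq_pos_of_mem_Icc hQ ha hτ) (S.z_pos ha le_rfl)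
    (fun _ hτ ↦ S.hasDerivAt_angle hQ ha hτ) (S.angle_τ₀ a) hτ

theorem cos_angle_eq_zero_iff (S : ShootingFamily P Q lam R W c) (hQ : Q = P * lam ^ 2)
    (ha : a ∈ Set.Ioc 0 S.δ) (hτ : τ ∈ Set.Icc S.τ₀ (S.T a)) :
    cos (S.angle a τ) = 0 ↔ S.z a τ = 0 := by
  have hsqrt := (sqrt_pos.2 (S.sq_add_sq_pos_of_mem_Icc hQ ha hτ)).ne'
  rw [(S.eq_sqrt_mul_cos_and_sin hQ ha hτ).1, mul_eq_zero, or_iff_right hsqrt]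

theorem angularRate_neg (S : ShootingFamily P Q lam R W c) (hQ : Q = P * lam ^ 2)
    (ha : a ∈ Set.Ioc 0 S.δ) (hτ : τ ∈ Set.Icc S.τ₀ (S.T a)) (hcos : cos (S.angle a τ) = 0) :
    angularRate (S.A a τ) (S.B a τ) (S.z a τ) (S.y a τ) < 0 := by
  have hpos := S.sq_add_sq_pos_of_mem_Icc hQ ha hτ
  rw [S.cos_angle_eq_zero_iff hQ ha hτ] at hcos
  rw [hcos] at hpos ⊢
  rw [angularRate_zero_left _ _ fun hy ↦ by simp [hy] at hpos]
  norm_num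

theorem angle_le_of_le (S : ShootingFamily P Q lam R W c) (hQ : Q = P * lam ^ 2)
    (ha : a ∈ Set.Ioc 0 S.δ) {l : ℝ} (hl : cos l = 0) (hτ : τ ∈ Set.Icc S.τ₀ (S.T a))
    (hle : S.angle a τ ≤ l) (ht : t ∈ Set.Icc τ (S.T a)) : S.angle a t ≤ l := by
  rcases ht.1.eq_or_lt with rfl | hlt
  · exact hle
  · exact (lt_of_le_of_cos_eq_zero (fun _ ↦ S.hasDerivAt_angle hQ ha)
      (fun _ ↦ S.angularRate_neg hQ ha) hl hτ.1 hle ⟨hlt, ht.2⟩).le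

theorem angularRate_le (S : ShootingFamily P Q lam R W c) (hQ : Q = P * lam ^ 2)
    (ha : a ∈ Set.Ioc 0 S.δ) (hτ : S.τ₁ ≤ τ) (hr₀ : a * exp τ ≤ S.r₀) :
    angularRate (S.A a τ) (S.B a τ) (S.z a τ) (S.y a τ) ≤ -(1 / 52) := by
  have ha₀ := ha.1
  have hR := hr₀.trans S.r₀_le
  have hT : τ ≤ S.T a := by rwa [T, le_log_iff_exp_le (div_pos S.R_pos ha₀), le_div_iff₀' ha₀]
  obtain ⟨hφ, hv⟩ := S.near_cone ha hτ hR
  have hr : |(a * exp τ) ^ 2| ≤ S.d := by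
    rw [abs_of_nonneg (sq_nonneg _)]
    exact (pow_le_pow_left₀ (by positivity) hr₀ 2).trans S.sq_r₀_le
  rw [angularRate, div_le_iff₀ (S.sq_add_sq_pos_of_mem_Icc hQ ha ⟨S.τ₀_le_τ₁.trans hτ, hT⟩)]
  exact le_trans (by rw [A, B]; apply le_of_eq; ring) (S.rotation_form_le hφ hv hr _ _)

theorem finalAngle_le (S : ShootingFamily P Q lam R W c) (hQ : Q = P * lam ^ 2)
    (ha : a ∈ Set.Ioc 0 S.δ) {l : ℝ} (hl : cos l = 0)
    (hal : π / 2 - (log (S.r₀ / a) - S.τ₁) / 52 ≤ l) : S.finalAngle a ≤ l := by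
  have hr₀ := S.r₀_pos
  have ha₀ := ha.1
  have hexp : a * exp (log (S.r₀ / a)) = S.r₀ := by
    rw [exp_log (by positivity), mul_div_cancel₀ _ ha.1.ne']
  have hτ₁ : S.τ₁ ≤ log (S.r₀ / a) := by
    rw [le_log_iff_exp_le (by positivity), le_div_iff₀' ha₀]
    exact (mul_le_mul_of_nonneg_right ha.2 (exp_pos _).le).trans S.δ_mul_exp_le
  have hT : log (S.r₀ / a) ≤ S.T a := by
    have := S.r₀_le
    unfold T
    gcongr
  set s := log (S.r₀ / a)
  have hmem {τ : ℝ} (hτ : τ ∈ Set.Icc S.τ₁ s) : τ ∈ Set.Icc S.τ₀ (S.T a) :=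
    ⟨S.τ₀_le_τ₁.trans hτ.1, hτ.2.trans hT⟩
  have hstart : S.angle a S.τ₁ ≤ π / 2 :=
    S.angle_le_of_le hQ ha cos_pi_div_two ⟨le_rfl, S.τ₀_le_T ha⟩ (S.angle_τ₀_mem_Ioo a).2.le
      ⟨S.τ₀_le_τ₁, S.τ₁_le_T ha⟩
  have hderiv : ∀ τ ∈ Set.Icc S.τ₁ s, HasDerivAt (fun τ ↦ S.angle a τ + τ / 52)
      (angularRate (S.A a τ) (S.B a τ) (S.z a τ) (S.y a τ) + 1 / 52) τ := fun τ hτ ↦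
    (S.hasDerivAt_angle hQ ha (hmem hτ)).add ((hasDerivAt_id τ).div_const 52)
  have hrot := le_of_hasDerivAt_nonpos hτ₁ (HasDerivAt.continuousOn hderiv)
    (fun τ hτ ↦ hderiv τ (Set.Ioo_subset_Icc_self hτ)) fun τ hτ ↦ by
      have hτr₀ : a * exp τ ≤ S.r₀ := by
        rw [← hexp]
        gcongr
        exact hτ.2.le
      linarith [S.angularRate_le hQ ha hτ.1.le hτr₀]
  exact S.angle_le_of_le hQ ha hl (hmem ⟨hτ₁, le_rfl⟩) (by linarith) ⟨hT, le_rfl⟩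

theorem eventually_finalAngle_le (S : ShootingFamily P Q lam R W c) (hQ : Q = P * lam ^ 2)
    (k : ℕ) : ∀ᶠ a in nhdsWithin 0 (Set.Ioi 0), S.finalAngle a ≤ crossingAngle k := by
  have hlog : Tendsto (fun a ↦ log (S.r₀ / a)) (nhdsWithin 0 (Set.Ioi 0)) atTop :=
    tendsto_log_atTop.comp (tendsto_inv_nhdsGT_zero.const_mul_atTop S.r₀_pos)
  filter_upwards [hlog.eventually_ge_atTop (S.τ₁ + 52 * (π / 2 - crossingAngle k)),
    Ioc_mem_nhdsGT S.δ_pos] with a hlarge ha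
  exact S.finalAngle_le hQ ha (cos_crossingAngle k) (by linarith)

end Angle

section ExitDirection

/-- The initial heights for which the profile, once beyond the radius `R`, bends upward. -/
def upward (S : ShootingFamily P Q lam R W c) : Set ℝ :=
  {a | 0 < a ∧ ExitsUpward R fun x ↦ S.y a (S.T a + x)}

/-- The initial heights for which the profile, once beyond the radius `R`, bends downward. -/
def downward (S : ShootingFamily P Q lam R W c) : Set ℝ :=
  {a | 0 < a ∧ ExitsUpward R fun x ↦ -S.y a (S.T a + x)}

theorem continuousOn_y_T_add (S : ShootingFamily P Q lam R W c) :
    ContinuousOn (Function.uncurry fun a x ↦ S.y a (S.T a + x)) (Set.Ioi 0 ×ˢ Set.univ) :=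
  S.continuous_y.comp_continuousOn (continuousOn_fst.prodMk
    ((S.continuousOn_T.comp continuousOn_fst fun _ h ↦ h.1).add continuousOn_snd))

theorem isOpen_upward (S : ShootingFamily P Q lam R W c) : IsOpen S.upward :=
  isOpen_iff_mem_nhds.2 fun _ ⟨ha, hup⟩ ↦
    (lt_mem_nhds ha).and (hup.eventually S.continuousOn_y_T_add (Ioi_mem_nhds ha))

theorem isOpen_downward (S : ShootingFamily P Q lam R W c) : IsOpen S.downward :=
  isOpen_iff_mem_nhds.2 fun _ ⟨ha, hdown⟩ ↦ (lt_mem_nhds ha).and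
    (hdown.eventually (y := fun a x ↦ -S.y a (S.T a + x)) S.continuousOn_y_T_add.neg
      (Ioi_mem_nhds ha))

theorem disjoint_upward_downward (S : ShootingFamily P Q lam R W c) :
    Disjoint S.upward S.downward :=
  Set.disjoint_left.2 fun _ hup hdown ↦ hup.2.not_neg hdown.2

theorem mem_upward_and_mem_downward (S : ShootingFamily P Q lam R W c) (hP : 0 ≤ P)
    (hlam : 1 / 2 ≤ lam) (hQ : Q = P * lam ^ 2) (hR : 3 * P * lam + 8 * P + 8 ≤ R)
    (ha : a ∈ Set.Ioc 0 S.δ) {k : ℕ} (hk : S.finalAngle a = crossingAngle k) :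
    (Even k → a ∈ S.upward) ∧ (Odd k → a ∈ S.downward) := by
  have hexit := S.exitSystem hP hlam hQ hR ha
  have hT : S.T a ∈ Set.Icc S.τ₀ (S.T a) := ⟨S.τ₀_le_T ha, le_rfl⟩
  have hpos := sqrt_pos.2 (S.sq_add_sq_pos_of_mem_Icc hQ ha hT)
  obtain ⟨hz, hy⟩ := S.eq_sqrt_mul_cos_and_sin hQ ha hT
  rw [← finalAngle, hk] at hz hy
  rw [cos_crossingAngle, mul_zero] at hz
  rw [sin_crossingAngle] at hy
  refine ⟨fun heven ↦ ⟨ha.1, hexit.exitsUpward_of_z_eq_zero ?_ ?_⟩,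
    fun hodd ↦ ⟨ha.1, hexit.neg.exitsUpward_of_z_eq_zero ?_ ?_⟩⟩
  · rwa [add_zero]
  · rw [heven.neg_one_pow, mul_one] at hy
    rwa [add_zero, hy]
  · rw [add_zero, hz, neg_zero]
  · rw [hodd.neg_one_pow, mul_neg_one] at hy
    rwa [add_zero, hy, neg_neg]

end ExitDirection

end ShootingFamily

/-! ### Shooting -/

section LastHit

variable {f Θ : ℝ → ℝ} {a b c δ l l' x y : ℝ} {U V : Set ℝ}

theorem exists_last_hit (hab : a ≤ b) (hf : ContinuousOn f (Set.Icc a b)) (ha : f a ≤ c)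
    (hb : c < f b) : ∃ s ∈ Set.Ico a b, f s = c ∧ ∀ t ∈ Set.Ioc s b, c < f t := by
  obtain ⟨s, hs, hfs, hlt⟩ := exists_first_hit (f := fun t ↦ -f (-t)) (c := -c)
    (neg_le_neg hab)
    (hf.comp continuousOn_neg fun t ht ↦ ⟨by linarith [ht.2], by linarith [ht.1]⟩).neg
    (by simpa using hb) (by simpa using ha)
  refine ⟨-s, ⟨by linarith [hs.2], by linarith [hs.1]⟩, neg_injective hfs, fun t ht ↦ ?_⟩
  have := hlt (-t) ⟨by linarith [ht.2], by linarith [ht.1]⟩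
  rw [neg_neg] at this
  exact neg_lt_neg_iff.1 this

theorem exists_mem_Ioo_notMem_of_isOpen (hU : IsOpen U) (hV : IsOpen V) (hUV : Disjoint U V)
    (hxy : x ≤ y) (hx : x ∈ U) (hy : y ∈ V) : ∃ s ∈ Set.Ioo x y, s ∉ U ∧ s ∉ V := by
  have hnot : ¬ Set.Icc x y ⊆ U ∪ V := fun hsub ↦ by
    obtain ⟨s, -, hs⟩ := isPreconnected_Icc U V hU hV hsub ⟨x, ⟨le_rfl, hxy⟩, hx⟩
      ⟨y, ⟨hxy, le_rfl⟩, hy⟩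
    exact hUV.notMem_of_mem_left hs.1 hs.2
  obtain ⟨s, hs, hsUV⟩ := Set.not_subset.1 hnot
  rw [Set.mem_union, not_or] at hsUV
  exact ⟨s, ⟨hs.1.lt_of_ne fun h ↦ hsUV.1 (h ▸ hx), hs.2.lt_of_ne fun h ↦ hsUV.2 (h ▸ hy)⟩, hsUV⟩

/-- `b` is the last point of `(0, δ)` at which `Θ` takes the value `l`, and `Θ` stays above `l`
from there up to `δ`. -/
structure IsLastHit (Θ : ℝ → ℝ) (δ l b : ℝ) : Prop where
  mem_Ioo : b ∈ Set.Ioo 0 δ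
  apply_eq : Θ b = l
  lt_apply : ∀ x ∈ Set.Ioc b δ, l < Θ x

theorem exists_isLastHit (hδ : 0 < δ) (hΘ : ContinuousOn Θ (Set.Ioc 0 δ)) (hl : l < Θ δ)
    (hsmall : ∀ᶠ a in nhdsWithin 0 (Set.Ioi 0), Θ a ≤ l) : ∃ b, IsLastHit Θ δ l b := by
  obtain ⟨a, haΘ, ha⟩ := (hsmall.and (Ioc_mem_nhdsGT hδ)).exists
  obtain ⟨b, hb, hbl, hlt⟩ := exists_last_hit ha.2
    (hΘ.mono (Set.Icc_subset_Ioc ha.1 le_rfl)) haΘ hl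
  exact ⟨b, ⟨ha.1.trans_le hb.1, hb.2⟩, hbl, hlt⟩

theorem IsLastHit.lt (h : IsLastHit Θ δ l a) (h' : IsLastHit Θ δ l' b) (hl : l < l') : a < b := by
  by_contra! hba
  rcases hba.eq_or_lt with rfl | hlt
  · exact hl.ne (h.apply_eq.symm.trans h'.apply_eq)
  · exact (h'.lt_apply a ⟨hlt, h.mem_Ioo.2.le⟩).not_gt (h.apply_eq.trans_lt hl)

theorem tendsto_zero_of_isLastHit {l b : ℕ → ℝ} (hΘ : ContinuousOn Θ (Set.Ioc 0 δ))
    (hl : Tendsto l atTop atBot) (hb : ∀ᶠ k in atTop, IsLastHit Θ δ (l k) (b k)) :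
    Tendsto b atTop (nhds 0) := by
  refine (nhdsGT_basis 0).tendsto_right_iff.2 (fun ε hε ↦ ?_) |>.mono_right nhdsWithin_le_nhds
  obtain ⟨M, hM⟩ := (isCompact_Icc.image_of_continuousOn
    (hΘ.mono (Set.Icc_subset_Ioc hε le_rfl))).bddBelow
  filter_upwards [hl.eventually_lt_atBot M, hb] with k hk hbk
  refine ⟨hbk.mem_Ioo.1, not_le.1 fun hεb ↦ ?_⟩
  have := hM ⟨b k, ⟨hεb, hbk.mem_Ioo.2.le⟩, hbk.apply_eq⟩
  exact this.not_gt hk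

theorem exists_between_isLastHit {k : ℕ} (hΘ : ContinuousOn Θ (Set.Ioc 0 δ)) (hU : IsOpen U)
    (hV : IsOpen V) (hUV : Disjoint U V)
    (hsign : ∀ a ∈ Set.Ioc 0 δ, ∀ k, Θ a = crossingAngle k → (Even k → a ∈ U) ∧ (Odd k → a ∈ V))
    (ha : IsLastHit Θ δ (crossingAngle (k + 1)) a) (hb : IsLastHit Θ δ (crossingAngle k) b) :
    ∃ s ∈ Set.Ioo a b, s ∉ U ∧ s ∉ V ∧
      Θ s ∈ Set.Ioo (crossingAngle (k + 1)) (crossingAngle k) := by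
  have hlevel := crossingAngle_strictAnti k.lt_succ_self
  have hsub : Set.Icc a b ⊆ Set.Ioc 0 δ := Set.Icc_subset_Ioc ha.mem_Ioo.1 hb.mem_Ioo.2.le
  obtain ⟨c, hc, hcΘ, hlt⟩ := exists_first_hit (ha.lt hb hlevel).le (hΘ.mono hsub)
    (ha.apply_eq.trans_lt hlevel) hb.apply_eq.ge
  have hsign_a := hsign a ⟨ha.mem_Ioo.1, ha.mem_Ioo.2.le⟩ _ ha.apply_eq
  have hsign_c := hsign c (hsub ⟨hc.1.le, hc.2⟩) _ hcΘ
  obtain ⟨s, hs, hsUV⟩ : ∃ s ∈ Set.Ioo a c, s ∉ U ∧ s ∉ V := by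
    rcases Nat.even_or_odd k with hk | hk
    · obtain ⟨s, hs, hsV, hsU⟩ := exists_mem_Ioo_notMem_of_isOpen hV hU hUV.symm hc.1.le
        (hsign_a.2 hk.add_one) (hsign_c.1 hk)
      exact ⟨s, hs, hsU, hsV⟩
    · exact exists_mem_Ioo_notMem_of_isOpen hU hV hUV hc.1.le (hsign_a.1 hk.add_one)
        (hsign_c.2 hk)
  exact ⟨s, ⟨hs.1, hs.2.trans_le hc.2⟩, hsUV.1, hsUV.2,
    ha.lt_apply s ⟨hs.1, (hs.2.le.trans hc.2).trans hb.mem_Ioo.2.le⟩, hlt s ⟨hs.1.le, hs.2⟩⟩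

-- Between two consecutive last hits the side on which the solution exits changes, so some
-- solution in between does not exit at all.
theorem exists_shooting_sequence (hδ : 0 < δ) (hΘ : ContinuousOn Θ (Set.Ioc 0 δ))
    (hsmall : ∀ k, ∀ᶠ a in nhdsWithin 0 (Set.Ioi 0), Θ a ≤ crossingAngle k) (hU : IsOpen U)
    (hV : IsOpen V) (hUV : Disjoint U V)
    (hsign : ∀ a ∈ Set.Ioc 0 δ, ∀ k, Θ a = crossingAngle k →
      (Even k → a ∈ U) ∧ (Odd k → a ∈ V)) :
    ∃ (K : ℕ) (a : ℕ → ℝ), (∀ k ≥ K, ∀ l, k < l → a l < a k) ∧ Tendsto a atTop (nhds 0) ∧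
      ∀ k ≥ K, a k ∈ Set.Ioc 0 δ ∧ a k ∉ U ∧ a k ∉ V ∧
        Θ (a k) ∈ Set.Ioo (crossingAngle (k + 1)) (crossingAngle k) := by
  obtain ⟨K, hK⟩ := eventually_atTop.1 (tendsto_crossingAngle.eventually_lt_atBot (Θ δ))
  have hlast : ∀ k ≥ K, ∃ b, IsLastHit Θ δ (crossingAngle k) b := fun k hk ↦
    exists_isLastHit hδ hΘ (hK k hk) (hsmall k)
  choose! b hb using hlast
  have hbetween : ∀ k ≥ K, ∃ s ∈ Set.Ioo (b (k + 1)) (b k), s ∉ U ∧ s ∉ V ∧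
      Θ s ∈ Set.Ioo (crossingAngle (k + 1)) (crossingAngle k) := fun k hk ↦
    exists_between_isLastHit hΘ hU hV hUV hsign (hb (k + 1) (by lia)) (hb k hk)
  choose! a ha haUV using hbetween
  have hapos {k : ℕ} (hk : K ≤ k) : 0 < a k := (hb (k + 1) (by lia)).mem_Ioo.1.trans (ha k hk).1
  have hblim : Tendsto b atTop (nhds 0) :=
    tendsto_zero_of_isLastHit hΘ tendsto_crossingAngle (eventually_atTop.2 ⟨K, hb⟩)
  refine ⟨K, a, fun k hk l hkl ↦ ?_, ?_, fun k hk ↦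
    ⟨⟨hapos hk, ((ha k hk).2.trans (hb k hk).mem_Ioo.2).le⟩, haUV k hk⟩⟩
  · have hbl : b l ≤ b (k + 1) := by
      rcases (Nat.succ_le_of_lt hkl).eq_or_lt with rfl | hlt
      · exact le_rfl
      · exact ((hb l (by lia)).lt (hb (k + 1) (by lia)) (crossingAngle_strictAnti hlt)).le
    exact ((ha l (by lia)).2.trans_le hbl).trans (ha k hk).1
  · refine squeeze_zero' ?_ ?_ hblim
    · filter_upwards [eventually_ge_atTop K] with k hk using (hapos hk).le
    · filter_upwards [eventually_ge_atTop K] with k hk using (ha k hk).2.le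

end LastHit

/-! ### The self-shrinker profiles -/

theorem contDiffOn_two_of_hasDerivAt {u u' u'' : ℝ → ℝ} {s : Set ℝ} (hs : IsOpen s)
    (hu : ∀ r ∈ s, HasDerivAt u (u' r) r) (hu' : ∀ r ∈ s, HasDerivAt u' (u'' r) r)
    (hu'' : ContinuousOn u'' s) : ContDiffOn ℝ 2 u s := by
  rw [← one_add_one_eq_two, contDiffOn_succ_iff_deriv_of_isOpen hs]
  refine ⟨fun r hr ↦ (hu r hr).differentiableAt.differentiableWithinAt, by simp,
    ContDiffOn.congr ?_ fun r hr ↦ (hu r hr).deriv⟩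
  rw [← zero_add 1, contDiffOn_succ_iff_deriv_of_isOpen hs, contDiffOn_zero]
  exact ⟨fun r hr ↦ (hu' r hr).differentiableAt.differentiableWithinAt, by simp,
    hu''.congr fun r hr ↦ (hu' r hr).deriv⟩

namespace ShootingFamily

variable {P Q lam R W c a r τ ρ : ℝ}

section Profile

/-- The profile `u` with `u 0 = a`, obtained from its rescaling `U a`. -/
noncomputable def profile (S : ShootingFamily P Q lam R W c) (a r : ℝ) : ℝ := a * S.U a (r / a)

/-- The derivative of `profile`. -/
noncomputable def slope (S : ShootingFamily P Q lam R W c) (a r : ℝ) : ℝ := S.w a (r / a)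

theorem profile_zero (S : ShootingFamily P Q lam R W c) (a : ℝ) : S.profile a 0 = a := by
  rw [profile, zero_div, S.U_zero, mul_one]

theorem slope_zero (S : ShootingFamily P Q lam R W c) (a : ℝ) : S.slope a 0 = 0 := by
  rw [slope, zero_div, S.w_zero]

theorem continuous_profile (S : ShootingFamily P Q lam R W c) (a : ℝ) :
    Continuous (S.profile a) :=
  continuous_const.mul ((S.continuous_U_apply a).comp (continuous_id.div_const a))

theorem continuous_slope (S : ShootingFamily P Q lam R W c) (a : ℝ) : Continuous (S.slope a) :=
  (S.continuous_w_apply a).comp (continuous_id.div_const a)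

theorem profile_mul_exp (S : ShootingFamily P Q lam R W c) (ha : a ≠ 0) (τ : ℝ) :
    S.profile a (a * exp τ) = S.φ a τ * (a * exp τ) := by
  rw [profile, mul_div_cancel_left₀ _ ha, S.U_exp]
  ring

theorem profile_mul_exp_eq_iff (S : ShootingFamily P Q lam R W c) (ha : 0 < a) :
    S.profile a (a * exp τ) = lam * (a * exp τ) ↔ S.z a τ = 0 := by
  rw [S.profile_mul_exp ha.ne', mul_left_inj' (by positivity), z, sub_eq_zero]

theorem setOf_profile_eq (S : ShootingFamily P Q lam R W c) (ha : 0 < a) :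
    {r | 0 < r ∧ S.profile a r = lam * r} = (fun τ ↦ a * exp τ) '' {τ | S.z a τ = 0} := by
  ext r
  constructor
  · rintro ⟨hr, hcross⟩
    have hexp : a * exp (log (r / a)) = r := by
      rw [exp_log (by positivity), mul_div_cancel₀ _ ha.ne']
    rw [← hexp, S.profile_mul_exp_eq_iff ha] at hcross
    exact ⟨log (r / a), hcross, hexp⟩
  · rintro ⟨τ, hτ, rfl⟩
    exact ⟨by positivity, (S.profile_mul_exp_eq_iff ha).2 hτ⟩

theorem hasDerivAt_profile (S : ShootingFamily P Q lam R W c) (ha : a ≠ 0) (r : ℝ) :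
    HasDerivAt (S.profile a) (S.slope a r) r := by
  have h := ((S.hasDerivAt_U a (r / a)).comp r ((hasDerivAt_id r).div_const a)).const_mul a
  exact h.congr_deriv (by rw [slope]; field_simp)

theorem tendsto_profile_div (S : ShootingFamily P Q lam R W c) (ha : 0 < a) {L : ℝ}
    (hφ : Tendsto (S.φ a) atTop (nhds L)) :
    Tendsto (fun r ↦ S.profile a r / r) atTop (nhds L) := by
  have hlog : Tendsto (fun r ↦ log (r / a)) atTop atTop :=
    tendsto_log_atTop.comp (tendsto_id.atTop_div_const ha)
  refine (hφ.comp hlog).congr' ?_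
  filter_upwards [eventually_gt_atTop 0] with r hr
  have hexp : a * exp (log (r / a)) = r := by
    rw [exp_log (by positivity), mul_div_cancel₀ _ ha.ne']
  have h := S.profile_mul_exp ha.ne' (log (r / a))
  rw [hexp] at h
  rw [h, mul_div_cancel_right₀ _ hr.ne', Function.comp_apply]

end Profile

section Global

theorem bounds_of_valid (S : ShootingFamily P Q lam R W c) (ha : a ∈ Set.Ioc 0 S.δ)
    (hvalid : ∀ τ ≥ S.τ₀, |S.v a τ| < W ∧ S.m < S.φ a τ) (hρ : 0 ≤ ρ) :
    |S.w a ρ| < W ∧ c < S.U a ρ := by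
  rcases le_or_gt ρ (exp S.τ₀) with hle | hlt
  · exact ⟨(S.initial ha ⟨hρ, hle⟩).1, (S.initial ha ⟨hρ, hle⟩).2.1⟩
  · have hρ₀ : 0 < ρ := (exp_pos _).trans hlt
    have hτ : S.τ₀ ≤ log ρ := (le_log_iff_exp_le hρ₀).2 hlt.le
    have hv := (hvalid _ hτ).1
    have hU := S.c_lt_of_m_lt hτ (hvalid _ hτ).2
    rw [RescaledProfile.v, exp_log hρ₀] at hv
    rw [← S.U_exp, exp_log hρ₀] at hU
    exact ⟨hv, hU⟩

theorem profile_pos (S : ShootingFamily P Q lam R W c) (ha : a ∈ Set.Ioc 0 S.δ)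
    (hvalid : ∀ τ ≥ S.τ₀, |S.v a τ| < W ∧ S.m < S.φ a τ) (hr : 0 ≤ r) : 0 < S.profile a r :=
  mul_pos ha.1 (S.c_pos.trans (S.bounds_of_valid ha hvalid (div_nonneg hr ha.1.le)).2)

theorem hasDerivAt_slope (S : ShootingFamily P Q lam R W c) (ha : a ∈ Set.Ioc 0 S.δ)
    (hvalid : ∀ τ ≥ S.τ₀, |S.v a τ| < W ∧ S.m < S.φ a τ) (hr : 0 < r) :
    HasDerivAt (S.slope a) ((1 + S.slope a r ^ 2) *
      ((r / 2 - P / r) * S.slope a r - S.profile a r / 2 + Q / S.profile a r)) r := by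
  have ha₀ := ha.1
  have hρ : 0 < r / a := by positivity
  obtain ⟨hw, hU⟩ := S.bounds_of_valid ha hvalid hρ.le
  have hU₀ := S.c_pos.trans hU
  refine ((S.hasDerivAt_w (S.sq_le_one ha) hρ hw hU).comp r
    ((hasDerivAt_id r).div_const a)).congr_deriv ?_
  unfold slope profile
  generalize S.U a (r / a) = u at hU₀
  field_simp

theorem contDiffOn_profile (S : ShootingFamily P Q lam R W c) (ha : a ∈ Set.Ioc 0 S.δ)
    (hvalid : ∀ τ ≥ S.τ₀, |S.v a τ| < W ∧ S.m < S.φ a τ) :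
    ContDiffOn ℝ 2 (S.profile a) (Set.Ioi 0) := by
  refine contDiffOn_two_of_hasDerivAt isOpen_Ioi
    (fun r _ ↦ S.hasDerivAt_profile ha.1.ne' r) (fun r hr ↦ S.hasDerivAt_slope ha hvalid hr) ?_
  have hu := (S.continuous_profile a).continuousOn (s := Set.Ioi 0)
  have hw := (S.continuous_slope a).continuousOn (s := Set.Ioi 0)
  have hP : ContinuousOn (fun r : ℝ ↦ P / r) (Set.Ioi 0) :=
    continuousOn_const.div continuousOn_id fun r hr ↦ ne_of_gt hr
  have hQ : ContinuousOn (fun r ↦ Q / S.profile a r) (Set.Ioi 0) :=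
    continuousOn_const.div hu fun r hr ↦ (S.profile_pos ha hvalid (le_of_lt hr)).ne'
  fun_prop

theorem shrinker_equation (S : ShootingFamily P Q lam R W c) (ha : a ∈ Set.Ioc 0 S.δ)
    (hvalid : ∀ τ ≥ S.τ₀, |S.v a τ| < W ∧ S.m < S.φ a τ) (hr : 0 < r) :
    deriv (S.slope a) r / (1 + S.slope a r ^ 2) + (P / r - r / 2) * S.slope a r
      + S.profile a r / 2 - Q / S.profile a r = 0 := by
  rw [(S.hasDerivAt_slope ha hvalid hr).deriv, mul_div_cancel_left₀ _ (by positivity)]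
  ring

end Global

section Unbounded

theorem abs_mul_y_le_one (S : ShootingFamily P Q lam R W c) (hP : 0 ≤ P) (hlam : 1 / 2 ≤ lam)
    (hQ : Q = P * lam ^ 2) (hR : 3 * P * lam + 8 * P + 8 ≤ R) (ha : a ∈ Set.Ioc 0 S.δ)
    (hup : a ∉ S.upward) (hdown : a ∉ S.downward) {x : ℝ} (hx : 0 ≤ x) :
    |R * exp x * S.y a (S.T a + x)| ≤ 1 := by
  by_contra! hlt
  rcases (S.exitSystem hP hlam hQ hR ha).exitsUpward_or_neg hx hlt with h | h
  · exact hup ⟨ha.1, h⟩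
  · exact hdown ⟨ha.1, h⟩

theorem valid_of_le (S : ShootingFamily P Q lam R W c) (hP : 0 ≤ P) (hlam : 1 / 2 ≤ lam)
    (hQ : Q = P * lam ^ 2) (hR : 3 * P * lam + 8 * P + 8 ≤ R) (ha : a ∈ Set.Ioc 0 S.δ)
    (hbdd : ∀ x, 0 ≤ x → |R * exp x * S.y a (S.T a + x)| ≤ 1) (hτ : S.τ₀ ≤ τ) :
    |S.v a τ| < W ∧ S.m < S.φ a τ := by
  rcases le_or_gt τ (S.T a) with hle | hlt
  · exact S.valid_of_mem_Icc ha ⟨hτ, hle⟩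
  · have hexit := S.exitSystem hP hlam hQ hR ha
    have hx : 0 ≤ τ - S.T a := by linarith
    have hz := hexit.abs_z_le hx fun s hs ↦ hbdd s hs.1
    have hy := hexit.abs_y_le hx (hbdd _ hx)
    rw [add_sub_cancel] at hz hy
    obtain ⟨hv, hφ⟩ := S.valid_of_abs_z_le hz hy
    exact ⟨hv, S.m_lt.trans_le hφ⟩

theorem exists_tendsto_φ (S : ShootingFamily P Q lam R W c) (hP : 0 ≤ P) (hlam : 1 / 2 ≤ lam)
    (hQ : Q = P * lam ^ 2) (hR : 3 * P * lam + 8 * P + 8 ≤ R) (ha : a ∈ Set.Ioc 0 S.δ)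
    (hbdd : ∀ x, 0 ≤ x → |R * exp x * S.y a (S.T a + x)| ≤ 1) :
    ∃ L > 0, Tendsto (S.φ a) atTop (nhds L) := by
  obtain ⟨L, hL, hlim⟩ := (S.exitSystem hP hlam hQ hR ha).exists_tendsto hbdd
  refine ⟨L + lam, by linarith [(abs_le.1 hL).1], ?_⟩
  refine ((hlim.comp (tendsto_atTop_add_const_right atTop (-S.T a) tendsto_id)).add_const
    lam).congr fun τ ↦ ?_
  simp [z]

theorem z_ne_zero_of_T_le (S : ShootingFamily P Q lam R W c) (hP : 0 ≤ P) (hlam : 1 / 2 ≤ lam)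
    (hQ : Q = P * lam ^ 2) (hR : 3 * P * lam + 8 * P + 8 ≤ R) (ha : a ∈ Set.Ioc 0 S.δ)
    (hbdd : ∀ x, 0 ≤ x → |R * exp x * S.y a (S.T a + x)| ≤ 1) (hτ : S.T a ≤ τ) :
    S.z a τ ≠ 0 := by
  have hpos := S.sq_add_sq_pos hQ ha ((S.τ₀_le_T ha).trans hτ)
    fun s hs ↦ S.valid_of_le hP hlam hQ hR ha hbdd hs.1
  have hne := (S.exitSystem hP hlam hQ hR ha).z_ne_zero hbdd (x := τ - S.T a) (by linarith)
    (by rwa [add_sub_cancel])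
  rwa [add_sub_cancel] at hne

theorem setOf_z_eq_zero (S : ShootingFamily P Q lam R W c) (hP : 0 ≤ P) (hlam : 1 / 2 ≤ lam)
    (hQ : Q = P * lam ^ 2) (hR : 3 * P * lam + 8 * P + 8 ≤ R) (ha : a ∈ Set.Ioc 0 S.δ)
    (hbdd : ∀ x, 0 ≤ x → |R * exp x * S.y a (S.T a + x)| ≤ 1) :
    {τ | S.z a τ = 0} = {τ ∈ Set.Icc S.τ₀ (S.T a) | cos (S.angle a τ) = 0} := by
  ext τ
  refine ⟨fun hz ↦ ?_, fun ⟨hτ, hcos⟩ ↦ (S.cos_angle_eq_zero_iff hQ ha hτ).1 hcos⟩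
  have hτ : τ ∈ Set.Icc S.τ₀ (S.T a) :=
    ⟨not_lt.1 fun hlt ↦ (S.z_pos ha hlt.le).ne' hz,
      not_lt.1 fun hlt ↦ S.z_ne_zero_of_T_le hP hlam hQ hR ha hbdd hlt.le hz⟩
  exact ⟨hτ, (S.cos_angle_eq_zero_iff hQ ha hτ).2 hz⟩

theorem encard_setOf_profile_eq (S : ShootingFamily P Q lam R W c) (hP : 0 ≤ P)
    (hlam : 1 / 2 ≤ lam) (hQ : Q = P * lam ^ 2) (hR : 3 * P * lam + 8 * P + 8 ≤ R)
    (ha : a ∈ Set.Ioc 0 S.δ) (hbdd : ∀ x, 0 ≤ x → |R * exp x * S.y a (S.T a + x)| ≤ 1) {k : ℕ}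
    (hk : S.finalAngle a ∈ Set.Ioo (crossingAngle (k + 1)) (crossingAngle k)) :
    {r | 0 < r ∧ S.profile a r = lam * r}.encard = k := by
  have hinj : Function.Injective fun τ ↦ a * exp τ :=
    (mul_right_injective₀ ha.1.ne').comp exp_injective
  rw [S.setOf_profile_eq ha.1, hinj.encard_image, S.setOf_z_eq_zero hP hlam hQ hR ha hbdd]
  exact encard_cos_eq_zero (S.τ₀_le_T ha) (fun _ hτ ↦ S.hasDerivAt_angle hQ ha hτ)
    (fun _ hτ ↦ S.angularRate_neg hQ ha hτ) (S.angle_τ₀_mem_Ioo a) hk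

end Unbounded

end ShootingFamily

section ConeSlope

variable {p q : ℝ}

theorem sub_one_eq_mul_sq_sqrt_div (hp : 1 < p) (hq : 1 ≤ q) :
    q - 1 = (p - 1) * √((q - 1) / (p - 1)) ^ 2 := by
  have hp' : 0 < p - 1 := sub_pos.2 hp
  rw [sq_sqrt (div_nonneg (sub_nonneg.2 hq) hp'.le), mul_div_cancel₀ _ hp'.ne']

theorem sqrt_div_mem_Icc (hp : 2 ≤ p) (hq : 2 ≤ q) (hpq : p + q ≤ 7) :
    √((q - 1) / (p - 1)) ∈ Set.Icc (1 / 2) 2 := by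
  have hp' : 0 < p - 1 := by linarith
  refine ⟨le_sqrt_of_sq_le ?_, (sqrt_le_left (by norm_num)).2 ?_⟩
  · rw [le_div_iff₀ hp']
    linarith
  · rw [div_le_iff₀ hp']
    linarith

end ConeSlope

theorem self_shrinkers_with_k_crossings_general {p q lam : ℝ} (hp : 2 ≤ p) (hq : 2 ≤ q)
    (hpq : p + q ≤ 7) (hlam : lam = √((q - 1) / (p - 1))) :
    ∃ (K : ℕ) (a : ℕ → ℝ),
      (∀ k ≥ K, 0 < a k) ∧
      (∀ k ≥ K, ∀ l, k < l → a l < a k) ∧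
      Tendsto a atTop (nhds 0) ∧
      ∀ k ≥ K, ∃ (u u' : ℝ → ℝ) (α : ℝ),
        α ∈ Set.Ioo 0 (π / 2) ∧
        (∀ r ≥ (0 : ℝ), 0 < u r) ∧
        ContinuousOn u (Set.Ici 0) ∧
        ContDiffOn ℝ 2 u (Set.Ioi 0) ∧
        u 0 = a k ∧
        ContinuousOn u' (Set.Ici 0) ∧
        u' 0 = 0 ∧
        (∀ r > (0 : ℝ), HasDerivAt u (u' r) r) ∧
        (∀ r > (0 : ℝ),
            deriv u' r / (1 + u' r ^ 2)
              + ((p - 1) / r - r / 2) * u' r + u r / 2 - (q - 1) / u r = 0) ∧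
        Tendsto (fun r ↦ u r / r) atTop (nhds (tan α)) ∧
        {r : ℝ | 0 < r ∧ u r = lam * r}.Finite ∧
        {r : ℝ | 0 < r ∧ u r = lam * r}.ncard = k := by
  have hQ : q - 1 = (p - 1) * lam ^ 2 :=
    hlam ▸ sub_one_eq_mul_sq_sqrt_div (by linarith) (by linarith)
  obtain ⟨hlam₁, hlam₂⟩ : lam ∈ Set.Icc (1 / 2) 2 := hlam ▸ sqrt_div_mem_Icc hp hq hpq
  have hP : 0 ≤ p - 1 := by linarith
  obtain ⟨W, c, ⟨S⟩⟩ := exists_shootingFamily (P := p - 1) (Q := q - 1) (lam := lam)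
    (R := 3 * (p - 1) * lam + 8 * (p - 1) + 8) (by linarith) (by linarith) (by linarith) hlam₂ hQ
    (by linarith [mul_nonneg hP (by linarith : 0 ≤ lam)]) (by linarith)
  obtain ⟨K, a, hanti, hlim, ha⟩ := exists_shooting_sequence S.δ_pos (S.continuousOn_finalAngle hQ)
    (S.eventually_finalAngle_le hQ) S.isOpen_upward S.isOpen_downward S.disjoint_upward_downward
    fun _ ha _ hk ↦ S.mem_upward_and_mem_downward hP hlam₁ hQ le_rfl ha hk
  refine ⟨K, a, fun k hk ↦ (ha k hk).1.1, hanti, hlim, fun k hk ↦ ?_⟩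
  obtain ⟨hak, hup, hdown, hangle⟩ := ha k hk
  have hbdd := fun x ↦ S.abs_mul_y_le_one hP hlam₁ hQ le_rfl hak hup hdown (x := x)
  have hvalid := fun τ ↦ S.valid_of_le hP hlam₁ hQ le_rfl hak hbdd (τ := τ)
  obtain ⟨L, hL, hφ⟩ := S.exists_tendsto_φ hP hlam₁ hQ le_rfl hak hbdd
  have hcard := S.encard_setOf_profile_eq hP hlam₁ hQ le_rfl hak hbdd hangle
  exact ⟨S.profile (a k), S.slope (a k), arctan L, ⟨arctan_pos.2 hL, arctan_lt_pi_div_two L⟩,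
    fun r hr ↦ S.profile_pos hak hvalid hr, (S.continuous_profile _).continuousOn,
    S.contDiffOn_profile hak hvalid, S.profile_zero _, (S.continuous_slope _).continuousOn,
    S.slope_zero _, fun r _ ↦ S.hasDerivAt_profile hak.1.ne' r,
    fun r hr ↦ S.shrinker_equation hak hvalid hr,
    (tan_arctan L).symm ▸ S.tendsto_profile_div hak.1 hφ,
    Set.finite_of_encard_eq_coe hcard, by rw [Set.ncard_def, hcard, ENat.toNat_natCast]⟩

/-- Existence of rotationally symmetric self-shrinkers with many cone crossings
(Lemma 2 of Lecture 4, qualitative form): for `4 ≤ p + q ≤ 7` there are a threshold `K`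
and a strictly decreasing sequence `a_k → 0` of positive reals such that for each `k ≥ K`
there is a self-shrinker profile `u_k` with `u_k(0) = a_k`, `u_k′(0) = 0`, asymptotic
slope `tan α_k` with `α_k ∈ (0, π/2)` at infinity, crossing the cone line `u = λ_s r`
in exactly `k` points. -/
theorem self_shrinkers_with_k_crossings (p q : ℕ) (hp : 2 ≤ p) (hq : 2 ≤ q)
    (hn4 : 4 ≤ p + q) (hn7 : p + q ≤ 7)
    (lam : ℝ) (hlam : lam = Real.sqrt (((q : ℝ) - 1) / ((p : ℝ) - 1))) :
    ∃ (K : ℕ) (a : ℕ → ℝ),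
      (∀ k ≥ K, 0 < a k) ∧
      (∀ k ≥ K, ∀ l, k < l → a l < a k) ∧
      Tendsto a atTop (nhds 0) ∧
      ∀ k ≥ K, ∃ (u u' : ℝ → ℝ) (α : ℝ),
        α ∈ Set.Ioo 0 (π / 2) ∧
        (∀ r ≥ (0 : ℝ), 0 < u r) ∧
        ContinuousOn u (Set.Ici 0) ∧
        ContDiffOn ℝ 2 u (Set.Ioi 0) ∧
        u 0 = a k ∧
        ContinuousOn u' (Set.Ici 0) ∧
        u' 0 = 0 ∧
        (∀ r > (0 : ℝ), HasDerivAt u (u' r) r) ∧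
        (∀ r > (0 : ℝ),
            deriv u' r / (1 + (u' r) ^ 2)
              + (((p : ℝ) - 1) / r - r / 2) * u' r + u r / 2 - ((q : ℝ) - 1) / u r = 0) ∧
        Tendsto (fun r => u r / r) atTop (nhds (Real.tan α)) ∧
        {r : ℝ | 0 < r ∧ u r = lam * r}.Finite ∧
        {r : ℝ | 0 < r ∧ u r = lam * r}.ncard = k :=
  self_shrinkers_with_k_crossings_general (by exact_mod_cast hp) (by exact_mod_cast hq)
    (by exact_mod_cast hn7) hlam
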